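/- There is a constant c > 0 such that A(x) − log x > c·x^{−1/2}·log log log x for arbitrarily large x, and A(x) − log x < −c·x^{−1/2}·log log log x for arbitrarily large x. (That is, A(x) − log x = Ω_±( x^{−1/2} log log log x ).) -/

import Mathlib

open Filter

/-- `A(x) = γ + ∑_{p ≤ x} log p / (p - 1)`, the sum over primes `p ≤ x`. -/
noncomputable def A (x : ℝ) : ℝ :=
  Real.eulerMascheroniConstant +
    ∑ p ∈ (Finset.range (⌊x⌋₊ + 1)).filter Nat.Prime, Real.log p / ((p : ℝ) - 1)

namespace MertensOscillation

open Topology Complex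

lemma summable_const_div_succ_sq (K : ℝ) : Summable (fun m : ℕ => K / ((m : ℝ) + 1) ^ 2) := by
  have h := (summable_nat_add_iff 1).2 (Real.summable_one_div_nat_pow.2 (one_lt_two))
  simpa [div_eq_mul_inv] using h.mul_left K

lemma hasDerivAt_log_Gamma {x : ℝ} (hx : 0 < x) :
    HasDerivAt (fun y => Real.log (Real.Gamma y))
      (-Real.eulerMascheroniConstant + ∑' m : ℕ, (1 / ((m : ℝ) + 1) - 1 / (x + m))) x := by
  obtain ⟨δ, M, hδ, hδ1, hδx, hxM⟩ : ∃ δ M : ℝ, 0 < δ ∧ δ ≤ 1 ∧ δ < x ∧ x < M :=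
    ⟨min 1 (x / 2), x + 1, by positivity, min_le_left _ _,
      lt_of_le_of_lt (min_le_right _ _) (by linarith), by linarith⟩
  have hM : 0 < M := by linarith
  refine hasDerivAt_of_tendstoLocallyUniformlyOn (l := atTop) (s := Set.Ioo δ M)
    (f := fun n y => Real.BohrMollerup.logGammaSeq y n)
    (f' := fun n y => (Real.log n - harmonic (n + 1)) +
      ∑ m ∈ Finset.range (n + 1), (1 / ((m : ℝ) + 1) - 1 / (y + m)))
    (g' := fun y => -Real.eulerMascheroniConstant + ∑' m : ℕ, (1 / ((m : ℝ) + 1) - 1 / (y + m)))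
    isOpen_Ioo ?_ ?_ ?_ ⟨hδx, hxM⟩
  · apply TendstoUniformlyOn.tendstoLocallyUniformlyOn
    apply TendstoUniformlyOn.add
    · have h1 : Tendsto (fun n : ℕ => Real.log n - (harmonic (n + 1) : ℝ)) atTop
          (𝓝 (-Real.eulerMascheroniConstant)) := by
        have h2 := Real.tendsto_harmonic_sub_log.add (tendsto_one_div_add_atTop_nhds_zero_nat (𝕜 := ℝ))
        simp only [add_zero] at h2
        refine h2.neg.congr fun n => ?_
        rw [harmonic_succ]; push_cast
        rw [one_div]; ring
      exact h1.tendstoUniformlyOn_const _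
    · have h := tendstoUniformlyOn_tsum_nat (f := fun (m : ℕ) (y : ℝ) => 1 / ((m : ℝ) + 1) - 1 / (y + m))
        (s := Set.Ioo δ M) (summable_const_div_succ_sq ((M + 1) / δ)) ?_
      · intro v hv
        exact (tendsto_add_atTop_nat 1).eventually (h v hv)
      · rintro m y ⟨hy1, hy2⟩
        have hy0 : 0 < y := hδ.trans hy1
        have hm : (0 : ℝ) ≤ m := Nat.cast_nonneg m
        have e : 1 / ((m : ℝ) + 1) - 1 / (y + m) = (y - 1) / ((m + 1) * (y + m)) := by
          field_simp; ring
        rw [e, Real.norm_eq_abs, abs_div, abs_of_pos (by positivity : 0 < ((m : ℝ) + 1) * (y + m)),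
          div_div]
        have h1 : |y - 1| ≤ M + 1 := by rw [abs_le]; constructor <;> linarith
        have h2 : δ * ((m : ℝ) + 1) ^ 2 ≤ (m + 1) * (y + m) := by
          have h3 : δ * ((m : ℝ) + 1) ≤ y + m := by nlinarith
          nlinarith
        gcongr
  · refine Eventually.of_forall fun n y hy => ?_
    have hy0 : 0 < y := hδ.trans hy.1
    unfold Real.BohrMollerup.logGammaSeq
    have h1 : HasDerivAt (fun y : ℝ => ∑ m ∈ Finset.range (n + 1), Real.log (y + m))
        (∑ m ∈ Finset.range (n + 1), 1 / (y + m)) y := by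
      refine HasDerivAt.fun_sum fun m _ => ?_
      have : y + m ≠ 0 := by positivity
      simpa using ((hasDerivAt_id y).add_const (m : ℝ)).log this
    have h2 := (((hasDerivAt_id y).mul_const (Real.log n)).add_const (Real.log n.factorial)).sub h1
    refine h2.congr_deriv ?_
    rw [Finset.sum_sub_distrib, harmonic]
    push_cast
    simp
  · intro y hy
    exact Real.BohrMollerup.tendsto_log_gamma (hδ.trans hy.1)

lemma summable_digamma_series {z : ℂ} (hz : 0 < z.re) :
    Summable (fun m : ℕ => 1 / ((m : ℂ) + 1) - 1 / (z + m)) ∧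
    DifferentiableAt ℂ (fun z : ℂ => ∑' m : ℕ, (1 / ((m : ℂ) + 1) - 1 / (z + m))) z := by
  obtain ⟨δ, M, hδ, hδ1, hδx, hxM⟩ : ∃ δ M : ℝ, 0 < δ ∧ δ ≤ 1 ∧ δ < z.re ∧ ‖z‖ < M :=
    ⟨min 1 (z.re / 2), ‖z‖ + 1, by positivity, min_le_left _ _,
      lt_of_le_of_lt (min_le_right _ _) (by linarith), by linarith⟩
  have hM : 0 < M := (norm_nonneg z).trans_lt hxM
  obtain ⟨U, hU⟩ : ∃ U : Set ℂ, U = {w | δ < w.re} ∩ {w | ‖w‖ < M} := ⟨_, rfl⟩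
  have hUo : IsOpen U := hU ▸ (isOpen_lt continuous_const continuous_re).inter
    (isOpen_lt continuous_norm continuous_const)
  have hne : ∀ (m : ℕ), ∀ w ∈ U, w + m ≠ 0 := by
    intro m w hw h
    have := congrArg re h
    simp at this
    have h1 : δ < w.re := (hU ▸ hw).1
    have hm : (0 : ℝ) ≤ m := Nat.cast_nonneg m
    linarith
  have hb : ∀ (m : ℕ), ∀ w ∈ U, ‖1 / ((m : ℂ) + 1) - 1 / (w + m)‖ ≤ (M + 1) / δ / ((m : ℝ) + 1) ^ 2 := by
    intro m w hw
    have hm : (0 : ℝ) ≤ m := Nat.cast_nonneg m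
    have hm1 : (m : ℂ) + 1 ≠ 0 := Nat.cast_add_one_ne_zero m
    have h0 := hne m w hw
    have e : 1 / ((m : ℂ) + 1) - 1 / (w + m) = (w - 1) / ((m + 1) * (w + m)) := by
      field_simp; ring
    rw [e, norm_div, norm_mul, div_div]
    have h1 : ‖w - 1‖ ≤ M + 1 := by
      have := norm_sub_le w 1
      have h3 : ‖w‖ < M := (hU ▸ hw).2
      simp at this; linarith
    have h2 : δ * ((m : ℝ) + 1) ≤ ‖w + m‖ := by
      have h3 : δ < w.re := (hU ▸ hw).1
      have := (le_abs_self _).trans (abs_re_le_norm (w + m))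
      simp at this
      nlinarith
    have h4 : ‖(m : ℂ) + 1‖ = m + 1 := by
      have : ((m : ℂ) + 1) = ((m + 1 : ℕ) : ℂ) := by push_cast; rfl
      rw [this, norm_natCast]; push_cast; rfl
    rw [h4]
    have h5 : δ * ((m : ℝ) + 1) ^ 2 ≤ (m + 1) * ‖w + m‖ := by nlinarith
    gcongr
  have hzU : z ∈ U := hU ▸ ⟨hδx, hxM⟩
  refine ⟨Summable.of_norm_bounded (summable_const_div_succ_sq _) fun m => hb m z hzU, ?_⟩
  refine (differentiableOn_tsum_of_summable_norm (summable_const_div_succ_sq ((M + 1) / δ))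
    (fun m w hw => ?_) hUo hb).differentiableAt (hUo.mem_nhds hzU)
  have := hne m w hw
  exact (DifferentiableAt.sub (differentiableAt_const _) (DifferentiableAt.div
    (differentiableAt_const _) (differentiableAt_id.add_const (m : ℂ)) this)).differentiableWithinAt

lemma digamma_ofReal {x : ℝ} (hx : 0 < x) :
    digamma x = ((-Real.eulerMascheroniConstant +
      ∑' m : ℕ, (1 / ((m : ℝ) + 1) - 1 / (x + m)) : ℝ) : ℂ) := by
  have h := hasDerivAt_log_Gamma hx
  have hG : 0 < Real.Gamma x := Real.Gamma_pos_of_pos hx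
  have hd : DifferentiableAt ℝ Real.Gamma x := Real.differentiableAt_Gamma fun m h => by
    have : (0 : ℝ) ≤ m := Nat.cast_nonneg m
    linarith
  have h1 := (hd.hasDerivAt.log hG.ne').unique h
  rw [← h1]
  have hdc : DifferentiableAt ℂ Gamma x := differentiableAt_Gamma _ fun m h => by
    have := congrArg re h
    simp at this
    have : (0 : ℝ) ≤ m := Nat.cast_nonneg m
    linarith
  have h2 := hdc.hasDerivAt.comp_ofReal
  have h3 := hd.hasDerivAt.ofReal_comp
  have h4 : deriv Gamma (x : ℂ) = ((deriv Real.Gamma x : ℝ) : ℂ) := by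
    refine h2.unique (h3.congr_of_eventuallyEq (Eventually.of_forall fun y => ?_))
    simp [Gamma_ofReal]
  rw [digamma_def, logDeriv_apply, h4, Gamma_ofReal]
  push_cast; rfl

lemma digamma_eq_tsum {z : ℂ} (hz : 0 < z.re) :
    digamma z = -Real.eulerMascheroniConstant + ∑' m : ℕ, (1 / ((m : ℂ) + 1) - 1 / (z + m)) := by
  have hUo : IsOpen {w : ℂ | 0 < w.re} := isOpen_lt continuous_const continuous_re
  have hUc : IsPreconnected {w : ℂ | 0 < w.re} := (convex_halfSpace_re_gt 0).isPreconnected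
  have hGd : DifferentiableOn ℂ Gamma {w : ℂ | 0 < w.re} := fun w hw =>
    (differentiableAt_Gamma _ fun m h => by
      have h2 := congrArg re h
      simp at h2
      have h0 : 0 < w.re := hw
      have : (0 : ℝ) ≤ m := Nat.cast_nonneg m
      linarith).differentiableWithinAt
  have h1 : AnalyticOnNhd ℂ digamma {w : ℂ | 0 < w.re} := by
    intro w hw
    have hA := hGd.analyticOnNhd hUo
    exact (hA.deriv w hw).div (hA w hw) (Gamma_ne_zero_of_re_pos hw)
  have h2 : AnalyticOnNhd ℂ (fun z : ℂ => -Real.eulerMascheroniConstant +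
      ∑' m : ℕ, (1 / ((m : ℂ) + 1) - 1 / (z + m))) {w : ℂ | 0 < w.re} := by
    refine DifferentiableOn.analyticOnNhd (fun w hw => ?_) hUo
    exact ((summable_digamma_series hw).2.const_add _).differentiableWithinAt
  refine h1.eqOn_of_preconnected_of_frequently_eq h2 hUc (z₀ := 1) (by simp) ?_ hz
  have ht : Tendsto (fun x : ℝ => (x : ℂ)) (𝓝[≠] 1) (𝓝[≠] 1) := by
    refine tendsto_nhdsWithin_iff.2 ⟨?_, ?_⟩
    · exact (continuous_ofReal.tendsto' 1 1 (by simp)).mono_left nhdsWithin_le_nhds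
    · filter_upwards [self_mem_nhdsWithin] with x hx
      simpa using hx
  refine ht.frequently (Eventually.frequently ?_)
  filter_upwards [nhdsWithin_le_nhds (lt_mem_nhds (zero_lt_one' ℝ))] with x hx
  rw [digamma_ofReal hx]
  push_cast
  rfl

/-- Minus the trivial zeros of `ζ`, shifted by `1/2`. -/
noncomputable def trivZero (n : ℕ) : ℝ := 2 * n + 1 / 2

lemma trivZero_pos (n : ℕ) : 0 < trivZero n := by unfold trivZero; positivity

lemma exists_hasSum_logDeriv_Gammaℝ : ∃ κ : ℝ, ∀ s : ℂ, -(1 / 2) < s.re →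
    HasSum (fun n : ℕ => s / (trivZero n * (s + trivZero n)))
      (logDeriv Gammaℝ (1 / 2 + s) - κ) := by
  have key : ∀ s : ℂ, -(1 / 2) < s.re → HasSum (fun m : ℕ => 1 / (2 * ((m : ℂ) + 1)) - 1 / (s + trivZero m))
      (logDeriv Gammaℝ (1 / 2 + s) +
        ((Real.log Real.pi / 2 + Real.eulerMascheroniConstant / 2 : ℝ) : ℂ)) := by
    intro s hs
    have hz : 0 < ((1 / 2 + s) / 2).re := by
      have : ((1 / 2 + s) / 2).re = (1 / 2 + s.re) / 2 := by simp
      rw [this]; linarith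
    have h1 := (summable_digamma_series hz).1.hasSum.div_const 2
    have h2 : logDeriv Gammaℝ (1 / 2 + s) = -(Real.log Real.pi / 2) + digamma ((1 / 2 + s) / 2) / 2 := by
      have hG : DifferentiableAt ℂ Gamma ((1 / 2 + s) / 2) := differentiableAt_Gamma _ fun m h => by
        rw [h] at hz; simp at hz
        have : (0 : ℝ) ≤ m := Nat.cast_nonneg m
        linarith
      have hpi : (Real.pi : ℂ) ≠ 0 := by exact_mod_cast Real.pi_ne_zero
      have e : Gammaℝ = fun s => (Real.pi : ℂ) ^ (-s / 2) * Gamma (s / 2) := by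
        ext; exact Gammaℝ_def _
      have hd1 : HasDerivAt (fun s : ℂ => (Real.pi : ℂ) ^ (-s / 2))
          ((Real.pi : ℂ) ^ (-(1 / 2 + s) / 2) * Complex.log Real.pi * (-1 / 2)) (1 / 2 + s) :=
        (((hasDerivAt_id (1 / 2 + s)).neg.div_const 2).const_cpow (Or.inl hpi))
      have hd2 : HasDerivAt (fun s : ℂ => Gamma (s / 2))
          (deriv Gamma ((1 / 2 + s) / 2) * (1 / 2)) (1 / 2 + s) :=
        HasDerivAt.comp (1 / 2 + s) hG.hasDerivAt ((hasDerivAt_id (1 / 2 + s)).div_const 2)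
      have hne := Gamma_ne_zero_of_re_pos hz
      have hne2 : (Real.pi : ℂ) ^ (-(1 / 2 + s) / 2) ≠ 0 := by
        rw [cpow_ne_zero_iff]; exact Or.inl hpi
      rw [e, logDeriv_apply, (hd1.fun_mul hd2).deriv, digamma_def, logDeriv_apply, ofReal_log Real.pi_pos.le]
      clear h1 hd1 hd2 e
      generalize (Real.pi : ℂ) ^ (-(1 / 2 + s) / 2) = P at *
      generalize deriv Gamma ((1 / 2 + s) / 2) = G' at *
      generalize Gamma ((1 / 2 + s) / 2) = G at *
      field_simp
    rw [h2, digamma_eq_tsum hz]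
    convert! h1 using 1
    · ext m
      unfold trivZero
      push_cast
      rw [sub_div, div_div, div_div]
      congr 2 <;> ring
    · push_cast
      ring
  have h0 := key 0 (by norm_num)
  refine ⟨(logDeriv Gammaℝ (1 / 2 + 0)).re, fun s hs => ?_⟩
  have hreal : (((logDeriv Gammaℝ (1 / 2 + 0)).re : ℝ) : ℂ) = logDeriv Gammaℝ (1 / 2 + 0) := by
    have h1 : HasSum (fun m : ℕ => (((1 / (2 * ((m : ℝ) + 1)) - 1 / trivZero m : ℝ)) : ℂ))
      (logDeriv Gammaℝ (1 / 2 + 0) +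
        ((Real.log Real.pi / 2 + Real.eulerMascheroniConstant / 2 : ℝ) : ℂ)) := by
      refine h0.congr_fun ?_ |> id
      intro m
      push_cast
      simp
    have h2 := (hasSum_im h1)
    simp only [ofReal_im, add_im, add_zero] at h2
    have h3 := h2.unique hasSum_zero
    apply Complex.ext <;> simp
    simpa using h3.symm
  rw [hreal]
  have h1 := (key s hs).sub h0
  convert! h1 using 1
  · ext m
    have h2 : (trivZero m : ℂ) ≠ 0 := by exact_mod_cast (trivZero_pos m).ne'
    have h3 : s + trivZero m ≠ 0 := by
      intro h
      have := congrArg re h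
      simp at this
      have h4 : (1 / 2 : ℝ) ≤ trivZero m := by unfold trivZero; have : (0 : ℝ) ≤ m := Nat.cast_nonneg m; linarith
      linarith
    rw [zero_add]
    field_simp
    ring
  · ring

lemma exists_norm_logDeriv_Gammaℝ_le : ∃ K : ℝ, ∀ s : ℂ, 0 ≤ s.re →
    ‖logDeriv Gammaℝ (1 / 2 + s)‖ ≤ K * (1 + √‖s‖) := by
  obtain ⟨κ, hκ⟩ := exists_hasSum_logDeriv_Gammaℝ
  have hsum : Summable (fun n : ℕ => 1 / (trivZero n * √(trivZero n))) := by
    have h := (summable_nat_add_iff 1).2 (Real.summable_one_div_nat_rpow.2 (by norm_num : (1 : ℝ) < 3 / 2))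
    refine Summable.of_nonneg_of_le (fun n => ?_) (fun n => ?_) (h.mul_left 4)
    · have := trivZero_pos n; positivity
    · have h1 : ((n : ℝ) + 1) / 2 ≤ trivZero n := by
        unfold trivZero
        have : (0 : ℝ) ≤ n := Nat.cast_nonneg n
        linarith
      have hn : 0 < (n : ℝ) + 1 := by positivity
      have h2 : √((n : ℝ) + 1) / 2 ≤ √(trivZero n) := by
        apply Real.le_sqrt_of_sq_le
        rw [div_pow, Real.sq_sqrt hn.le]
        linarith
      have h3 : ((n + 1 : ℕ) : ℝ) ^ (3 / 2 : ℝ) = ((n : ℝ) + 1) * √((n : ℝ) + 1) := by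
        push_cast
        rw [show (3 / 2 : ℝ) = 1 + 1 / 2 by norm_num, Real.rpow_add hn, Real.rpow_one, ← Real.sqrt_eq_rpow]
      rw [h3]
      have h6 := (trivZero_pos n).le
      have h4 : ((n : ℝ) + 1) / 2 * (√((n : ℝ) + 1) / 2) ≤ trivZero n * √(trivZero n) := by gcongr
      have h5 : 0 < ((n : ℝ) + 1) * √((n : ℝ) + 1) := by positivity
      rw [mul_one_div, div_le_div_iff₀ (by have := trivZero_pos n; positivity) h5]
      nlinarith
  set S := ∑' n : ℕ, 1 / (trivZero n * √(trivZero n))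
  have hS : 0 ≤ S := tsum_nonneg fun n => by have := trivZero_pos n; positivity
  refine ⟨|κ| + S, fun s hs => ?_⟩
  have hb : ∀ n : ℕ, ‖s / (trivZero n * (s + trivZero n))‖ ≤ √‖s‖ * (1 / (trivZero n * √(trivZero n))) := by
    intro n
    have ha := trivZero_pos n
    have h1 : ‖s‖ * trivZero n ≤ ‖s + trivZero n‖ ^ 2 := by
      have e1 : ‖s + trivZero n‖ ^ 2 = ‖s‖ ^ 2 + 2 * s.re * trivZero n + trivZero n ^ 2 := by
        rw [← normSq_eq_norm_sq, ← normSq_eq_norm_sq, normSq_apply, normSq_apply]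
        simp; ring
      have h3 : 0 ≤ s.re * trivZero n := by positivity
      rw [e1]
      nlinarith [sq_nonneg (‖s‖ - trivZero n), norm_nonneg s]
    have h2 : √‖s‖ * √(trivZero n) ≤ ‖s + trivZero n‖ := by
      rw [← Real.sqrt_mul (norm_nonneg s)]
      exact Real.sqrt_le_iff.2 ⟨norm_nonneg _, h1⟩
    rw [norm_div, norm_mul, norm_real, Real.norm_eq_abs, abs_of_pos ha]
    rcases eq_or_ne s 0 with rfl | hs0
    · simp
    have hs1 : 0 < ‖s‖ := norm_pos_iff.2 hs0
    have hq : 0 < √‖s‖ := Real.sqrt_pos.2 hs1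
    have hqa : 0 < √(trivZero n) := Real.sqrt_pos.2 ha
    calc ‖s‖ / (trivZero n * ‖s + trivZero n‖) ≤ ‖s‖ / (trivZero n * (√‖s‖ * √(trivZero n))) := by gcongr
      _ = √‖s‖ * (1 / (trivZero n * √(trivZero n))) := by
        field_simp
        rw [Real.sq_sqrt hs1.le]
  have h1 := tsum_of_norm_bounded (hsum.hasSum.mul_left (√‖s‖)) hb
  rw [(hκ s (by linarith)).tsum_eq] at h1
  have h2 : ‖logDeriv Gammaℝ (1 / 2 + s)‖ ≤ |κ| + √‖s‖ * S := by
    have := norm_add_le (logDeriv Gammaℝ (1 / 2 + s) - κ) (κ : ℂ)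
    simp only [sub_add_cancel, norm_real, Real.norm_eq_abs] at this
    linarith
  have h3 := Real.sqrt_nonneg ‖s‖
  nlinarith [abs_nonneg κ, mul_nonneg (abs_nonneg κ) h3]

/-- The fractional part, cut off at `1`. -/
noncomputable def fractTail (t : ℝ) : ℂ := Set.indicator (Set.Ioi 1) (fun t : ℝ => ((Int.fract t : ℝ) : ℂ)) t

lemma norm_fractTail_le (t : ℝ) : ‖fractTail t‖ ≤ 1 := by
  unfold fractTail
  refine (norm_indicator_le_norm_self _ _).trans ?_
  rw [norm_real, Real.norm_eq_abs, abs_of_nonneg (Int.fract_nonneg t)]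
  exact (Int.fract_lt_one t).le

lemma locallyIntegrableOn_fractTail :
    MeasureTheory.LocallyIntegrableOn fractTail (Set.Ioi 0) MeasureTheory.volume := by
  have hm : Measurable fractTail :=
    (measurable_ofReal.comp measurable_fract).indicator measurableSet_Ioi
  refine MeasureTheory.LocallyIntegrable.locallyIntegrableOn ?_ _
  exact (MeasureTheory.locallyIntegrable_const (1 : ℝ)).mono hm.aestronglyMeasurable
    (Eventually.of_forall fun t => by simpa using norm_fractTail_le t)

lemma fractTail_isBigO_atTop : fractTail =O[atTop] fun x : ℝ => x ^ (-(0 : ℝ)) := by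
  refine Asymptotics.isBigO_of_le _ fun t => ?_
  simpa using norm_fractTail_le t

lemma fractTail_isBigO_zero (b : ℝ) : fractTail =O[𝓝[>] 0] fun x : ℝ => x ^ (-b) := by
  refine Asymptotics.IsBigO.of_bound 0 ?_
  filter_upwards [nhdsWithin_le_nhds (gt_mem_nhds (zero_lt_one' ℝ))] with t ht
  have : fractTail t = 0 := Set.indicator_of_notMem (by simpa using ht.le) _
  simp [this]

lemma riemannZeta_eq_mellin_of_one_lt {s : ℂ} (hs : 1 < s.re) :
    riemannZeta s = s / (s - 1) - s * mellin fractTail (-s) := by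
  have h0 := LSeries_eq_mul_integral (1 : ℕ → ℂ) zero_le_one hs (LSeriesSummable_one_iff.2 hs) (by
    refine Asymptotics.isBigO_of_le _ fun n => ?_
    simp)
  rw [LSeries_one_eq_riemannZeta hs] at h0
  have h1 : s - 1 ≠ 0 := by
    intro h; rw [sub_eq_zero.1 h] at hs; simp at hs
  have hc : MeasureTheory.IntegrableOn (fun t : ℝ => (t : ℂ) ^ (-s)) (Set.Ioi 1) :=
    integrableOn_Ioi_cpow_of_lt (by simpa using hs) zero_lt_one
  have hm : MellinConvergent fractTail (-s) :=
    mellinConvergent_of_isBigO_rpow (a := 0) (b := -s.re - 1) locallyIntegrableOn_fractTail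
      fractTail_isBigO_atTop (by simp; linarith) (fractTail_isBigO_zero _) (by simp)
  have hm1 : MeasureTheory.IntegrableOn (fun t : ℝ => (t : ℂ) ^ (-s - 1) • fractTail t) (Set.Ioi 1) :=
    MeasureTheory.IntegrableOn.mono_set hm (Set.Ioi_subset_Ioi zero_le_one)
  have e1 : mellin fractTail (-s) = ∫ t : ℝ in Set.Ioi 1, (t : ℂ) ^ (-s - 1) • fractTail t := by
    unfold mellin
    refine MeasureTheory.setIntegral_eq_of_subset_of_forall_sdiff_eq_zero measurableSet_Ioi
      (Set.Ioi_subset_Ioi zero_le_one) fun t ht => ?_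
    have : fractTail t = 0 := Set.indicator_of_notMem ht.2 _
    simp [this]
  have e2 : ∫ t : ℝ in Set.Ioi 1, (∑ k ∈ Finset.Icc 1 ⌊t⌋₊, (1 : ℕ → ℂ) k) * (t : ℂ) ^ (-(s + 1))
      = (∫ t : ℝ in Set.Ioi 1, (t : ℂ) ^ (-s)) -
        ∫ t : ℝ in Set.Ioi 1, (t : ℂ) ^ (-s - 1) • fractTail t := by
    rw [← MeasureTheory.integral_sub hc hm1]
    refine MeasureTheory.setIntegral_congr_fun measurableSet_Ioi fun t ht => ?_
    have ht1 : 1 < t := ht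
    have ht0 : (t : ℂ) ≠ 0 := by
      exact_mod_cast (zero_lt_one.trans ht1).ne'
    have e3 : fractTail t = (Int.fract t : ℝ) := Set.indicator_of_mem ht _
    have e4 : (t : ℂ) ^ (-s) = t * (t : ℂ) ^ (-s - 1) := by
      rw [cpow_sub _ _ ht0, cpow_one]; field_simp
    have e5 : ((⌊t⌋₊ : ℝ) : ℂ) = ((t - Int.fract t : ℝ) : ℂ) := by
      congr 1
      rw [Int.self_sub_fract]
      exact natCast_floor_eq_intCast_floor (zero_lt_one.trans ht1).le
    push_cast at e5
    simp only [Pi.one_apply, Finset.sum_const, Nat.card_Icc, add_tsub_cancel_right, nsmul_eq_mul, mul_one]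
    rw [e3, e5, e4, smul_eq_mul, show -(s + 1) = -s - 1 by ring]
    ring
  have e6 : ∫ t : ℝ in Set.Ioi 1, (t : ℂ) ^ (-s) = 1 / (s - 1) := by
    rw [integral_Ioi_cpow_of_lt (by simpa using hs) zero_lt_one]
    simp only [ofReal_one, one_cpow]
    have h2 : -s + 1 ≠ 0 := by rw [show -s + 1 = -(s - 1) by ring]; exact neg_ne_zero.2 h1
    rw [div_eq_div_iff h2 h1]; ring
  rw [h0, e2, e6, e1]
  ring

lemma riemannZeta₁_eq_mellin {s : ℂ} (hs : 0 < s.re) :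
    riemannZeta₁ s = s - s * (s - 1) * mellin fractTail (-s) := by
  have hUo : IsOpen {w : ℂ | 0 < w.re} := isOpen_lt continuous_const continuous_re
  have hUc : IsPreconnected {w : ℂ | 0 < w.re} := (convex_halfSpace_re_gt 0).isPreconnected
  have h1 : AnalyticOnNhd ℂ riemannZeta₁ {w : ℂ | 0 < w.re} :=
    differentiable_riemannZeta₁.differentiableOn.analyticOnNhd hUo
  have h2 : AnalyticOnNhd ℂ (fun s => s - s * (s - 1) * mellin fractTail (-s)) {w : ℂ | 0 < w.re} := by
    refine DifferentiableOn.analyticOnNhd (fun w hw => ?_) hUo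
    have hw0 : 0 < w.re := hw
    have hd : DifferentiableAt ℂ (mellin fractTail) (-w) :=
      mellin_differentiableAt_of_isBigO_rpow (a := 0) (b := -w.re - 1) locallyIntegrableOn_fractTail
        fractTail_isBigO_atTop (by simpa using hw0) (fractTail_isBigO_zero _) (by simp)
    have hd2 : DifferentiableAt ℂ (fun s => mellin fractTail (-s)) w :=
      DifferentiableAt.fun_comp' (g := mellin fractTail) w hd differentiableAt_id.neg
    exact (differentiableAt_id.sub ((differentiableAt_id.mul
      (differentiableAt_id.sub_const 1)).mul hd2)).differentiableWithinAt
  refine h1.eqOn_of_preconnected_of_eventuallyEq h2 hUc (z₀ := 2) (by simp) ?_ hs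
  have : {w : ℂ | 1 < w.re} ∈ 𝓝 (2 : ℂ) := (isOpen_lt continuous_const continuous_re).mem_nhds (by simp)
  filter_upwards [this] with w hw
  have hw1 : w - 1 ≠ 0 := by
    intro h; rw [sub_eq_zero.1 h] at hw; simp at hw
  have h3 := riemannZeta_eq_mellin_of_one_lt hw
  rw [riemannZeta_eq_inv_sub_mul (sub_ne_zero.1 hw1)] at h3
  have h4 := congrArg (fun x => (w - 1) * x) h3
  simp only [mul_inv_cancel_left₀ hw1] at h4
  rw [h4]
  field_simp

lemma riemannZeta₁_ne_zero_of_one_le_re {s : ℂ} (hs : 1 ≤ s.re) : riemannZeta₁ s ≠ 0 := by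
  rcases eq_or_ne s 1 with rfl | h1
  · simp [riemannZeta₁_one]
  · intro h
    apply riemannZeta_ne_zero_of_one_le_re hs
    rw [riemannZeta_eq_inv_sub_mul h1, h, mul_zero]

lemma riemannZeta₁_ofReal_ne_zero {x : ℝ} (hx : 0 < x) : riemannZeta₁ x ≠ 0 := by
  rcases le_total 1 x with h | h
  · exact riemannZeta₁_ne_zero_of_one_le_re (by simpa using h)
  · rw [riemannZeta₁_eq_mellin (by simpa using hx)]
    have hreal : ∃ y : ℝ, 0 ≤ y ∧ mellin fractTail (-(x : ℂ)) = y := by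
      refine ⟨∫ t : ℝ in Set.Ioi 0, t ^ (-x - 1) * Set.indicator (Set.Ioi 1) Int.fract t,
        MeasureTheory.setIntegral_nonneg measurableSet_Ioi fun t ht => ?_, ?_⟩
      · have : (0 : ℝ) ≤ t := le_of_lt ht
        exact mul_nonneg (by positivity) (Set.indicator_nonneg (fun _ _ => Int.fract_nonneg _) _)
      · unfold mellin
        rw [← integral_complex_ofReal]
        refine MeasureTheory.setIntegral_congr_fun measurableSet_Ioi fun t ht => ?_
        have ht0 : (0 : ℝ) ≤ t := le_of_lt ht
        rw [smul_eq_mul]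
        push_cast
        rw [ofReal_cpow ht0]
        push_cast
        congr 1
        unfold fractTail
        by_cases h : t ∈ Set.Ioi 1 <;> simp [h]
    obtain ⟨y, hy, e⟩ := hreal
    rw [e]
    norm_cast
    have : 0 ≤ x * (1 - x) * y := mul_nonneg (mul_nonneg hx.le (by linarith)) hy
    nlinarith

open MeasureTheory in
lemma integrable_tsum_of_summable_integral_norm {α E : Type*} [MeasurableSpace α]
    [NormedAddCommGroup E] [CompleteSpace E] {μ : Measure α} {f : ℕ → α → E}
    (hf : ∀ i, Integrable (f i) μ) (hs : Summable fun i => ∫ a, ‖f i a‖ ∂μ) :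
    Integrable (fun a => ∑' i, f i a) μ := by
  have h1 : ∑' i, ∫⁻ a, ‖f i a‖ₑ ∂μ ≠ ⊤ := by
    have (i : ℕ) : ∫⁻ a, ‖f i a‖ₑ ∂μ = ENNReal.ofReal (∫ a, ‖f i a‖ ∂μ) := by
      rw [ofReal_integral_norm_eq_lintegral_enorm (hf i)]
    rw [funext this, ← ENNReal.ofReal_tsum_of_nonneg (fun i => integral_nonneg fun a => norm_nonneg _) hs]
    exact ENNReal.ofReal_ne_top
  have hm : ∀ i, AEMeasurable (fun a => ‖f i a‖ₑ) μ := fun i => (hf i).1.enorm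
  rw [← lintegral_tsum hm] at h1
  have h2 : ∀ᵐ a ∂μ, ∑' i, ‖f i a‖ₑ < ⊤ := ae_lt_top' (AEMeasurable.tsum hm) h1
  have h3 : ∀ᵐ a ∂μ, Summable (fun i => ‖f i a‖) := by
    filter_upwards [h2] with a ha
    have := ENNReal.tsum_coe_ne_top_iff_summable.1 ha.ne
    exact NNReal.summable_coe.2 this
  refine ⟨aestronglyMeasurable_of_tendsto_ae atTop
    (f := fun N a => ∑ i ∈ Finset.range N, f i a) (fun N => ?_) ?_, ?_⟩
  · exact Finset.aestronglyMeasurable_fun_sum _ fun i _ => (hf i).1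
  · filter_upwards [h3] with a ha
    exact ha.of_norm.hasSum.tendsto_sum_nat
  · refine lt_of_le_of_lt (lintegral_mono_ae ?_) h1.lt_top
    filter_upwards with a
    exact enorm_tsum_le_tsum_enorm

open MeasureTheory in
lemma laplace_translates {c ℓ : ℕ → ℝ} (hℓ : ∀ n, 0 ≤ ℓ n) {k : ℝ → ℝ} {s : ℂ}
    (hk : IntegrableOn (fun u : ℝ => (k u : ℂ) * cexp (-s * u)) (Set.Ici 0))
    (hc : Summable fun n => (c n : ℂ) * cexp (-s * ℓ n)) :
    IntegrableOn (fun u : ℝ => ((∑' n, c n * (Set.Ici 0).indicator k (u - ℓ n) : ℝ) : ℂ) * cexp (-s * u))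
      (Set.Ici 0) ∧
    ∫ u : ℝ in Set.Ici 0, ((∑' n, c n * (Set.Ici 0).indicator k (u - ℓ n) : ℝ) : ℂ) * cexp (-s * u) =
      (∑' n, (c n : ℂ) * cexp (-s * ℓ n)) * ∫ u : ℝ in Set.Ici 0, (k u : ℂ) * cexp (-s * u) := by
  obtain ⟨g, hg⟩ : ∃ g : ℝ → ℂ, g = (Set.Ici 0).indicator (fun u : ℝ => (k u : ℂ) * cexp (-s * u)) := ⟨_, rfl⟩
  have hgi : Integrable g := by rw [hg]; exact (integrable_indicator_iff measurableSet_Ici).2 hk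
  have hgI : ∫ u, g u = ∫ u : ℝ in Set.Ici 0, (k u : ℂ) * cexp (-s * u) := by
    rw [hg, integral_indicator measurableSet_Ici]
  obtain ⟨f, hf⟩ : ∃ f : ℕ → ℝ → ℂ, f = fun n u => ((c n : ℂ) * cexp (-s * ℓ n)) * g (u - ℓ n) := ⟨_, rfl⟩
  have hfi : ∀ n, Integrable (f n) := fun n => by
    rw [hf]; exact (hgi.comp_sub_right (ℓ n)).const_mul _
  have hfs : Summable (fun n => ∫ u, ‖f n u‖) := by
    have : (fun n => ∫ u, ‖f n u‖) = fun n => ‖(c n : ℂ) * cexp (-s * ℓ n)‖ * ∫ u, ‖g u‖ := by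
      ext n
      rw [hf]
      simp only [norm_mul ((c n : ℂ) * _)]
      rw [integral_const_mul, integral_sub_right_eq_self (fun u => ‖g u‖)]
    rw [this]
    exact hc.norm.mul_right _
  have e : ∀ u : ℝ, ∑' n, f n u = (Set.Ici 0).indicator (fun u : ℝ =>
      ((∑' n, c n * (Set.Ici 0).indicator k (u - ℓ n) : ℝ) : ℂ) * cexp (-s * u)) u := by
    intro u
    have e1 : ∀ n, f n u = ((c n * (Set.Ici 0).indicator k (u - ℓ n) : ℝ) : ℂ) * cexp (-s * u) := by
      intro n
      rw [hf, hg]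
      by_cases h : u - ℓ n ∈ Set.Ici 0
      · simp only [Set.indicator_of_mem h]
        push_cast
        have : cexp (-s * u) = cexp (-s * ℓ n) * cexp (-s * (u - ℓ n)) := by
          rw [← exp_add]; congr 1; ring
        rw [this]; ring
      · simp [Set.indicator_of_notMem h]
    by_cases hu : u ∈ Set.Ici 0
    · rw [Set.indicator_of_mem hu, tsum_congr e1, tsum_mul_right, ofReal_tsum]
    · rw [Set.indicator_of_notMem hu, tsum_congr e1]
      refine (tsum_congr fun n => ?_).trans tsum_zero
      have : u - ℓ n ∉ Set.Ici 0 := by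
        have := hℓ n
        simp only [Set.mem_Ici, not_le] at hu ⊢; linarith
      simp [Set.indicator_of_notMem this]
  constructor
  · rw [← integrable_indicator_iff measurableSet_Ici]
    have := integrable_tsum_of_summable_integral_norm hfi hfs
    simpa only [e] using this
  · have h1 := hasSum_integral_of_summable_integral_norm hfi hfs
    simp only [e] at h1
    rw [integral_indicator measurableSet_Ici] at h1
    rw [← h1.tsum_eq, ← tsum_mul_right]
    refine tsum_congr fun n => ?_
    rw [hf, integral_const_mul, integral_sub_right_eq_self g, hgI]

end MertensOscillation

namespace MertensOscillation

open Topology Complex MeasureTheory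

/-- The Laplace integral of `f` converges absolutely at `s`, with value `v`. -/
def HasLaplace (f : ℝ → ℝ) (s v : ℂ) : Prop :=
  IntegrableOn (fun u : ℝ => (f u : ℂ) * cexp (-s * u)) (Set.Ioi 0) ∧
    ∫ u : ℝ in Set.Ioi 0, (f u : ℂ) * cexp (-s * u) = v

namespace HasLaplace

variable {f g : ℝ → ℝ} {s v w : ℂ}

lemma add (hf : HasLaplace f s v) (hg : HasLaplace g s w) :
    HasLaplace (fun u => f u + g u) s (v + w) := by
  have e : (fun u : ℝ => ((f u + g u : ℝ) : ℂ) * cexp (-s * u)) =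
      fun u : ℝ => (f u : ℂ) * cexp (-s * u) + (g u : ℂ) * cexp (-s * u) := by
    ext u; push_cast; ring
  unfold HasLaplace
  rw [e, integral_add hf.1 hg.1, hf.2, hg.2]
  exact ⟨hf.1.add hg.1, rfl⟩

lemma const_mul (c : ℝ) (hf : HasLaplace f s v) : HasLaplace (fun u => c * f u) s (c * v) := by
  have e : (fun u : ℝ => ((c * f u : ℝ) : ℂ) * cexp (-s * u)) =
      fun u : ℝ => (c : ℂ) * ((f u : ℂ) * cexp (-s * u)) := by
    ext u; push_cast; ring
  unfold HasLaplace
  rw [e, integral_const_mul, hf.2]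
  exact ⟨hf.1.const_mul _, rfl⟩

lemma sub (hf : HasLaplace f s v) (hg : HasLaplace g s w) :
    HasLaplace (fun u => f u - g u) s (v - w) := by
  have := hf.add (hg.const_mul (-1))
  simpa [sub_eq_add_neg] using this

lemma congr (hf : HasLaplace f s v) (h : ∀ u, 0 < u → g u = f u) : HasLaplace g s v := by
  refine ⟨hf.1.congr_fun (fun u hu => ?_) measurableSet_Ioi, ?_⟩
  · simp only [h u hu]
  · rw [← hf.2]
    exact setIntegral_congr_fun measurableSet_Ioi fun u hu => by simp only [h u hu]

lemma congr_val (hf : HasLaplace f s v) (h : v = w) : HasLaplace f s w := h ▸ hf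

end HasLaplace

lemma hasLaplace_exp (a : ℝ) {s : ℂ} (hs : a < s.re) :
    HasLaplace (fun u => Real.exp (a * u)) s (1 / (s - a)) := by
  have e : (fun u : ℝ => ((Real.exp (a * u) : ℝ) : ℂ) * cexp (-s * u)) =
      fun u : ℝ => cexp ((a - s) * u) := by
    ext u; push_cast; rw [← exp_add]; congr 1; ring
  have h : ((a : ℂ) - s).re < 0 := by simpa using hs
  have h0 : (a : ℂ) - s ≠ 0 := by intro h2; rw [h2] at h; simp at h
  unfold HasLaplace
  rw [e]
  refine ⟨integrableOn_exp_mul_complex_Ioi h 0, ?_⟩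
  rw [integral_exp_mul_complex_Ioi h 0]
  have h1 : s - a ≠ 0 := by rw [← neg_sub]; exact neg_ne_zero.2 h0
  simp only [ofReal_zero, mul_zero, exp_zero]
  rw [div_eq_div_iff h0 h1]; ring

lemma hasLaplace_const (c : ℝ) {s : ℂ} (hs : 0 < s.re) : HasLaplace (fun _ => c) s (c / s) := by
  have h := (hasLaplace_exp 0 hs).const_mul c
  simpa [div_eq_mul_inv] using h

lemma hasLaplace_id_mul_exp (a : ℝ) {s : ℂ} (hs : a < s.re) :
    HasLaplace (fun u => u * Real.exp (a * u)) s (1 / (s - a) ^ 2) := by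
  have e : (fun u : ℝ => ((u * Real.exp (a * u) : ℝ) : ℂ) * cexp (-s * u)) =
      fun u : ℝ => u * cexp ((a - s) * u) := by
    ext u; push_cast; rw [mul_assoc, ← exp_add]; congr 2; ring
  have h : ((a : ℂ) - s).re < 0 := by simpa using hs
  have h0 : (a : ℂ) - s ≠ 0 := by intro h2; rw [h2] at h; simp at h
  obtain ⟨b, hb⟩ : ∃ b : ℝ, b = s.re - a := ⟨_, rfl⟩
  have hb0 : 0 < b := by linarith
  have hn : ∀ u : ℝ, ‖cexp ((a - s) * u)‖ = Real.exp (-b * u) := by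
    intro u; rw [norm_exp]; congr 1; simp [hb]
  unfold HasLaplace
  rw [e]
  have hi : IntegrableOn (fun u : ℝ => (u : ℂ) * cexp ((a - s) * u)) (Set.Ioi 0) := by
    refine Integrable.mono' (g := fun u => (2 / b) * Real.exp (-(b / 2) * u))
      ((exp_neg_integrableOn_Ioi 0 (by positivity : 0 < b / 2)).const_mul _ ) (by fun_prop) ?_
    filter_upwards [ae_restrict_mem measurableSet_Ioi] with u hu
    have hu0 : 0 < u := hu
    rw [norm_mul, hn, norm_real, Real.norm_eq_abs, abs_of_pos hu0]
    have h1 : b / 2 * u ≤ Real.exp (b / 2 * u) := by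
      have := Real.add_one_le_exp (b / 2 * u); linarith
    have h2 : Real.exp (-(b / 2) * u) = Real.exp (b / 2 * u) * Real.exp (-b * u) := by
      rw [← Real.exp_add]; congr 1; ring
    rw [h2]
    have h3 : u ≤ 2 / b * Real.exp (b / 2 * u) := by
      rw [div_mul_eq_mul_div, le_div_iff₀ hb0]; linarith
    calc u * Real.exp (-b * u) ≤ (2 / b * Real.exp (b / 2 * u)) * Real.exp (-b * u) := by gcongr
      _ = _ := by ring
  refine ⟨hi, ?_⟩
  obtain ⟨w, hw⟩ : ∃ w : ℂ, w = a - s := ⟨_, rfl⟩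
  rw [← hw] at h0 hi hn ⊢
  have hd : ∀ u : ℝ, HasDerivAt (fun u : ℝ => ((u : ℂ) / w - 1 / w ^ 2) * cexp (w * u)) (u * cexp (w * u)) u := by
    intro u
    have h1 : HasDerivAt (fun u : ℝ => (u : ℂ)) 1 u := (hasDerivAt_id u).ofReal_comp
    have h2 := ((h1.div_const w).sub_const (1 / w ^ 2)).mul (h1.const_mul w).cexp
    refine h2.congr_deriv ?_
    field_simp
    ring
  have ht : Tendsto (fun u : ℝ => ((u : ℂ) / w - 1 / w ^ 2) * cexp (w * u)) atTop (𝓝 0) := by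
    have t1 : Tendsto (fun u : ℝ => u ^ 1 * Real.exp (-b * u)) atTop (𝓝 0) := by
      have := tendsto_rpow_mul_exp_neg_mul_atTop_nhds_zero 1 b hb0
      simpa using this
    have t2 : Tendsto (fun u : ℝ => Real.exp (-b * u)) atTop (𝓝 0) := by
      have := tendsto_rpow_mul_exp_neg_mul_atTop_nhds_zero 0 b hb0
      simpa using this
    have t3 := (t1.const_mul (1 / ‖w‖)).add (t2.const_mul (1 / ‖w‖ ^ 2))
    simp only [mul_zero, add_zero] at t3
    refine squeeze_zero_norm' ?_ t3
    filter_upwards [eventually_ge_atTop 0] with u hu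
    rw [norm_mul, hn]
    have : ‖(u : ℂ) / w - 1 / w ^ 2‖ ≤ u / ‖w‖ + 1 / ‖w‖ ^ 2 := by
      refine (norm_sub_le _ _).trans ?_
      simp [abs_of_nonneg hu]
    calc _ ≤ (u / ‖w‖ + 1 / ‖w‖ ^ 2) * Real.exp (-b * u) := by gcongr
      _ = _ := by ring
  have h3 := integral_Ioi_of_hasDerivAt_of_tendsto' (a := (0 : ℝ)) (fun u _ => hd u) hi ht
  have h4 : s - a = -w := by rw [hw]; ring
  rw [h3, h4]
  simp

lemma hasLaplace_id {s : ℂ} (hs : 0 < s.re) : HasLaplace (fun u => u) s (1 / s ^ 2) := by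
  simpa using hasLaplace_id_mul_exp 0 (s := s) (by simpa using hs)

open ArithmeticFunction in
/-- `Λ(n) / √n`. -/
noncomputable def weight (n : ℕ) : ℝ := vonMangoldt n / √n

@[simp] lemma weight_zero : weight 0 = 0 := by simp [weight]

/-- The sum of `k (u - log n)` over `n ≤ exp u`, weighted by `Λ(n) / √n`. -/
noncomputable def weightedSum (k : ℝ → ℝ) (u : ℝ) : ℝ :=
  ∑ n ∈ Finset.range (⌊Real.exp u⌋₊ + 1), weight n * k (u - Real.log n)

lemma log_le_iff_mem_range {n : ℕ} (hn : n ≠ 0) (u : ℝ) :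
    Real.log n ≤ u ↔ n ∈ Finset.range (⌊Real.exp u⌋₊ + 1) := by
  rw [Finset.mem_range, Nat.lt_succ_iff, Nat.le_floor_iff (Real.exp_pos u).le,
    Real.log_le_iff_le_exp (by positivity)]

lemma weightedSum_eq_tsum (k : ℝ → ℝ) (u : ℝ) :
    weightedSum k u = ∑' n : ℕ, weight n * (Set.Ici 0).indicator k (u - Real.log n) := by
  rw [tsum_eq_sum (s := Finset.range (⌊Real.exp u⌋₊ + 1))]
  · refine Finset.sum_congr rfl fun n hn => ?_
    rcases eq_or_ne n 0 with rfl | h0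
    · simp
    · rw [Set.indicator_of_mem]
      exact sub_nonneg.2 ((log_le_iff_mem_range h0 u).2 hn)
  · intro n hn
    rcases eq_or_ne n 0 with rfl | h0
    · simp
    · rw [Set.indicator_of_notMem, mul_zero]
      intro h
      exact hn ((log_le_iff_mem_range h0 u).1 (sub_nonneg.1 h))

lemma logDeriv_riemannZeta₁_eq {z : ℂ} (hz : 1 < z.re) :
    logDeriv riemannZeta₁ z = deriv riemannZeta z / riemannZeta z + 1 / (z - 1) := by
  have h1 : z - 1 ≠ 0 := by
    intro h; rw [sub_eq_zero.1 h] at hz; simp at hz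
  have hz1 : z ≠ 1 := sub_ne_zero.1 h1
  have e : riemannZeta₁ =ᶠ[𝓝 z] fun z => (z - 1) * riemannZeta z := by
    filter_upwards [isOpen_ne.mem_nhds hz1] with y hy
    rw [riemannZeta_eq_inv_sub_mul hy, mul_inv_cancel_left₀ (sub_ne_zero.2 hy)]
  have hd : HasDerivAt (fun z : ℂ => (z - 1) * riemannZeta z)
      (1 * riemannZeta z + (z - 1) * deriv riemannZeta z) z :=
    ((hasDerivAt_id z).sub_const 1).mul (differentiableAt_riemannZeta hz1).hasDerivAt
  have hne : riemannZeta z ≠ 0 := riemannZeta_ne_zero_of_one_le_re hz.le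
  rw [logDeriv_apply, e.deriv_eq, hd.deriv, e.eq_of_nhds]
  field_simp
  ring

lemma hasSum_weight {s : ℂ} (hs : 1 / 2 < s.re) :
    HasSum (fun n : ℕ => (weight n : ℂ) * cexp (-s * Real.log n))
      (1 / (s - 1 / 2) - logDeriv riemannZeta₁ (1 / 2 + s)) := by
  have hz : 1 < (1 / 2 + s).re := by simp; linarith
  have h1 := (ArithmeticFunction.LSeriesSummable_vonMangoldt hz).LSeriesHasSum
  have h2 : (1 / (s - 1 / 2) - logDeriv riemannZeta₁ (1 / 2 + s)) =
      LSeries (fun n => (ArithmeticFunction.vonMangoldt n : ℂ)) (1 / 2 + s) := by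
    rw [ArithmeticFunction.LSeries_vonMangoldt_eq_deriv_riemannZeta_div hz,
      logDeriv_riemannZeta₁_eq hz, show (1 / 2 + s - 1) = s - 1 / 2 by ring]
    ring
  rw [h2]
  unfold LSeriesHasSum at h1
  refine h1.congr_fun ?_ |> id
  intro n
  rcases eq_or_ne n 0 with rfl | h0
  · simp
  · rw [LSeries.term_of_ne_zero h0]
    have hn : (n : ℂ) ≠ 0 := by exact_mod_cast h0
    have e2 : cexp (-s * Real.log n) = ((n : ℂ) ^ s)⁻¹ := by
      rw [cpow_def_of_ne_zero hn, ← exp_neg, natCast_log]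
      congr 1; ring
    have e1 : ((√n : ℝ) : ℂ) = (n : ℂ) ^ (1 / 2 : ℂ) := by
      rw [Real.sqrt_eq_rpow, ofReal_cpow (Nat.cast_nonneg n)]
      push_cast; rfl
    rw [cpow_add _ _ hn, e2, ← e1, weight]
    push_cast
    rw [div_mul_eq_div_div, div_eq_mul_inv _ ((n : ℂ) ^ s)]

lemma hasLaplace_weightedSum {k : ℝ → ℝ} {s v : ℂ} (hs : 1 / 2 < s.re) (hk : HasLaplace k s v) :
    HasLaplace (weightedSum k) s ((1 / (s - 1 / 2) - logDeriv riemannZeta₁ (1 / 2 + s)) * v) := by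
  have h1 := laplace_translates (c := weight) (ℓ := fun n => Real.log n) (k := k) (s := s)
    (fun n => Real.log_natCast_nonneg n) ((integrableOn_Ici_iff_integrableOn_Ioi (by simp)).2 hk.1)
    (hasSum_weight hs).summable
  simp only [← weightedSum_eq_tsum, (hasSum_weight hs).tsum_eq, integral_Ici_eq_integral_Ioi] at h1
  rw [hk.2] at h1
  exact ⟨h1.1.mono_set Set.Ioi_subset_Ici_self, h1.2⟩

/-- `√x (∑_{n ≤ x} Λ(n)/n - log x + γ)` at `x = exp u`. -/
noncomputable def mertensError (u : ℝ) : ℝ :=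
  Real.exp (u / 2) * (∑ n ∈ Finset.range (⌊Real.exp u⌋₊ + 1), ArithmeticFunction.vonMangoldt n / n -
    u + Real.eulerMascheroniConstant)

lemma exp_half_mul_sum_eq (u : ℝ) :
    Real.exp (u / 2) * ∑ n ∈ Finset.range (⌊Real.exp u⌋₊ + 1), ArithmeticFunction.vonMangoldt n / n =
      weightedSum (fun t => Real.exp (1 / 2 * t)) u := by
  rw [weightedSum, Finset.mul_sum]
  refine Finset.sum_congr rfl fun n _ => ?_
  rcases eq_or_ne n 0 with rfl | h0
  · simp
  · have hn : (0 : ℝ) < n := by positivity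
    have e : Real.exp (1 / 2 * (u - Real.log n)) = Real.exp (u / 2) / √n := by
      rw [mul_sub, Real.exp_sub, Real.sqrt_eq_rpow, Real.rpow_def_of_pos hn]
      congr 2 <;> ring
    rw [e, weight]
    have : √(n : ℝ) ≠ 0 := by positivity
    field_simp
    rw [Real.sq_sqrt hn.le]

/-- The analytic continuation of the Laplace transform of `mertensError`. -/
noncomputable def mertensTransform (s : ℂ) : ℂ := -dslope (logDeriv riemannZeta₁) 1 (1 / 2 + s)

lemma logDeriv_riemannZeta₁_one : logDeriv riemannZeta₁ 1 = Real.eulerMascheroniConstant := by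
  rw [logDeriv_apply, deriv_riemannZeta₁_one, riemannZeta₁_one, div_one]

lemma mul_mertensTransform (s : ℂ) :
    (s - 1 / 2) * mertensTransform s = Real.eulerMascheroniConstant - logDeriv riemannZeta₁ (1 / 2 + s) := by
  have h := sub_smul_dslope (logDeriv riemannZeta₁) 1 (1 / 2 + s)
  rw [smul_eq_mul, logDeriv_riemannZeta₁_one] at h
  unfold mertensTransform
  linear_combination -h

lemma hasLaplace_mertensError {s : ℂ} (hs : 1 / 2 < s.re) :
    HasLaplace mertensError s (mertensTransform s) := by
  have h0 : (((1 / 2 : ℝ)) : ℂ) = 1 / 2 := by push_cast; rfl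
  have h1 := hasLaplace_weightedSum hs (hasLaplace_exp (1 / 2) hs)
  have h2 := hasLaplace_id_mul_exp (1 / 2) hs
  have h3 := (hasLaplace_exp (1 / 2) hs).const_mul Real.eulerMascheroniConstant
  rw [h0] at h1 h2 h3
  have hne : s - 1 / 2 ≠ 0 := by
    intro h; rw [sub_eq_zero.1 h] at hs; norm_num at hs
  refine (((h1.sub h2).add h3).congr fun u _ => ?_).congr_val ?_
  · rw [← exp_half_mul_sum_eq, mertensError, show 1 / 2 * u = u / 2 by ring]
    ring
  · refine mul_left_cancel₀ hne ?_
    rw [mul_mertensTransform]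
    generalize logDeriv riemannZeta₁ (1 / 2 + s) = L
    generalize s - 1 / 2 = w at hne
    field_simp
    ring

end MertensOscillation

namespace MertensOscillation

open Topology Complex MeasureTheory ProbabilityTheory

lemma tendsto_ofReal_punctured (x : ℝ) : Tendsto (fun y : ℝ => (y : ℂ)) (𝓝[≠] x) (𝓝[≠] (x : ℂ)) := by
  refine tendsto_nhdsWithin_iff.2 ⟨?_, ?_⟩
  · exact (continuous_ofReal.tendsto x).mono_left nhdsWithin_le_nhds
  · filter_upwards [self_mem_nhdsWithin] with y hy
    simpa using hy

/-- **Landau's theorem**: the abscissa of convergence of the Laplace transform of a positive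
measure on `(-∞, 0]` is a singularity of any analytic continuation. -/
lemma landau_mgf {Ω : Type*} [MeasurableSpace Ω] {X : Ω → ℝ} {ν : Measure Ω} (hX : ∀ᵐ ω ∂ν, X ω ≤ 0)
    {g : ℂ → ℂ} (hg : ∀ x : ℝ, 0 < x → AnalyticAt ℂ g x) {σ₀ : ℝ}
    (h0 : ∀ σ : ℝ, σ₀ < σ → σ ∈ integrableExpSet X ν ∧ complexMGF X ν σ = g σ) {σ : ℝ} (hσ : 0 < σ) :
    σ ∈ integrableExpSet X ν ∧ complexMGF X ν σ = g σ := by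
  obtain ⟨B, hB⟩ : ∃ B : Set ℝ, B = {b | 0 < b ∧ ∀ σ : ℝ, b < σ →
    σ ∈ integrableExpSet X ν ∧ complexMGF X ν σ = g σ} := ⟨_, rfl⟩
  have hne : B.Nonempty := by
    rw [hB]
    exact ⟨max σ₀ 1, by positivity, fun σ h => h0 σ ((le_max_left _ _).trans_lt h)⟩
  have hbd : BddBelow B := ⟨0, fun b hb => by rw [hB] at hb; exact hb.1.le⟩
  have hinf : ∀ σ, sInf B < σ → σ ∈ integrableExpSet X ν ∧ complexMGF X ν σ = g σ := by
    intro σ h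
    obtain ⟨b, hb, hbσ⟩ := exists_lt_of_csInf_lt hne h
    rw [hB] at hb
    exact hb.2 σ hbσ
  by_cases hpos : 0 < sInf B
  swap
  · exact hinf σ ((not_lt.1 hpos).trans_lt hσ)
  exfalso
  obtain ⟨σ₁, hσ₁⟩ : ∃ x, x = sInf B := ⟨_, rfl⟩
  rw [← hσ₁] at hpos hinf
  obtain ⟨r, hr, hr1, hgr⟩ : ∃ r : ℝ, 0 < r ∧ r ≤ σ₁ ∧ AnalyticOnNhd ℂ g (Metric.ball σ₁ r) := by
    obtain ⟨r, hr, h⟩ := (hg σ₁ hpos).exists_ball_analyticOnNhd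
    exact ⟨min r σ₁, lt_min hr hpos, min_le_right _ _, h.mono (Metric.ball_subset_ball (min_le_left _ _))⟩
  obtain ⟨t, ht⟩ : ∃ t, t = σ₁ + r / 4 := ⟨_, rfl⟩
  have hint : ∀ a : ℝ, (∀ x, a < x → x ∈ integrableExpSet X ν) → ∀ x, a < x →
      x ∈ interior (integrableExpSet X ν) := by
    intro a ha x hx
    exact mem_interior.2 ⟨Set.Ioi a, fun y hy => ha y hy, isOpen_Ioi, hx⟩
  have htI : t ∈ interior (integrableExpSet X ν) := hint σ₁ (fun x hx => (hinf x hx).1) t (by linarith)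
  have htb : (t : ℂ) ∈ Metric.ball (σ₁ : ℂ) r := by
    rw [Metric.mem_ball, dist_eq, ← ofReal_sub, norm_real, Real.norm_eq_abs, abs_of_pos] <;> linarith
  have hev : complexMGF X ν =ᶠ[𝓝 (t : ℂ)] g := by
    have hM : AnalyticAt ℂ (complexMGF X ν) t := analyticOnNhd_complexMGF _ (by simpa using htI)
    refine (hM.frequently_eq_iff_eventually_eq (hgr _ htb)).1 ?_
    refine (tendsto_ofReal_punctured t).frequently (Eventually.frequently ?_)
    filter_upwards [nhdsWithin_le_nhds (lt_mem_nhds (show σ₁ < t by linarith))] with x hx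
    exact (hinf x hx).2
  have hball : DifferentiableOn ℂ g (Metric.ball (t : ℂ) (r / 2)) := by
    refine (hgr.mono ?_).differentiableOn
    refine Metric.ball_subset_ball' ?_
    rw [dist_eq, ← ofReal_sub, norm_real, Real.norm_eq_abs, abs_of_pos] <;> linarith
  have hz : ((σ₁ - r / 8 : ℝ) : ℂ) ∈ Metric.ball (t : ℂ) (r / 2) := by
    rw [Metric.mem_ball, dist_eq, ← ofReal_sub, norm_real, Real.norm_eq_abs, abs_of_neg] <;> linarith
  have hT := hasSum_taylorSeries_on_ball hball hz
  obtain ⟨f, hf⟩ : ∃ f : ℕ → Ω → ℝ, f = fun n ω => ((n.factorial : ℝ))⁻¹ * ((-(3 * r / 8)) ^ n *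
    (X ω ^ n * Real.exp (t * X ω))) := ⟨_, rfl⟩
  have hfi : ∀ n, Integrable (f n) ν := fun n => by
    rw [hf]
    exact ((integrable_pow_mul_exp_of_mem_interior_integrableExpSet htI n).const_mul _).const_mul _
  have hfn : ∀ n, ∫ ω, ‖f n ω‖ ∂ν = ∫ ω, f n ω ∂ν := by
    intro n
    refine integral_congr_ae ?_
    filter_upwards [hX] with ω hω
    rw [hf, Real.norm_eq_abs, abs_of_nonneg]
    have : 0 ≤ (-(3 * r / 8)) * X ω := by nlinarith
    beta_reduce
    rw [← mul_assoc ((-(3 * r / 8)) ^ n), ← mul_pow]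
    positivity
  have hfs : Summable fun n => ∫ ω, ‖f n ω‖ ∂ν := by
    rw [← summable_ofReal]
    refine hT.summable.congr fun n => ?_
    rw [hfn, ← hev.iteratedDeriv_eq, iteratedDeriv_complexMGF (by simpa using htI), hf,
      integral_const_mul, integral_const_mul]
    push_cast
    rw [← integral_complex_ofReal, smul_eq_mul, smul_eq_mul, ht]
    push_cast
    congr 3
    ring
  have hI2 : σ₁ - r / 8 ∈ integrableExpSet X ν := by
    have h1 := integrable_tsum_of_summable_integral_norm hfi hfs
    refine h1.congr (Eventually.of_forall fun ω => ?_)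
    have h2 : HasSum (fun n : ℕ => (-(3 * r / 8) * X ω) ^ n / n.factorial) (Real.exp (-(3 * r / 8) * X ω)) := by
      rw [Real.exp_eq_exp_ℝ]
      exact NormedSpace.exp_series_hasSum_exp' _ |>.congr_fun (fun n => by rw [smul_eq_mul, div_eq_inv_mul]) |> id
    have h3 := (h2.mul_right (Real.exp (t * X ω))).tsum_eq
    have h4 : ∀ n, f n ω = (-(3 * r / 8) * X ω) ^ n / n.factorial * Real.exp (t * X ω) := by
      intro n; rw [hf, mul_pow]; ring
    simp only [h4]
    rw [h3, ← Real.exp_add]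
    congr 1
    rw [ht]; ring
  have hall : ∀ x, σ₁ - r / 8 < x → x ∈ integrableExpSet X ν := by
    intro x hx
    have h1 : max x (σ₁ + 1) ∈ integrableExpSet X ν :=
      (hinf _ (lt_of_lt_of_le (by linarith) (le_max_right _ _))).1
    exact integrable_exp_mul_of_le_of_le hI2 h1 hx.le (le_max_left _ _)
  have hmem : σ₁ - r / 8 ∈ B := by
    rw [hB]
    refine ⟨by linarith, fun x hx => ⟨hall x hx, ?_⟩⟩
    rcases lt_or_ge σ₁ x with h | h
    · exact (hinf x h).2
    have hU : Convex ℝ ({z : ℂ | σ₁ - r / 8 < z.re} ∩ Metric.ball (σ₁ : ℂ) r) :=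
      (convex_halfSpace_re_gt _).inter (convex_ball _ _)
    refine AnalyticOnNhd.eqOn_of_preconnected_of_eventuallyEq (𝕜 := ℂ) (f := complexMGF X ν) (g := g)
      (U := {z : ℂ | σ₁ - r / 8 < z.re} ∩ Metric.ball (σ₁ : ℂ) r) (z₀ := t) ?_ ?_ hU.isPreconnected ?_ hev ?_
    · exact (analyticOnNhd_complexMGF (X := X) (μ := ν)).mono fun z hz => hint _ hall _ hz.1
    · exact hgr.mono fun z hz => hz.2
    · exact ⟨by simp; linarith, htb⟩
    · refine ⟨by simpa using hx, ?_⟩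
      rw [Metric.mem_ball, dist_eq, ← ofReal_sub, norm_real, Real.norm_eq_abs, abs_of_nonpos] <;> linarith
  have := csInf_le hbd hmem
  linarith

lemma landau_laplace {H : ℝ → ℝ} (hH : ∀ u, 0 < u → 0 ≤ H u) {G : ℂ → ℂ}
    (hG : ∀ x : ℝ, 0 < x → AnalyticAt ℂ G x) {σ₀ : ℝ}
    (h0 : ∀ σ : ℝ, σ₀ < σ → HasLaplace H σ (G σ)) :
    ∃ L : ℂ → ℂ, DifferentiableOn ℂ L {s | 0 < s.re} ∧ (∀ s : ℂ, 0 < s.re → HasLaplace H s (L s)) ∧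
      (∀ x : ℝ, 0 < x → L x = G x) ∧ ∀ s : ℂ, 0 < s.re → ‖L s‖ ≤ ‖G s.re‖ := by
  have hm : AEMeasurable H (volume.restrict (Set.Ioi 0)) := by
    have h1 := (h0 (σ₀ + 1) (by linarith)).1.1.aemeasurable.re.mul
      (Real.measurable_exp.comp (measurable_id.const_mul (σ₀ + 1))).aemeasurable
    refine h1.congr (Eventually.of_forall fun u => ?_)
    have e : cexp (-((σ₀ + 1 : ℝ) : ℂ) * u) = ((Real.exp (-((σ₀ + 1) * u)) : ℝ) : ℂ) := by
      push_cast; congr 1; ring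
    simp only [Pi.mul_apply, Function.comp, id, RCLike.re_eq_complex_re]
    rw [e, ← ofReal_mul, ofReal_re, mul_assoc, ← Real.exp_add, neg_add_cancel, Real.exp_zero, mul_one]
  obtain ⟨w, hw⟩ : ∃ w : ℝ → NNReal, w = fun u => (H u).toNNReal := ⟨_, rfl⟩
  have hwm : AEMeasurable w (volume.restrict (Set.Ioi 0)) := by rw [hw]; exact hm.real_toNNReal
  obtain ⟨ν, hν⟩ : ∃ ν : Measure ℝ, ν = (volume.restrict (Set.Ioi 0)).withDensity fun u => (w u : ENNReal) := ⟨_, rfl⟩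
  have hwH : ∀ u, u ∈ Set.Ioi (0 : ℝ) → (w u : ℝ) = H u := fun u hu => by
    rw [hw]; exact Real.coe_toNNReal _ (hH u hu)
  have hX : ∀ᵐ u ∂ν, (fun u : ℝ => -u) u ≤ 0 := by
    rw [hν]
    refine (withDensity_absolutelyContinuous _ _).ae_le ?_
    filter_upwards [ae_restrict_mem measurableSet_Ioi] with u hu
    exact neg_nonpos.2 (le_of_lt hu)
  have hI : ∀ {s : ℂ}, (Integrable (fun u : ℝ => cexp (s * (-u : ℝ))) ν ↔
      IntegrableOn (fun u : ℝ => (H u : ℂ) * cexp (-s * u)) (Set.Ioi 0)) := by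
    intro s
    rw [hν, integrable_withDensity_iff_integrable_smul₀ hwm]
    refine integrable_congr ?_
    filter_upwards [ae_restrict_mem measurableSet_Ioi] with u hu
    rw [NNReal.smul_def, hwH u hu, real_smul]
    push_cast
    congr 2; ring
  have hV : ∀ s : ℂ, complexMGF (fun u : ℝ => -u) ν s =
      ∫ u : ℝ in Set.Ioi 0, (H u : ℂ) * cexp (-s * u) := by
    intro s
    rw [complexMGF, hν, integral_withDensity_eq_integral_smul₀ hwm]
    refine setIntegral_congr_fun measurableSet_Ioi fun u hu => ?_
    rw [NNReal.smul_def, hwH u hu, real_smul]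
    push_cast
    congr 2; ring
  have hE : ∀ σ : ℝ, σ ∈ integrableExpSet (fun u : ℝ => -u) ν ↔
      IntegrableOn (fun u : ℝ => (H u : ℂ) * cexp (-(σ : ℂ) * u)) (Set.Ioi 0) := by
    intro σ
    rw [← hI]
    have e : (fun u : ℝ => cexp ((σ : ℂ) * (-u : ℝ))) = fun u : ℝ => ((Real.exp (σ * -u) : ℝ) : ℂ) := by
      ext u; push_cast; rfl
    rw [e]
    exact ⟨fun h => h.ofReal, fun h => by
      have := h.re
      simp only [RCLike.re_eq_complex_re, ofReal_re] at this
      exact this⟩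
  have key : ∀ σ : ℝ, 0 < σ → σ ∈ integrableExpSet (fun u : ℝ => -u) ν ∧
      complexMGF (fun u : ℝ => -u) ν σ = G σ := fun σ hσ =>
    landau_mgf hX hG (σ₀ := σ₀) (fun σ h => ⟨(hE σ).2 (h0 σ h).1, (hV σ).trans (h0 σ h).2⟩) hσ
  have hint : ∀ s : ℂ, 0 < s.re → s.re ∈ interior (integrableExpSet (fun u : ℝ => -u) ν) := fun s hs =>
    mem_interior.2 ⟨Set.Ioi 0, fun y hy => (key y hy).1, isOpen_Ioi, hs⟩
  refine ⟨complexMGF (fun u : ℝ => -u) ν, fun s hs =>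
    (analyticOnNhd_complexMGF s (hint s hs)).differentiableAt.differentiableWithinAt,
    fun s hs => ⟨hI.1 ?_, (hV s).symm⟩, fun x hx => (key x hx).2, fun s hs => ?_⟩
  · exact integrable_cexp_mul_of_re_mem_interior_integrableExpSet (hint s hs)
  · rw [← (key s.re hs).2, complexMGF_ofReal, norm_real, Real.norm_eq_abs,
      abs_of_nonneg (mgf_nonneg)]
    exact norm_complexMGF_le_mgf

end MertensOscillation

namespace MertensOscillation

open Topology Complex MeasureTheory

lemma analyticAt_mertensTransform {s : ℂ} (hs : riemannZeta₁ (1 / 2 + s) ≠ 0) :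
    AnalyticAt ℂ mertensTransform s := by
  have hVo : IsOpen {z : ℂ | riemannZeta₁ z ≠ 0} :=
    isOpen_ne.preimage differentiable_riemannZeta₁.continuous
  have hζ : ∀ z, AnalyticAt ℂ riemannZeta₁ z := fun z =>
    differentiable_riemannZeta₁.analyticAt z
  have hL : DifferentiableOn ℂ (logDeriv riemannZeta₁) {z : ℂ | riemannZeta₁ z ≠ 0} := fun z hz =>
    ((hζ z).deriv.div (hζ z) hz).differentiableAt.differentiableWithinAt
  have h1 : (1 : ℂ) ∈ {z : ℂ | riemannZeta₁ z ≠ 0} := by simp [riemannZeta₁_one]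
  have hD := (Complex.differentiableOn_dslope (hVo.mem_nhds h1)).2 hL
  have hA : AnalyticAt ℂ (dslope (logDeriv riemannZeta₁) 1) (1 / 2 + s) :=
    hD.analyticAt (hVo.mem_nhds hs)
  exact (hA.comp_of_eq (g := dslope (logDeriv riemannZeta₁) 1) (f := fun s => 1 / 2 + s)
    (by fun_prop) rfl).neg

lemma analyticAt_mertensTransform_ofReal {x : ℝ} (hx : 0 ≤ x) : AnalyticAt ℂ mertensTransform x := by
  apply analyticAt_mertensTransform
  have := riemannZeta₁_ofReal_ne_zero (x := 1 / 2 + x) (by positivity)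
  push_cast at this
  exact this

lemma exists_norm_logDeriv_riemannZeta₁_le_of_one_le :
    ∃ K : ℝ, ∀ s : ℂ, 1 ≤ s.re → ‖logDeriv riemannZeta₁ (1 / 2 + s)‖ ≤ K := by
  have h1 := (hasSum_weight (s := 1) (by norm_num)).summable.norm
  refine ⟨2 + ∑' n : ℕ, ‖(weight n : ℂ) * cexp (-1 * Real.log n)‖, fun s hs => ?_⟩
  have h2 := hasSum_weight (s := s) (by linarith)
  have h3 : ‖1 / (s - 1 / 2) - logDeriv riemannZeta₁ (1 / 2 + s)‖ ≤
      ∑' n : ℕ, ‖(weight n : ℂ) * cexp (-1 * Real.log n)‖ := by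
    rw [← h2.tsum_eq]
    refine tsum_of_norm_bounded h1.hasSum fun n => ?_
    rw [norm_mul, norm_mul, norm_exp, norm_exp]
    have := Real.log_natCast_nonneg n
    have e1 : (-s * (Real.log n : ℂ)).re ≤ (-1 * (Real.log n : ℂ)).re := by
      rw [re_mul_ofReal, re_mul_ofReal, neg_re, neg_re, one_re]
      nlinarith
    gcongr
  have h4 : ‖1 / (s - 1 / 2)‖ ≤ 2 := by
    have h5 : 1 / 2 ≤ ‖s - 1 / 2‖ := by
      have := (le_abs_self _).trans (abs_re_le_norm (s - 1 / 2))
      simp at this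
      norm_num at this ⊢
      linarith
    rw [norm_div, norm_one, div_le_iff₀ (by linarith)]
    linarith
  have h6 : logDeriv riemannZeta₁ (1 / 2 + s) =
    1 / (s - 1 / 2) - (1 / (s - 1 / 2) - logDeriv riemannZeta₁ (1 / 2 + s)) := by ring
  rw [h6]
  refine (norm_sub_le _ _).trans ?_
  linarith

/-- A one-sided bound for `mertensError` implies the Riemann hypothesis in a quantitative form. -/
lemma consequences_of_one_sided_bound {ε K : ℝ} (hε : ε * ε = 1)
    (h : ∀ u, 0 < u → ε * mertensError u ≤ K * (1 + u)) :
    (∀ s : ℂ, 0 < s.re → riemannZeta₁ (1 / 2 + s) ≠ 0) ∧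
    (∃ K' : ℝ, ∀ s : ℂ, 0 < s.re → s.re ≤ 1 →
      ‖logDeriv riemannZeta₁ (1 / 2 + s)‖ ≤ K' * (1 + ‖s‖) / s.re ^ 2) ∧
    ∀ σ : ℝ, 0 < σ → IntegrableOn (fun u => mertensError u * Real.exp (-σ * u)) (Set.Ioi 0) := by
  obtain ⟨G, hGdef⟩ : ∃ G : ℂ → ℂ, G = fun s => K * (1 / s + 1 / s ^ 2) - ε * mertensTransform s := ⟨_, rfl⟩
  have hK : ∀ s : ℂ, 0 < s.re → HasLaplace (fun u => K * (1 + u)) s (K * (1 / s + 1 / s ^ 2)) := by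
    intro s hs
    exact (((hasLaplace_const 1 hs).add (hasLaplace_id hs)).const_mul K).congr_val (by push_cast; rfl)
  have hne0 : ∀ s : ℂ, 0 < s.re → s ≠ 0 := fun s hs h => by rw [h] at hs; simp at hs
  have hGh : ∀ s : ℂ, 1 / 2 < s.re → HasLaplace (fun u => K * (1 + u) - ε * mertensError u) s (G s) := by
    intro s hs
    rw [hGdef]
    exact (hK s (by linarith)).sub ((hasLaplace_mertensError hs).const_mul ε)
  have hGa : ∀ x : ℝ, 0 < x → AnalyticAt ℂ G x := by
    intro x hx
    have hx0 : (x : ℂ) ≠ 0 := by exact_mod_cast hx.ne'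
    rw [hGdef]
    refine AnalyticAt.sub ?_ (analyticAt_const.mul (analyticAt_mertensTransform_ofReal hx.le))
    refine analyticAt_const.mul ((analyticAt_const.div analyticAt_id hx0).add
      (analyticAt_const.div (analyticAt_id.pow 2) (pow_ne_zero 2 hx0)))
  obtain ⟨L, hLd, hLh, hLG, hLn⟩ := landau_laplace (H := fun u => K * (1 + u) - ε * mertensError u)
    (fun u hu => sub_nonneg.2 (h u hu)) hGa (σ₀ := 1 / 2) (fun σ hσ => hGh σ (by simpa using hσ))
  obtain ⟨f, hf⟩ : ∃ f : ℂ → ℂ, f = fun s => ε * (K * (1 / s + 1 / s ^ 2) - L s) := ⟨_, rfl⟩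
  have hεc : (ε : ℂ) * ε = 1 := by exact_mod_cast hε
  have hff : ∀ s : ℂ, 1 / 2 < s.re → f s = mertensTransform s := by
    intro s hs
    have e : L s = G s := (hLh s (by linarith)).2.symm.trans (hGh s hs).2
    rw [hf]; beta_reduce
    rw [e, hGdef]
    linear_combination (mertensTransform s) * hεc
  have hUo : IsOpen {w : ℂ | 0 < w.re} := isOpen_lt continuous_const continuous_re
  have hUc : IsPreconnected {w : ℂ | 0 < w.re} := (convex_halfSpace_re_gt 0).isPreconnected
  have hfd : DifferentiableOn ℂ f {w : ℂ | 0 < w.re} := by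
    intro s hs
    have hs0 := hne0 s hs
    have hd := (hLd s hs).differentiableAt (hUo.mem_nhds hs)
    rw [hf]
    refine DifferentiableAt.differentiableWithinAt ?_
    have hd2 : DifferentiableAt ℂ (fun s : ℂ => 1 / s ^ 2) s :=
      (differentiableAt_const _).fun_div (differentiableAt_id.fun_pow 2) (pow_ne_zero 2 hs0)
    exact (differentiableAt_const _).mul (((differentiableAt_const _).mul
      (((differentiableAt_const _).div differentiableAt_id hs0).add hd2)).sub hd)
  have hY : ∀ s : ℂ, HasDerivAt (fun s => riemannZeta₁ (1 / 2 + s)) (deriv riemannZeta₁ (1 / 2 + s)) s :=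
    fun s => HasDerivAt.comp_const_add _ _ (differentiable_riemannZeta₁ _).hasDerivAt
  have hode : ∀ s : ℂ, 0 < s.re → deriv riemannZeta₁ (1 / 2 + s) =
      (Real.eulerMascheroniConstant - (s - 1 / 2) * f s) * riemannZeta₁ (1 / 2 + s) := by
    intro s hs
    have hdf : Differentiable ℂ fun s : ℂ => deriv riemannZeta₁ (1 / 2 + s) := by
      intro s
      exact (HasDerivAt.comp_const_add _ _ ((differentiable_riemannZeta₁.analyticAt
        (1 / 2 + s)).deriv).differentiableAt.hasDerivAt).differentiableAt
    have h1 : AnalyticOnNhd ℂ (fun s : ℂ => deriv riemannZeta₁ (1 / 2 + s)) {w : ℂ | 0 < w.re} :=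
      hdf.differentiableOn.analyticOnNhd hUo
    have h2 : AnalyticOnNhd ℂ (fun s : ℂ => (Real.eulerMascheroniConstant - (s - 1 / 2) * f s) *
        riemannZeta₁ (1 / 2 + s)) {w : ℂ | 0 < w.re} := by
      refine DifferentiableOn.analyticOnNhd (fun s hs => ?_) hUo
      exact ((differentiableWithinAt_const _).sub ((differentiableWithinAt_id.sub_const _).mul
        (hfd s hs))).mul (hY s).differentiableAt.differentiableWithinAt
    refine h1.eqOn_of_preconnected_of_eventuallyEq h2 hUc (z₀ := 1) (by simp) ?_ hs
    have : {w : ℂ | 1 / 2 < w.re} ∈ 𝓝 (1 : ℂ) :=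
      (isOpen_lt continuous_const continuous_re).mem_nhds (by norm_num)
    filter_upwards [this] with w hw
    have hw1 : 1 / 2 < w.re := hw
    have hne : riemannZeta₁ (1 / 2 + w) ≠ 0 := riemannZeta₁_ne_zero_of_one_le_re (by simp; linarith)
    rw [hff w hw, mul_mertensTransform, sub_sub_cancel, logDeriv_apply, div_mul_cancel₀ _ hne]
  have hne : ∀ s : ℂ, 0 < s.re → riemannZeta₁ (1 / 2 + s) ≠ 0 := by
    intro s hs h0
    obtain ⟨p, hp⟩ : ∃ p : ℝ → ℂ, p = fun t : ℝ => s + t * (1 - s) := ⟨_, rfl⟩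
    have hpd : ∀ t, HasDerivAt p (1 - s) t := by
      intro t
      rw [hp]
      simpa using (((hasDerivAt_id t).ofReal_comp).mul_const (1 - s)).const_add s
    have hpc : Continuous p := by rw [hp]; fun_prop
    have hpr : ∀ t ∈ Set.Icc (0 : ℝ) 1, 0 < (p t).re := by
      intro t ht
      have : (p t).re = (1 - t) * s.re + t := by rw [hp]; simp; ring
      rw [this]
      rcases eq_or_lt_of_le ht.1 with h | h
      · rw [← h]; simpa using hs
      · have : 0 ≤ (1 - t) * s.re := mul_nonneg (by linarith [ht.2]) hs.le
        linarith
    have hac : ContinuousOn (fun t => (1 - s) * (Real.eulerMascheroniConstant - (p t - 1 / 2) * f (p t)))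
        (Set.Icc 0 1) := by
      refine continuousOn_const.mul (continuousOn_const.sub ((hpc.continuousOn.sub continuousOn_const).mul ?_))
      exact hfd.continuousOn.comp hpc.continuousOn hpr
    obtain ⟨B, hB⟩ := isCompact_Icc.exists_bound_of_continuousOn hac
    have hd : ∀ t, HasDerivAt (fun t => riemannZeta₁ (1 / 2 + p t))
        (deriv riemannZeta₁ (1 / 2 + p t) * (1 - s)) t := fun t => (hY (p t)).comp t (hpd t)
    have := eq_zero_of_abs_deriv_le_mul_abs_self_of_eq_zero_right (a := (0 : ℝ)) (b := 1)
      (f := fun t => riemannZeta₁ (1 / 2 + p t)) (K := B)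
      (fun t _ => (hd t).continuousAt.continuousWithinAt) (fun t _ => (hd t).hasDerivWithinAt)
      (by rw [hp]; simpa using h0) (fun t ht => by
        have ht' := Set.Ico_subset_Icc_self ht
        rw [hode _ (hpr t ht'), mul_right_comm, norm_mul]
        gcongr
        rw [mul_comm]
        exact hB t ht') 1 (by simp)
    refine riemannZeta₁_ne_zero_of_one_le_re (s := 1 / 2 + p 1) ?_ this
    rw [hp]; norm_num
  refine ⟨hne, ?_, ?_⟩
  · obtain ⟨B, hB⟩ : ∃ B : ℝ, ∀ x ∈ Set.Icc (0 : ℝ) 1, ‖mertensTransform x‖ ≤ B := by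
      refine isCompact_Icc.exists_bound_of_continuousOn (f := fun x : ℝ => mertensTransform x) fun x hx => ?_
      exact ((analyticAt_mertensTransform_ofReal hx.1).continuousAt.comp
        continuous_ofReal.continuousAt).continuousWithinAt
    have hB0 : 0 ≤ B := (norm_nonneg _).trans (hB 0 (by simp))
    have hε1 : |ε| = 1 := by
      have : |ε| * |ε| = 1 := by rw [← abs_mul, hε, abs_one]
      nlinarith [abs_nonneg ε]
    refine ⟨|Real.eulerMascheroniConstant| + (4 * |K| + B), fun s hs hs1 => ?_⟩
    have hsn : s.re ≤ ‖s‖ := (le_abs_self _).trans (abs_re_le_norm s)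
    have hbase : ∀ w : ℂ, s.re ≤ ‖w‖ → ‖(K : ℂ) * (1 / w + 1 / w ^ 2)‖ ≤ 2 * |K| / s.re ^ 2 := by
      intro w hw
      rw [norm_mul, norm_real, Real.norm_eq_abs]
      have h1 : ‖1 / w + 1 / w ^ 2‖ ≤ 1 / s.re ^ 2 + 1 / s.re ^ 2 := by
        refine (norm_add_le _ _).trans ?_
        simp only [norm_div, norm_one, norm_pow]
        gcongr
        nlinarith
      calc _ ≤ |K| * (1 / s.re ^ 2 + 1 / s.re ^ 2) := by gcongr
        _ = _ := by ring
    have hL1 : ‖L s‖ ≤ (2 * |K| + B) / s.re ^ 2 := by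
      refine (hLn s hs).trans ?_
      rw [hGdef]
      refine (norm_sub_le _ _).trans ?_
      have h1 := hbase (s.re : ℂ) (by rw [norm_real]; exact le_abs_self _)
      have h2 : ‖(ε : ℂ) * mertensTransform s.re‖ ≤ B / s.re ^ 2 := by
        rw [norm_mul, norm_real, Real.norm_eq_abs, hε1, one_mul]
        refine (hB _ ⟨hs.le, hs1⟩).trans ?_
        rw [le_div_iff₀ (by positivity)]
        have : s.re ^ 2 ≤ 1 := by nlinarith
        nlinarith
      rw [add_div]; linarith
    have hfn : ‖f s‖ ≤ (4 * |K| + B) / s.re ^ 2 := by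
      rw [hf]; beta_reduce
      rw [norm_mul, norm_real, Real.norm_eq_abs, hε1, one_mul]
      refine (norm_sub_le _ _).trans ?_
      have h1 := hbase s hsn
      have e : (4 * |K| + B) / s.re ^ 2 = 2 * |K| / s.re ^ 2 + (2 * |K| + B) / s.re ^ 2 := by ring
      rw [e]; linarith
    have e : logDeriv riemannZeta₁ (1 / 2 + s) = Real.eulerMascheroniConstant - (s - 1 / 2) * f s := by
      rw [logDeriv_apply, hode s hs, mul_div_cancel_right₀ _ (hne s hs)]
    rw [e]
    refine (norm_sub_le _ _).trans ?_
    have h1 : ‖s - 1 / 2‖ ≤ 1 + ‖s‖ := by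
      refine (norm_sub_le _ _).trans ?_
      norm_num
      linarith
    rw [norm_mul, norm_real, Real.norm_eq_abs]
    have h2 : ‖s - 1 / 2‖ * ‖f s‖ ≤ (1 + ‖s‖) * ((4 * |K| + B) / s.re ^ 2) := by gcongr
    have h3 : |Real.eulerMascheroniConstant| ≤ |Real.eulerMascheroniConstant| * (1 + ‖s‖) / s.re ^ 2 := by
      rw [le_div_iff₀ (by positivity)]
      have : s.re ^ 2 ≤ 1 := by nlinarith
      have h4 := norm_nonneg s
      have h5 := abs_nonneg Real.eulerMascheroniConstant
      nlinarith [mul_nonneg h5 h4]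
    have e2 : (|Real.eulerMascheroniConstant| + (4 * |K| + B)) * (1 + ‖s‖) / s.re ^ 2 =
      |Real.eulerMascheroniConstant| * (1 + ‖s‖) / s.re ^ 2 + (1 + ‖s‖) * ((4 * |K| + B) / s.re ^ 2) := by ring
    rw [e2]
    linarith
  · intro σ hσ
    have hσ' : 0 < (σ : ℂ).re := by simpa using hσ
    have h1 := (((hK σ hσ').sub (hLh σ hσ')).const_mul ε).1.re
    refine h1.congr (Eventually.of_forall fun u => ?_)
    have e : cexp (-(σ : ℂ) * u) = ((Real.exp (-σ * u) : ℝ) : ℂ) := by push_cast; rfl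
    simp only [RCLike.re_eq_complex_re]
    rw [e, ← ofReal_mul, ofReal_re]
    linear_combination (mertensError u * Real.exp (-σ * u)) * hε

lemma analyticOrderAt_ne_top_of_ne_zero {f : ℂ → ℂ} (hf : Differentiable ℂ f) {a : ℂ} (ha : f a ≠ 0)
    (z : ℂ) : analyticOrderAt f z ≠ ⊤ := by
  have h : AnalyticOnNhd ℂ f Set.univ := fun z _ => hf.analyticAt z
  refine h.analyticOrderAt_ne_top_of_isPreconnected isPreconnected_univ (Set.mem_univ a)
    (Set.mem_univ z) ?_
  rw [(hf.analyticAt a).analyticOrderAt_eq_zero.2 ha]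
  simp

lemma finite_zeros_inter_closedBall {f : ℂ → ℂ} (hf : Differentiable ℂ f) {a : ℂ} (ha : f a ≠ 0)
    (R : ℝ) : {z : ℂ | f z = 0 ∧ ‖z‖ ≤ R}.Finite := by
  by_contra hinf
  obtain ⟨z, -, hz⟩ := Set.Infinite.exists_accPt_of_subset_isCompact
    (show {z : ℂ | f z = 0 ∧ ‖z‖ ≤ R}.Infinite from hinf) (isCompact_closedBall (0 : ℂ) R)
    (fun z hz => by simpa using hz.2)
  have h := ((hf.analyticAt z).eventually_eq_zero_or_eventually_ne_zero).resolve_left ?_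
  · rw [accPt_iff_frequently_nhdsNE] at hz
    exact hz (h.mono fun w hw hw' => hw hw'.1)
  · intro h
    exact analyticOrderAt_ne_top_of_ne_zero hf ha z (analyticOrderAt_eq_top.2 h)

lemma exists_entire_factor {f : ℂ → ℂ} (hf : Differentiable ℂ f) {a : ℂ} (ha : f a ≠ 0) (ρ : ℂ) :
    ∃ g : ℂ → ℂ, Differentiable ℂ g ∧ g ρ ≠ 0 ∧
      ∀ z, f z = (z - ρ) ^ analyticOrderNatAt f ρ * g z := by
  have hn := analyticOrderAt_ne_top_of_ne_zero hf ha ρ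
  obtain ⟨g, hga, hg0, hg⟩ := (hf.analyticAt ρ).analyticOrderAt_ne_top.1 hn
  classical
  obtain ⟨G, hG⟩ : ∃ G : ℂ → ℂ, G = Function.update
    (fun z => f z / (z - ρ) ^ analyticOrderNatAt f ρ) ρ (g ρ) := ⟨_, rfl⟩
  have hGρ : G ρ = g ρ := by rw [hG]; simp
  have hGne : ∀ z, z ≠ ρ → G z = f z / (z - ρ) ^ analyticOrderNatAt f ρ := by
    intro z hz
    rw [hG]; simp [hz]
  have hGg : G =ᶠ[𝓝 ρ] g := by
    filter_upwards [hg] with z hz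
    by_cases h : z = ρ
    · rw [h, hGρ]
    · rw [hGne z h, hz, smul_eq_mul, mul_div_cancel_left₀ _ (pow_ne_zero _ (sub_ne_zero.2 h))]
  refine ⟨G, fun z => ?_, by rwa [hGρ], fun z => ?_⟩
  · by_cases h : z = ρ
    · rw [h]
      exact hga.differentiableAt.congr_of_eventuallyEq hGg
    · have h1 : DifferentiableAt ℂ (fun z => f z / (z - ρ) ^ analyticOrderNatAt f ρ) z :=
        (hf z).fun_div (by fun_prop) (pow_ne_zero _ (sub_ne_zero.2 h))
      refine h1.congr_of_eventuallyEq ?_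
      filter_upwards [isOpen_ne.mem_nhds h] with w hw using hGne w hw
  · by_cases h : z = ρ
    · rw [h, hGρ]
      simpa using hg.self_of_nhds
    · rw [hGne z h, mul_div_cancel₀ _ (pow_ne_zero _ (sub_ne_zero.2 h))]

lemma exists_entire_factor_finset {f : ℂ → ℂ} (hf : Differentiable ℂ f) {a : ℂ} (ha : f a ≠ 0)
    (S : Finset ℂ) : ∃ g : ℂ → ℂ, Differentiable ℂ g ∧ (∀ ρ ∈ S, g ρ ≠ 0) ∧
      ∀ z, f z = (∏ ρ ∈ S, (z - ρ) ^ analyticOrderNatAt f ρ) * g z := by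
  classical
  induction S using Finset.induction_on with
  | empty => exact ⟨f, hf, by simp, by simp⟩
  | insert ρ S hρ ih =>
    obtain ⟨g, hg, hgS, hfg⟩ := ih
    have hga : g a ≠ 0 := fun h => ha (by rw [hfg a, h, mul_zero])
    obtain ⟨G, hGd, hGρ, hG⟩ := exists_entire_factor hg hga ρ
    have hP : Differentiable ℂ fun z : ℂ => ∏ ρ ∈ S, (z - ρ) ^ analyticOrderNatAt f ρ := by fun_prop
    have hord : analyticOrderNatAt f ρ = analyticOrderNatAt g ρ := by
      have e : f = (fun z : ℂ => ∏ ρ ∈ S, (z - ρ) ^ analyticOrderNatAt f ρ) * g := funext hfg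
      have h1 : analyticOrderAt f ρ = analyticOrderAt g ρ := by
        conv_lhs => rw [e]
        rw [analyticOrderAt_mul (hP.analyticAt ρ) (hg.analyticAt ρ),
          (hP.analyticAt ρ).analyticOrderAt_eq_zero.2 ?_, zero_add]
        refine Finset.prod_ne_zero_iff.2 fun σ hσ => pow_ne_zero _ (sub_ne_zero.2 ?_)
        rintro rfl
        exact hρ hσ
      rw [analyticOrderNatAt, h1, analyticOrderNatAt]
    refine ⟨G, hGd, fun σ hσ => ?_, fun z => ?_⟩
    · rcases Finset.mem_insert.1 hσ with rfl | hσ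
      · exact hGρ
      · intro h
        exact hgS σ hσ (by rw [hG, h, mul_zero])
    · rw [Finset.prod_insert hρ, hfg z, hG z, hord]
      ring

lemma circleIntegral_sub_inv_mul {R : ℝ} {h : ℂ → ℂ}
    (hh : ∀ z ∈ Metric.closedBall (0 : ℂ) R, DifferentiableAt ℂ h z) {s : ℂ} (hs : ‖s‖ < R) :
    (∮ ζ in C(0, R), h ζ / (ζ - s)) = 2 * Real.pi * I * h s := by
  have := circleIntegral_sub_inv_smul_of_differentiable_on_off_countable (R := R) (c := 0) (w := s)
    (f := h) Set.countable_empty (by simpa using hs)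
    (fun z hz => (hh z hz).continuousAt.continuousWithinAt)
    (fun z hz => hh z (Metric.ball_subset_closedBall hz.1))
  rw [← smul_eq_mul, ← this]
  congr 1
  ext z
  rw [smul_eq_mul, div_eq_inv_mul]

/-- Residue formula for `f' / f · P / (ζ - s)` on a circle. -/
lemma circleIntegral_logDeriv_mul {f P : ℂ → ℂ} (hf : Differentiable ℂ f) (hP : Differentiable ℂ P)
    {R : ℝ} (hR : 0 < R) {a s : ℂ} (ha : f a ≠ 0) (hs : ‖s‖ < R) (hfs : f s ≠ 0) {S : Finset ℂ}
    (hS : ∀ z, z ∈ S ↔ f z = 0 ∧ ‖z‖ ≤ R) (hSR : ∀ z, ‖z‖ = R → f z ≠ 0) :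
    CircleIntegrable (fun ζ => logDeriv f ζ * P ζ / (ζ - s)) 0 R ∧
    (∮ ζ in C(0, R), logDeriv f ζ * P ζ / (ζ - s)) =
      2 * Real.pi * I * (logDeriv f s * P s -
        ∑ ρ ∈ S, (analyticOrderNatAt f ρ : ℂ) * (P ρ / (s - ρ))) := by
  obtain ⟨g, hg, hgS, hfg⟩ := exists_entire_factor_finset hf ha S
  have hg0 : ∀ z ∈ Metric.closedBall (0 : ℂ) R, g z ≠ 0 := by
    intro z hz h
    have hz' : ‖z‖ ≤ R := by simpa using hz
    exact hgS z ((hS z).2 ⟨by rw [hfg, h, mul_zero], hz'⟩) h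
  have hld : ∀ z, f z ≠ 0 → g z ≠ 0 → logDeriv f z =
      ∑ ρ ∈ S, (analyticOrderNatAt f ρ : ℂ) / (z - ρ) + logDeriv g z := by
    intro z hz hgz
    have hne : ∀ ρ ∈ S, z - ρ ≠ 0 := by
      intro ρ hρ h
      rw [sub_eq_zero.1 h] at hz
      exact hz ((hS ρ).1 hρ).1
    have hd : DifferentiableAt ℂ (fun z : ℂ => ∏ ρ ∈ S, (z - ρ) ^ analyticOrderNatAt f ρ) z := by
      fun_prop
    conv_lhs => rw [funext hfg]
    rw [logDeriv_mul z (Finset.prod_ne_zero_iff.2 fun ρ hρ => pow_ne_zero _ (hne ρ hρ)) hgz hd (hg z),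
      logDeriv_prod (f := fun ρ z => (z - ρ) ^ analyticOrderNatAt f ρ)
        (fun ρ hρ => pow_ne_zero _ (hne ρ hρ)) (fun ρ _ => by fun_prop)]
    congr 1
    refine Finset.sum_congr rfl fun ρ hρ => ?_
    rw [logDeriv_fun_pow (by fun_prop), logDeriv_apply]
    simp [div_eq_mul_inv]
  have hsB : s ∈ Metric.closedBall (0 : ℂ) R := by simpa using hs.le
  have hsρ : ∀ ρ ∈ S, s - ρ ≠ 0 := by
    intro ρ hρ h
    rw [sub_eq_zero.1 h] at hfs
    exact hfs ((hS ρ).1 hρ).1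
  have hgd : ∀ z ∈ Metric.closedBall (0 : ℂ) R, DifferentiableAt ℂ (fun z => logDeriv g z * P z) z := by
    intro z hz
    have h1 := ((hg.analyticAt z).deriv.div (hg.analyticAt z) (hg0 z hz)).differentiableAt
    exact h1.mul (hP z)
  have hcs : ∀ w : ℂ, ‖w‖ ≠ R → ∀ h : ℂ → ℂ, ContinuousOn h (Metric.sphere 0 R) →
      CircleIntegrable (fun ζ => h ζ / (ζ - w)) 0 R := by
    intro w hw h hh
    refine ContinuousOn.circleIntegrable hR.le (hh.div (by fun_prop) fun z hz => ?_)
    intro h0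
    rw [sub_eq_zero.1 h0] at hz
    exact hw (by simpa using hz)
  have hρR : ∀ ρ ∈ S, ‖ρ‖ < R := by
    intro ρ hρ
    have := (hS ρ).1 hρ
    exact lt_of_le_of_ne this.2 fun h => hSR ρ h this.1
  have hPc : ContinuousOn P (Metric.sphere 0 R) := hP.continuous.continuousOn
  have hI1 : CircleIntegrable (fun ζ => logDeriv g ζ * P ζ / (ζ - s)) 0 R :=
    hcs s hs.ne _ fun z hz => (hgd z (Metric.sphere_subset_closedBall hz)).continuousAt.continuousWithinAt
  have hI2 : ∀ ρ ∈ S, CircleIntegrable (fun ζ => (analyticOrderNatAt f ρ : ℂ) / (s - ρ) *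
      (P ζ / (ζ - s) - P ζ / (ζ - ρ))) 0 R := by
    intro ρ hρ
    exact ((hcs s hs.ne P hPc).sub (hcs ρ (hρR ρ hρ).ne P hPc)).const_mul _
  have hI3 : CircleIntegrable (fun ζ => ∑ ρ ∈ S, (analyticOrderNatAt f ρ : ℂ) / (s - ρ) *
      (P ζ / (ζ - s) - P ζ / (ζ - ρ))) 0 R := CircleIntegrable.fun_sum S hI2
  have hEq : Set.EqOn (fun ζ => logDeriv f ζ * P ζ / (ζ - s)) (fun ζ =>
      ∑ ρ ∈ S, (analyticOrderNatAt f ρ : ℂ) / (s - ρ) * (P ζ / (ζ - s) - P ζ / (ζ - ρ)) +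
      logDeriv g ζ * P ζ / (ζ - s)) (Metric.sphere 0 R) := by
    intro z hz
    have hzR : ‖z‖ = R := by simpa using hz
    have hzs : z - s ≠ 0 := by
      intro h
      rw [sub_eq_zero.1 h] at hzR
      exact hs.ne hzR
    beta_reduce
    rw [hld z (hSR z hzR) (hg0 z (Metric.sphere_subset_closedBall hz)), add_mul, add_div,
      Finset.sum_mul, Finset.sum_div]
    congr 1
    refine Finset.sum_congr rfl fun ρ hρ => ?_
    have h1 := hsρ ρ hρ
    have h2 : z - ρ ≠ 0 := by
      intro h
      rw [sub_eq_zero.1 h] at hzR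
      exact (hρR ρ hρ).ne hzR
    field_simp
    ring
  constructor
  · refine (hI3.add hI1).congr ?_
    exact fun θ _ => (hEq (circleMap_mem_sphere 0 hR.le θ)).symm
  · rw [circleIntegral.integral_congr hR.le hEq, circleIntegral.integral_add hI3 hI1,
      circleIntegral_sub_inv_mul hgd hs, circleIntegral.integral_fun_sum hI2,
      hld s hfs (hg0 s hsB)]
    have : ∀ ρ ∈ S, (∮ ζ in C(0, R), (analyticOrderNatAt f ρ : ℂ) / (s - ρ) *
        (P ζ / (ζ - s) - P ζ / (ζ - ρ))) =
        2 * Real.pi * I * ((analyticOrderNatAt f ρ : ℂ) / (s - ρ) * (P s - P ρ)) := by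
      intro ρ hρ
      rw [circleIntegral.integral_const_mul, circleIntegral.integral_sub (hcs s hs.ne P hPc)
        (hcs ρ (hρR ρ hρ).ne P hPc), circleIntegral_sub_inv_mul (fun z _ => hP z) hs,
        circleIntegral_sub_inv_mul (fun z _ => hP z) (hρR ρ hρ)]
      ring
    rw [Finset.sum_congr rfl this, ← Finset.mul_sum, ← mul_add, add_mul, Finset.sum_mul,
      add_sub_right_comm, ← Finset.sum_sub_distrib]
    congr 2
    exact Finset.sum_congr rfl fun ρ _ => by ring

lemma logDeriv_neg_of_even {f : ℂ → ℂ} (heven : ∀ s, f (-s) = f s) (s : ℂ) :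
    logDeriv f (-s) = -logDeriv f s := by
  have h : deriv f s = -deriv f (-s) := by
    have := deriv_comp_neg f s
    rwa [show (fun x => f (-x)) = f from funext heven] at this
  rw [logDeriv_apply, logDeriv_apply, heven, h, neg_div, neg_neg]

lemma norm_one_add_sq_div_sq {ζ : ℂ} {R : ℝ} (hR : 0 < R) (h : ‖ζ‖ = R) :
    ‖(1 + ζ ^ 2 / (R : ℂ) ^ 2) ^ 2‖ = 4 * ζ.re ^ 2 / R ^ 2 := by
  have hR' : (R : ℂ) ≠ 0 := by exact_mod_cast hR.ne'
  have h1 : (R : ℂ) ^ 2 = ζ * (starRingEnd ℂ) ζ := by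
    rw [Complex.mul_conj, Complex.normSq_eq_norm_sq, h]; push_cast; rfl
  have h2 : 1 + ζ ^ 2 / (R : ℂ) ^ 2 = ζ * (2 * ζ.re : ℝ) / (R : ℂ) ^ 2 := by
    rw [← add_conj, mul_add, ← h1]
    field_simp
    ring
  rw [h2, norm_pow, norm_div, norm_mul, norm_pow, norm_real, norm_real, h, Real.norm_eq_abs,
    Real.norm_eq_abs, div_pow, mul_pow, sq_abs, abs_of_pos hR]
  field_simp
  ring

lemma norm_logDeriv_mul_le {f : ℂ → ℂ} (heven : ∀ s, f (-s) = f s) {K : ℝ}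
    (hK1 : ∀ s : ℂ, 1 ≤ s.re → ‖logDeriv f s‖ ≤ K * (1 + √‖s‖))
    (hK2 : ∀ s : ℂ, 0 < s.re → s.re ≤ 1 → ‖logDeriv f s‖ ≤ K * (1 + ‖s‖) / s.re ^ 2)
    {R : ℝ} (hR : 1 ≤ R) {ζ : ℂ} (hζ : ‖ζ‖ = R) :
    ‖logDeriv f ζ * (1 + ζ ^ 2 / (R : ℂ) ^ 2) ^ 2‖ ≤ 8 * K * √R := by
  have hK0 : 0 ≤ K := by
    have := (norm_nonneg _).trans (hK1 1 (by simp))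
    simp at this
    linarith
  have hs1 : 1 ≤ √R := Real.one_le_sqrt.2 hR
  wlog hre : 0 ≤ ζ.re generalizing ζ
  · have := this (ζ := -ζ) (by rwa [norm_neg]) (by simp; linarith)
    rwa [logDeriv_neg_of_even heven, neg_sq, neg_mul, norm_neg] at this
  rw [norm_mul, norm_one_add_sq_div_sq (by linarith) hζ]
  have hle : ζ.re ≤ R := hζ ▸ re_le_norm ζ
  rcases le_or_gt 1 ζ.re with h1 | h1
  · have h2 : 4 * ζ.re ^ 2 / R ^ 2 ≤ 4 := by
      rw [div_le_iff₀ (by positivity)]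
      nlinarith
    calc _ ≤ (K * (1 + √R)) * 4 := by
          gcongr
          exact hζ ▸ hK1 ζ h1
      _ ≤ _ := by nlinarith
  · rcases hre.eq_or_lt with h2 | h2
    · rw [← h2]
      simp
      positivity
    · calc _ ≤ (K * (1 + ‖ζ‖) / ζ.re ^ 2) * (4 * ζ.re ^ 2 / R ^ 2) := by
            gcongr
            exact hK2 ζ h2 h1.le
        _ = 4 * K * (1 + R) / R ^ 2 := by rw [hζ]; field_simp
        _ ≤ 8 * K := by
            rw [div_le_iff₀ (by positivity)]
            have : 1 + R ≤ 2 * R ^ 2 := by nlinarith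
            nlinarith
        _ ≤ _ := by nlinarith

lemma sq_eq_neg_norm_sq {f : ℂ → ℂ} (hz : ∀ s, f s = 0 → s.re = 0) {ρ : ℂ} (hρ : f ρ = 0) : ρ ^ 2 = -((‖ρ‖ : ℂ) ^ 2) := by
  have h := hz ρ hρ
  have h1 : ρ = ρ.im * I := by
    apply Complex.ext <;> simp [h]
  have h2 : ‖ρ‖ = |ρ.im| := by
    conv_lhs => rw [h1]
    simp
  rw [h2, ← ofReal_pow, sq_abs]
  conv_lhs => rw [h1]
  rw [mul_pow, I_sq]
  push_cast
  ring

lemma norm_logDeriv_sub_sum_le {f : ℂ → ℂ} (hf : Differentiable ℂ f)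
    (heven : ∀ s, f (-s) = f s) (h0 : f 0 ≠ 0) (hz : ∀ s, f s = 0 → s.re = 0) {K : ℝ}
    (hK1 : ∀ s : ℂ, 1 ≤ s.re → ‖logDeriv f s‖ ≤ K * (1 + √‖s‖))
    (hK2 : ∀ s : ℂ, 0 < s.re → s.re ≤ 1 → ‖logDeriv f s‖ ≤ K * (1 + ‖s‖) / s.re ^ 2)
    {R : ℝ} (hR : 1 ≤ R) {s : ℂ} (hs0 : 0 < s.re) (hs : 2 * ‖s‖ ≤ R)
    {S : Finset ℂ} (hS : ∀ z, z ∈ S ↔ f z = 0 ∧ ‖z‖ ≤ R) (hSR : ∀ z, ‖z‖ = R → f z ≠ 0) :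
    ‖logDeriv f s * (1 + s ^ 2 / (R : ℂ) ^ 2) ^ 2 - ∑ ρ ∈ S,
      ((analyticOrderNatAt f ρ * (1 - ‖ρ‖ ^ 2 / R ^ 2) ^ 2 : ℝ) : ℂ) * (s / (s ^ 2 + ‖ρ‖ ^ 2))‖ ≤
      32 * K * ‖s‖ / √R := by
  have hK0 : 0 ≤ K := by
    have := (norm_nonneg _).trans (hK1 1 (by simp))
    simp at this
    linarith
  have hsR : ‖s‖ < R := by
    rcases (norm_nonneg s).eq_or_lt with h | h <;> linarith
  have hfs : f s ≠ 0 := fun h => hs0.ne' (hz s h)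
  have hP : Differentiable ℂ fun ζ : ℂ => (1 + ζ ^ 2 / (R : ℂ) ^ 2) ^ 2 := by fun_prop
  obtain ⟨i1, e1⟩ := circleIntegral_logDeriv_mul hf hP (by linarith) h0 hsR hfs hS hSR
  obtain ⟨i2, e2⟩ := circleIntegral_logDeriv_mul hf hP (by linarith) h0 (s := -s) (by rwa [norm_neg])
    (by rwa [heven]) hS hSR
  have e3 := circleIntegral.integral_sub i1 i2
  rw [e1, e2] at e3
  have hb : ‖∮ ζ in C(0, R), (logDeriv f ζ * (1 + ζ ^ 2 / (R : ℂ) ^ 2) ^ 2 / (ζ - s) -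
      logDeriv f ζ * (1 + ζ ^ 2 / (R : ℂ) ^ 2) ^ 2 / (ζ - -s))‖ ≤
      2 * Real.pi * R * (8 * K * √R * (8 * ‖s‖ / R ^ 2)) := by
    refine circleIntegral.norm_integral_le_of_norm_le_const (by linarith) fun ζ hζ => ?_
    have hζR : ‖ζ‖ = R := by simpa using hζ
    have h1 := norm_logDeriv_mul_le heven hK1 hK2 hR hζR
    have n1 : R / 2 ≤ ‖ζ - s‖ := by
      have := norm_sub_norm_le ζ s
      linarith
    have n2 : R ≤ ‖ζ - s‖ * 2 := by linarith
    have n3 : R / 2 ≤ ‖ζ + s‖ := by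
      have := norm_sub_norm_le ζ (-s)
      rw [norm_neg, sub_neg_eq_add] at this
      linarith
    have p1 : 0 < ‖ζ - s‖ := by linarith
    have p2 : 0 < ‖ζ + s‖ := by linarith
    have q1 := norm_pos_iff.1 p1
    have q2 := norm_pos_iff.1 p2
    have e : logDeriv f ζ * (1 + ζ ^ 2 / (R : ℂ) ^ 2) ^ 2 / (ζ - s) -
      logDeriv f ζ * (1 + ζ ^ 2 / (R : ℂ) ^ 2) ^ 2 / (ζ - -s) =
      logDeriv f ζ * (1 + ζ ^ 2 / (R : ℂ) ^ 2) ^ 2 * (2 * s / ((ζ - s) * (ζ + s))) := by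
      rw [sub_neg_eq_add]
      generalize logDeriv f ζ * (1 + ζ ^ 2 / (R : ℂ) ^ 2) ^ 2 = w
      field_simp
      ring
    rw [e, norm_mul]
    have h2 : ‖2 * s / ((ζ - s) * (ζ + s))‖ ≤ 8 * ‖s‖ / R ^ 2 := by
      rw [norm_div, norm_mul, norm_mul, div_le_iff₀ (by positivity)]
      have : R / 2 * (R / 2) ≤ ‖ζ - s‖ * ‖ζ + s‖ := by gcongr
      calc ‖(2 : ℂ)‖ * ‖s‖ = 8 * ‖s‖ / R ^ 2 * (R / 2 * (R / 2)) := by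
            rw [show ‖(2 : ℂ)‖ = 2 by norm_num]; field_simp; ring
        _ ≤ _ := by gcongr
    gcongr
  rw [e3] at hb
  have hpi : (2 * Real.pi * I : ℂ) ≠ 0 := two_pi_I_ne_zero
  have key : 2 * Real.pi * I * (logDeriv f s * (1 + s ^ 2 / (R : ℂ) ^ 2) ^ 2 -
      ∑ ρ ∈ S, (analyticOrderNatAt f ρ : ℂ) * ((1 + ρ ^ 2 / (R : ℂ) ^ 2) ^ 2 / (s - ρ))) -
      2 * Real.pi * I * (logDeriv f (-s) * (1 + (-s) ^ 2 / (R : ℂ) ^ 2) ^ 2 -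
      ∑ ρ ∈ S, (analyticOrderNatAt f ρ : ℂ) * ((1 + ρ ^ 2 / (R : ℂ) ^ 2) ^ 2 / (-s - ρ))) =
      4 * Real.pi * I * (logDeriv f s * (1 + s ^ 2 / (R : ℂ) ^ 2) ^ 2 - ∑ ρ ∈ S,
      ((analyticOrderNatAt f ρ * (1 - ‖ρ‖ ^ 2 / R ^ 2) ^ 2 : ℝ) : ℂ) * (s / (s ^ 2 + ‖ρ‖ ^ 2))) := by
    rw [logDeriv_neg_of_even heven, neg_sq, ← mul_sub,
      show (4 * Real.pi * I : ℂ) = 2 * Real.pi * I * 2 by ring, mul_assoc _ 2]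
    congr 1
    have hterm : ∀ ρ ∈ S,
        (analyticOrderNatAt f ρ : ℂ) * ((1 + ρ ^ 2 / (R : ℂ) ^ 2) ^ 2 / (s - ρ)) -
        (analyticOrderNatAt f ρ : ℂ) * ((1 + ρ ^ 2 / (R : ℂ) ^ 2) ^ 2 / (-s - ρ)) =
        2 * (((analyticOrderNatAt f ρ * (1 - ‖ρ‖ ^ 2 / R ^ 2) ^ 2 : ℝ) : ℂ) *
          (s / (s ^ 2 + ‖ρ‖ ^ 2))) := by
      intro ρ hρ
      have hρ0 := ((hS ρ).1 hρ).1
      have e := sq_eq_neg_norm_sq hz hρ0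
      have n1 : s - ρ ≠ 0 := fun h => by
        rw [sub_eq_zero.1 h] at hfs; exact hfs hρ0
      have n2 : -s - ρ ≠ 0 := fun h => by
        rw [← sub_eq_zero.1 h, heven] at hρ0; exact hfs hρ0
      have e2 : s ^ 2 + (‖ρ‖ : ℂ) ^ 2 = -((s - ρ) * (-s - ρ)) := by linear_combination e
      rw [e2, e]
      push_cast
      field_simp
      ring
    have hsum := Finset.sum_congr rfl hterm
    rw [Finset.sum_sub_distrib, ← Finset.mul_sum] at hsum
    linear_combination -hsum
  rw [key, norm_mul] at hb
  have h4 : ‖(4 * Real.pi * I : ℂ)‖ = 4 * Real.pi := by simp [Real.pi_pos.le]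
  rw [h4] at hb
  have hR0 : 0 < R := by linarith
  have h5 : 2 * Real.pi * R * (8 * K * √R * (8 * ‖s‖ / R ^ 2)) =
      4 * Real.pi * (32 * K * ‖s‖ / √R) := by
    have : √R ^ 2 = R := Real.sq_sqrt hR0.le
    have h6 : √R ≠ 0 := (Real.sqrt_pos.2 hR0).ne'
    field_simp
    rw [this]
    ring
  rw [h5] at hb
  exact le_of_mul_le_mul_left hb (by positivity)

lemma exists_le_norm_sq_add_sq {s : ℂ} (hs : 0 < s.re) :
    ∃ c : ℝ, 0 < c ∧ ∀ t : ℝ, c * (1 + t ^ 2) ≤ ‖s ^ 2 + (t : ℂ) ^ 2‖ := by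
  obtain ⟨r, hr⟩ : ∃ r, r = s.re := ⟨_, rfl⟩
  rw [← hr] at hs
  have hD : 0 < 1 + ‖s‖ + r := by positivity
  refine ⟨(r / (1 + ‖s‖ + r)) ^ 2, by positivity, fun t => ?_⟩
  have key : ∀ t : ℝ, r / (1 + ‖s‖ + r) * (1 + |t|) ≤ ‖s + t * I‖ := by
    intro t
    have h1 : r ≤ ‖s + t * I‖ := by
      have := re_le_norm (s + t * I)
      simpa [← hr] using this
    have h2 : |t| - ‖s‖ ≤ ‖s + t * I‖ := by
      have := norm_sub_norm_le (t * I) (-s)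
      rw [norm_neg, sub_neg_eq_add, add_comm (_ * I)] at this
      simpa using this
    rw [div_mul_eq_mul_div, div_le_iff₀ hD]
    have := norm_nonneg s
    nlinarith
  have e : s ^ 2 + (t : ℂ) ^ 2 = (s + t * I) * (s + (-t : ℝ) * I) := by
    push_cast
    linear_combination (t : ℂ) ^ 2 * I_sq
  rw [e, norm_mul]
  have k1 := key t
  have k2 := key (-t)
  rw [abs_neg] at k2
  calc (r / (1 + ‖s‖ + r)) ^ 2 * (1 + t ^ 2) ≤
      (r / (1 + ‖s‖ + r) * (1 + |t|)) * (r / (1 + ‖s‖ + r) * (1 + |t|)) := by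
        have : 1 + t ^ 2 ≤ (1 + |t|) * (1 + |t|) := by
          have := abs_nonneg t
          rw [← sq_abs t]
          nlinarith
        calc _ ≤ (r / (1 + ‖s‖ + r)) ^ 2 * ((1 + |t|) * (1 + |t|)) := by gcongr
          _ = _ := by ring
    _ ≤ _ := by gcongr

lemma exists_radius {f : ℂ → ℂ} (hf : Differentiable ℂ f) {a : ℂ} (ha : f a ≠ 0) (n : ℕ) :
    ∃ R : ℝ, n + 1 ≤ R ∧ R ≤ n + 2 ∧ ∀ z, ‖z‖ = R → f z ≠ 0 := by
  have hfin := (finite_zeros_inter_closedBall hf ha (n + 2)).image (fun z => ‖z‖)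
  have hinf : (Set.Icc (n + 1 : ℝ) (n + 2)).Infinite := Set.Icc_infinite (by linarith)
  obtain ⟨R, hR, hRn⟩ := hinf.exists_notMem_finite hfin
  refine ⟨R, hR.1, hR.2, fun z hz h => hRn ⟨z, ⟨h, by rw [hz]; exact hR.2⟩, hz⟩⟩

/-- Partial fraction expansion of the logarithmic derivative of an even entire function with purely
imaginary zeros. -/
theorem hasSum_logDeriv_of_even {f : ℂ → ℂ} (hf : Differentiable ℂ f) (heven : ∀ s, f (-s) = f s)
    (h0 : f 0 ≠ 0) (hz : ∀ s, f s = 0 → s.re = 0) {K : ℝ}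
    (hK1 : ∀ s : ℂ, 1 ≤ s.re → ‖logDeriv f s‖ ≤ K * (1 + √‖s‖))
    (hK2 : ∀ s : ℂ, 0 < s.re → s.re ≤ 1 → ‖logDeriv f s‖ ≤ K * (1 + ‖s‖) / s.re ^ 2)
    {s : ℂ} (hs : 0 < s.re) :
    HasSum (fun ρ : ℂ => (analyticOrderNatAt f ρ : ℂ) * (s / (s ^ 2 + ‖ρ‖ ^ 2))) (logDeriv f s) := by
  classical
  choose R hR1 hR2 hRz using exists_radius hf h0
  obtain ⟨S, hS⟩ : ∃ S : ℕ → Finset ℂ, ∀ n z, z ∈ S n ↔ f z = 0 ∧ ‖z‖ ≤ R n :=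
    ⟨fun n => (finite_zeros_inter_closedBall hf h0 (R n)).toFinset, fun n z => by simp⟩
  have hRone : ∀ n, 1 ≤ R n := fun n => by
    have := hR1 n
    have := n.cast_nonneg (α := ℝ)
    linarith
  have hRt : Tendsto R atTop atTop :=
    tendsto_atTop_mono (fun n => by linarith [hR1 n]) tendsto_natCast_atTop_atTop
  have hord : ∀ ρ, f ρ ≠ 0 → analyticOrderNatAt f ρ = 0 := by
    intro ρ hρ
    rw [analyticOrderNatAt, (hf.analyticAt ρ).analyticOrderAt_eq_zero.2 hρ]
    rfl
  obtain ⟨F, hF⟩ : ∃ F : ℕ → ℂ → ℝ, F = fun n ρ => if ‖ρ‖ ≤ R n then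
    (analyticOrderNatAt f ρ * (1 - ‖ρ‖ ^ 2 / R n ^ 2) ^ 2 : ℝ) else 0 := ⟨_, rfl⟩
  have hF0 : ∀ n ρ, 0 ≤ F n ρ := by
    intro n ρ
    rw [hF]; beta_reduce
    split_ifs <;> positivity
  have hFle : ∀ n ρ, F n ρ ≤ analyticOrderNatAt f ρ := by
    intro n ρ
    rw [hF]; beta_reduce
    have hRn := hRone n
    split_ifs with h
    · have h1 : ‖ρ‖ ^ 2 / R n ^ 2 ≤ 1 := by
        rw [div_le_one (by positivity)]
        gcongr
      have h2 : 0 ≤ ‖ρ‖ ^ 2 / R n ^ 2 := by positivity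
      refine mul_le_of_le_one_right (by positivity) ?_
      nlinarith
    · positivity
  have hFt : ∀ ρ, Tendsto (fun n => F n ρ) atTop (𝓝 (analyticOrderNatAt f ρ)) := by
    intro ρ
    have h1 : Tendsto (fun n => (analyticOrderNatAt f ρ * (1 - ‖ρ‖ ^ 2 / R n ^ 2) ^ 2 : ℝ)) atTop
        (𝓝 (analyticOrderNatAt f ρ * (1 - 0) ^ 2 : ℝ)) := by
      refine Tendsto.const_mul _ ((Tendsto.const_sub _ ?_).pow 2)
      exact ((tendsto_pow_atTop two_ne_zero).comp hRt).const_div_atTop _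
    simp only [sub_zero, one_pow, mul_one] at h1
    refine h1.congr' ?_
    filter_upwards [hRt.eventually_ge_atTop ‖ρ‖] with n hn
    rw [hF]; simp [hn]
  have hsumF : ∀ n (w : ℂ), HasSum (fun ρ => (F n ρ : ℂ) * (w / (w ^ 2 + ‖ρ‖ ^ 2)))
      (∑ ρ ∈ S n, ((analyticOrderNatAt f ρ * (1 - ‖ρ‖ ^ 2 / R n ^ 2) ^ 2 : ℝ) : ℂ) *
        (w / (w ^ 2 + ‖ρ‖ ^ 2))) := by
    intro n w
    have : ∑ ρ ∈ S n, ((analyticOrderNatAt f ρ * (1 - ‖ρ‖ ^ 2 / R n ^ 2) ^ 2 : ℝ) : ℂ) *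
        (w / (w ^ 2 + ‖ρ‖ ^ 2)) = ∑ ρ ∈ S n, (F n ρ : ℂ) * (w / (w ^ 2 + ‖ρ‖ ^ 2)) := by
      refine Finset.sum_congr rfl fun ρ hρ => ?_
      have := ((hS n ρ).1 hρ).2
      rw [hF]; simp [this]
    rw [this]
    refine hasSum_sum_of_ne_finset_zero fun ρ hρ => ?_
    rw [hF]; beta_reduce
    split_ifs with h
    · rw [hord ρ fun h' => hρ ((hS n ρ).2 ⟨h', h⟩)]
      simp
    · simp
  have hlim : ∀ w : ℂ, 0 < w.re → Tendsto (fun n => ∑' ρ, (F n ρ : ℂ) * (w / (w ^ 2 + ‖ρ‖ ^ 2))) atTop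
      (𝓝 (logDeriv f w)) := by
    intro w hw
    have h1 : Tendsto (fun n => logDeriv f w * (1 + w ^ 2 / (R n : ℂ) ^ 2) ^ 2) atTop
        (𝓝 (logDeriv f w)) := by
      have hc : Tendsto (fun n => w ^ 2 / (R n : ℂ) ^ 2) atTop (𝓝 0) := by
        rw [tendsto_zero_iff_norm_tendsto_zero]
        have e : ∀ n, ‖w ^ 2 / (R n : ℂ) ^ 2‖ = ‖w‖ ^ 2 / R n ^ 2 := by
          intro n
          simp
        simp only [e]
        exact ((tendsto_pow_atTop two_ne_zero).comp hRt).const_div_atTop _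
      have := ((hc.const_add 1).pow 2).const_mul (logDeriv f w)
      simpa using this
    have h2 : Tendsto (fun n => 32 * K * ‖w‖ / √(R n)) atTop (𝓝 0) :=
      (Real.tendsto_sqrt_atTop.comp hRt).const_div_atTop _
    have h3 : Tendsto (fun n => logDeriv f w * (1 + w ^ 2 / (R n : ℂ) ^ 2) ^ 2 -
        ∑' ρ, (F n ρ : ℂ) * (w / (w ^ 2 + ‖ρ‖ ^ 2))) atTop (𝓝 0) := by
      refine squeeze_zero_norm' ?_ h2
      filter_upwards [hRt.eventually_ge_atTop (2 * ‖w‖)] with n hn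
      rw [(hsumF n w).tsum_eq]
      exact norm_logDeriv_sub_sum_le hf heven h0 hz hK1 hK2 (hRone n) hw hn (hS n) (hRz n)
    simpa using h1.sub h3
  have hsum1 : Summable fun ρ : ℂ => (analyticOrderNatAt f ρ : ℝ) * (1 / (1 + ‖ρ‖ ^ 2)) := by
    refine summable_of_sum_le (c := ‖logDeriv f 1‖) (fun ρ => by positivity) fun T => ?_
    have h1 := (hlim 1 (by simp)).norm
    have h2 : Tendsto (fun n => ∑ ρ ∈ T, F n ρ * (1 / (1 + ‖ρ‖ ^ 2))) atTop
        (𝓝 (∑ ρ ∈ T, (analyticOrderNatAt f ρ : ℝ) * (1 / (1 + ‖ρ‖ ^ 2)))) :=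
      tendsto_finsetSum _ fun ρ _ => (hFt ρ).mul_const _
    refine le_of_tendsto_of_tendsto' h2 h1 fun n => ?_
    have e : (fun ρ : ℂ => (F n ρ : ℂ) * (1 / (1 ^ 2 + ‖ρ‖ ^ 2))) =
        fun ρ => ((F n ρ * (1 / (1 + ‖ρ‖ ^ 2)) : ℝ) : ℂ) := by
      ext ρ; push_cast; simp
    have hs1 := (hsumF n 1).summable
    rw [e] at hs1
    have hs2 := Complex.summable_ofReal.1 hs1
    rw [e, ← Complex.ofReal_tsum, norm_real]
    refine le_trans ?_ (le_abs_self _)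
    exact hs2.sum_le_tsum T fun ρ _ => mul_nonneg (hF0 n ρ) (by positivity)
  obtain ⟨c, hc, hcs⟩ := exists_le_norm_sq_add_sq hs
  have hbound : ∀ (x : ℝ) (ρ : ℂ), 0 ≤ x → x ≤ analyticOrderNatAt f ρ →
      ‖(x : ℂ) * (s / (s ^ 2 + ‖ρ‖ ^ 2))‖ ≤
        ‖s‖ / c * ((analyticOrderNatAt f ρ : ℝ) * (1 / (1 + ‖ρ‖ ^ 2))) := by
    intro x ρ hx hx'
    rw [norm_mul, norm_div, norm_real, Real.norm_eq_abs, abs_of_nonneg hx]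
    calc _ ≤ (analyticOrderNatAt f ρ : ℝ) * (‖s‖ / (c * (1 + ‖ρ‖ ^ 2))) := by
          gcongr
          exact hcs _
      _ = _ := by field_simp
  have hdom := tendsto_tsum_of_dominated_convergence (hsum1.mul_left (‖s‖ / c)) (𝓕 := atTop)
    (f := fun n ρ => (F n ρ : ℂ) * (s / (s ^ 2 + ‖ρ‖ ^ 2)))
    (g := fun ρ => (analyticOrderNatAt f ρ : ℂ) * (s / (s ^ 2 + ‖ρ‖ ^ 2)))
    (fun ρ => by
      have := (continuous_ofReal.tendsto _).comp (hFt ρ)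
      exact Tendsto.mul_const _ (by simpa [Function.comp_def] using this))
    (Eventually.of_forall fun n ρ => hbound _ _ (hF0 n ρ) (hFle n ρ))
  have hsm : Summable fun ρ : ℂ => (analyticOrderNatAt f ρ : ℂ) * (s / (s ^ 2 + ‖ρ‖ ^ 2)) :=
    (hsum1.mul_left (‖s‖ / c)).of_norm_bounded fun ρ => by
      simpa using hbound _ ρ (Nat.cast_nonneg _) le_rfl
  rw [← tendsto_nhds_unique hdom (hlim s hs)]
  exact hsm.hasSum

theorem exists_hasSum_logDeriv_of_even {f : ℂ → ℂ} (hf : Differentiable ℂ f)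
    (heven : ∀ s, f (-s) = f s)
    (h0 : f 0 ≠ 0) (hz : ∀ s, f s = 0 → s.re = 0) {K : ℝ}
    (hK1 : ∀ s : ℂ, 1 ≤ s.re → ‖logDeriv f s‖ ≤ K * (1 + √‖s‖))
    (hK2 : ∀ s : ℂ, 0 < s.re → s.re ≤ 1 → ‖logDeriv f s‖ ≤ K * (1 + ‖s‖) / s.re ^ 2) :
    ∃ (γ : ℕ → ℝ) (m : ℕ → ℕ), (∀ n, 0 < γ n) ∧ ∀ s : ℂ, 0 < s.re →
      HasSum (fun n => (m n : ℂ) * (s / (s ^ 2 + γ n ^ 2))) (logDeriv f s) := by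
  have hcount : {ρ : ℂ | f ρ = 0}.Countable := by
    have : {ρ : ℂ | f ρ = 0} ⊆ ⋃ n : ℕ, {z : ℂ | f z = 0 ∧ ‖z‖ ≤ n} := by
      intro ρ hρ
      obtain ⟨n, hn⟩ := exists_nat_ge ‖ρ‖
      exact Set.mem_iUnion.2 ⟨n, hρ, hn⟩
    exact (Set.countable_iUnion fun n : ℕ => (finite_zeros_inter_closedBall hf h0 n).countable).mono this
  obtain ⟨Z, hZ⟩ : ∃ Z : Set ℂ, Z = {ρ : ℂ | f ρ = 0} := ⟨_, rfl⟩
  rw [← hZ] at hcount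
  have : Countable Z := hcount.to_subtype
  obtain ⟨e, he⟩ := exists_injective_nat Z
  refine ⟨Function.extend e (fun ρ => ‖(ρ : ℂ)‖) 1,
    Function.extend e (fun ρ => analyticOrderNatAt f ρ) 0, fun n => ?_, fun s hs => ?_⟩
  · by_cases hn : ∃ ρ, e ρ = n
    · obtain ⟨ρ, rfl⟩ := hn
      rw [he.extend_apply]
      have hρ : f ρ = 0 := hZ.subset ρ.2
      refine norm_pos_iff.2 fun h => h0 ?_
      rwa [h] at hρ
    · rw [Function.extend_apply' _ _ _ hn]
      simp
  · have h1 := hasSum_logDeriv_of_even hf heven h0 hz hK1 hK2 hs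
    rw [← hasSum_subtype_iff_of_support_subset (s := Z)] at h1
    · rw [← he.hasSum_iff]
      · convert! h1 using 1
        funext ρ
        simp only [Function.comp_apply, he.extend_apply]
      · intro n hn
        rw [Function.extend_apply' _ _ _ (fun h => hn h)]
        simp
    · intro ρ hρ
      by_contra h
      rw [hZ] at h
      refine hρ ?_
      have : analyticOrderNatAt f ρ = 0 := by
        rw [analyticOrderNatAt, (hf.analyticAt ρ).analyticOrderAt_eq_zero.2 h]
        rfl
      simp [this]

/-- The Riemann xi function, centred at `1 / 2`. -/
noncomputable def xi (s : ℂ) : ℂ := (1 / 2 + s) * (s - 1 / 2) * completedRiemannZeta₀ (1 / 2 + s) + 1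

lemma differentiable_xi : Differentiable ℂ xi := by
  intro s
  have h : DifferentiableAt ℂ (fun s : ℂ => completedRiemannZeta₀ (1 / 2 + s)) s :=
    (HasDerivAt.comp_const_add _ _ (differentiable_completedZeta₀ _).hasDerivAt).differentiableAt
  have h2 : DifferentiableAt ℂ (fun s : ℂ => (1 / 2 + s) * (s - 1 / 2)) s := by fun_prop
  exact (h2.mul h).add_const _

lemma xi_neg (s : ℂ) : xi (-s) = xi s := by
  have := completedRiemannZeta₀_one_sub (1 / 2 + s)
  rw [show (1 : ℂ) - (1 / 2 + s) = 1 / 2 + -s by ring] at this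
  rw [xi, xi, this]
  ring

lemma xi_eq {s : ℂ} (hs : -(1 / 2) < s.re) :
    xi s = (1 / 2 + s) * Gammaℝ (1 / 2 + s) * riemannZeta₁ (1 / 2 + s) := by
  have hz : 0 < (1 / 2 + s).re := by simp; linarith
  by_cases h1 : s = 1 / 2
  · rw [h1, xi]
    norm_num
  · have hz0 : (1 / 2 + s) ≠ 0 := fun h => by rw [h] at hz; simp at hz
    have hs1 : s - 1 / 2 ≠ 0 := sub_ne_zero.2 h1
    have hz1 : (1 / 2 + s) ≠ 1 := fun h => hs1 (by linear_combination h)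
    have e := riemannZeta_eq_inv_sub_mul hz1
    rw [riemannZeta_def_of_ne_zero hz0, completedRiemannZeta_eq] at e
    have hG := Gammaℝ_ne_zero_of_re_pos hz
    have e2 : 1 / 2 + s - 1 = s - 1 / 2 := by ring
    have e3 : 1 - (1 / 2 + s) = -(s - 1 / 2) := by ring
    rw [e2, e3] at e
    rw [xi]
    have e4 : riemannZeta₁ (1 / 2 + s) = (s - 1 / 2) *
        ((completedRiemannZeta₀ (1 / 2 + s) - 1 / (1 / 2 + s) - 1 / -(s - 1 / 2)) / Gammaℝ (1 / 2 + s)) := by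
      rw [e, mul_inv_cancel_left₀ hs1]
    rw [e4]
    generalize completedRiemannZeta₀ (1 / 2 + s) = Λ at *
    generalize Gammaℝ (1 / 2 + s) = G at *
    obtain ⟨z, hz⟩ : ∃ z, z = 1 / 2 + s := ⟨_, rfl⟩
    obtain ⟨w, hw⟩ : ∃ w, w = s - 1 / 2 := ⟨_, rfl⟩
    have hzw : z = w + 1 := by rw [hz, hw]; ring
    rw [← hz] at hz0 ⊢
    rw [← hw] at hs1 ⊢
    field_simp
    linear_combination -hzw

lemma logDeriv_xi {s : ℂ} (hs : -(1 / 2) < s.re) (h : riemannZeta₁ (1 / 2 + s) ≠ 0) :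
    logDeriv xi s = 1 / (1 / 2 + s) + logDeriv Gammaℝ (1 / 2 + s) + logDeriv riemannZeta₁ (1 / 2 + s) := by
  have hz : 0 < (1 / 2 + s).re := by simp; linarith
  have hz0 : (1 / 2 + s) ≠ 0 := fun h => by rw [h] at hz; simp at hz
  have hG := Gammaℝ_ne_zero_of_re_pos hz
  have hGd : DifferentiableAt ℂ Gammaℝ (1 / 2 + s) := by
    have := (differentiable_Gammaℝ_inv.differentiableAt (x := 1 / 2 + s)).inv (inv_ne_zero hG)
    refine this.congr_of_eventuallyEq (Eventually.of_forall fun z => by simp)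
  have e : xi =ᶠ[𝓝 s] (fun z => z * Gammaℝ z * riemannZeta₁ z) ∘ fun s => 1 / 2 + s := by
    have : {w : ℂ | -(1 / 2) < w.re} ∈ 𝓝 s := (isOpen_lt continuous_const continuous_re).mem_nhds hs
    filter_upwards [this] with w hw
    exact xi_eq hw
  rw [(logDeriv_congr_nhds e).self_of_nhds]
  have hzG : DifferentiableAt ℂ (fun z : ℂ => z * Gammaℝ z) (1 / 2 + s) := differentiableAt_fun_id.fun_mul hGd
  have hd2 : DifferentiableAt ℂ (fun z : ℂ => z * Gammaℝ z * riemannZeta₁ z) (1 / 2 + s) :=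
    hzG.fun_mul (differentiable_riemannZeta₁ _)
  rw [logDeriv_comp hd2 (by fun_prop), logDeriv_mul (f := fun z => z * Gammaℝ z) (g := riemannZeta₁) _
    (mul_ne_zero hz0 hG) h hzG (differentiable_riemannZeta₁ _),
    logDeriv_mul (f := fun z => z) (g := Gammaℝ) _ hz0 hG differentiableAt_fun_id hGd]
  simp [logDeriv_apply]

/-- A one-sided bound for `mertensError` gives a partial fraction expansion over the zeros. -/
theorem exists_zeros_of_one_sided_bound {ε K : ℝ} (hε : ε * ε = 1)
    (h : ∀ u, 0 < u → ε * mertensError u ≤ K * (1 + u)) :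
    ∃ (γ : ℕ → ℝ) (m : ℕ → ℕ) (B : ℝ), (∀ n, 0 < γ n) ∧
      (∀ s : ℂ, 0 < s.re → HasSum (fun n => (m n : ℂ) * (s / (s ^ 2 + γ n ^ 2)))
        (1 / (1 / 2 + s) + logDeriv Gammaℝ (1 / 2 + s) + logDeriv riemannZeta₁ (1 / 2 + s))) ∧
      ∀ R : ℝ, 1 ≤ R → HasSum (fun n => (m n : ℝ) / (R ^ 2 + γ n ^ 2)) (∑' n, (m n : ℝ) / (R ^ 2 + γ n ^ 2)) ∧
        ∑' n, (m n : ℝ) / (R ^ 2 + γ n ^ 2) ≤ B / √R := by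
  obtain ⟨hne, ⟨K₀, hK₀⟩, -⟩ := consequences_of_one_sided_bound hε h
  obtain ⟨K₁, hK₁⟩ := exists_norm_logDeriv_Gammaℝ_le
  obtain ⟨K₂, hK₂⟩ := exists_norm_logDeriv_riemannZeta₁_le_of_one_le
  have hxi : ∀ s : ℂ, 0 < s.re → xi s ≠ 0 := by
    intro s hs
    have hz : 0 < (1 / 2 + s).re := by simp; linarith
    have hz0 : (1 / 2 + s) ≠ 0 := fun h => by rw [h] at hz; simp at hz
    rw [xi_eq (by linarith)]
    exact mul_ne_zero (mul_ne_zero hz0 (Gammaℝ_ne_zero_of_re_pos hz)) (hne s hs)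
  have hre : ∀ s, xi s = 0 → s.re = 0 := by
    intro s hs
    rcases lt_trichotomy 0 s.re with h | h | h
    · exact absurd hs (hxi s h)
    · exact h.symm
    · rw [← xi_neg] at hs
      exact absurd hs (hxi _ (by simpa using h))
  have hxi0 : xi 0 ≠ 0 := by
    have hz : 0 < (1 / 2 + 0 : ℂ).re := by norm_num
    rw [xi_eq (by simp)]
    refine mul_ne_zero (mul_ne_zero (by norm_num) (Gammaℝ_ne_zero_of_re_pos hz)) ?_
    have := riemannZeta₁_ofReal_ne_zero (x := 1 / 2) (by norm_num)
    push_cast at this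
    simpa using this
  have hinv : ∀ s : ℂ, 0 < s.re → ‖1 / (1 / 2 + s)‖ ≤ 2 := by
    intro s hs
    have : 1 / 2 ≤ ‖1 / 2 + s‖ := by
      have := re_le_norm (1 / 2 + s)
      simp at this
      norm_num at this ⊢
      linarith
    rw [norm_div, norm_one, div_le_iff₀ (by linarith)]
    linarith
  obtain ⟨B, hB⟩ : ∃ B, B = 2 + 2 * |K₁| + |K₂| + |K₀| := ⟨_, rfl⟩
  have hb1 : ∀ s : ℂ, 1 ≤ s.re → ‖logDeriv xi s‖ ≤ B * (1 + √‖s‖) := by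
    intro s hs
    rw [logDeriv_xi (by linarith) (hne s (by linarith))]
    refine (norm_add₃_le).trans ?_
    have h1 := hinv s (by linarith)
    have h2 := hK₁ s (by linarith)
    have h3 := hK₂ s hs
    have h4 : 0 ≤ √‖s‖ := Real.sqrt_nonneg _
    have h5 : K₁ * (1 + √‖s‖) ≤ |K₁| * (1 + √‖s‖) := by gcongr; exact le_abs_self _
    have h6 := le_abs_self K₂
    rw [hB]
    nlinarith [abs_nonneg K₁, abs_nonneg K₂, abs_nonneg K₀, mul_nonneg (abs_nonneg K₁) h4,
      mul_nonneg (abs_nonneg K₂) h4, mul_nonneg (abs_nonneg K₀) h4]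
  have hb2 : ∀ s : ℂ, 0 < s.re → s.re ≤ 1 → ‖logDeriv xi s‖ ≤ B * (1 + ‖s‖) / s.re ^ 2 := by
    intro s hs hs1
    rw [logDeriv_xi (by linarith) (hne s (by linarith))]
    refine (norm_add₃_le).trans ?_
    have h1 := hinv s (by linarith)
    have h2 := hK₁ s (by linarith)
    have h3 := hK₀ s hs hs1
    have h4 : 0 ≤ ‖s‖ := norm_nonneg _
    have h5 : √‖s‖ ≤ 1 + ‖s‖ := by
      have := Real.sq_sqrt h4
      nlinarith [sq_nonneg (√‖s‖ - 1)]
    have h6 : K₁ * (1 + √‖s‖) ≤ |K₁| * (2 * (1 + ‖s‖)) :=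
      (mul_le_mul_of_nonneg_right (le_abs_self K₁) (by positivity)).trans (by gcongr; linarith)
    have h7 : K₀ * (1 + ‖s‖) / s.re ^ 2 ≤ |K₀| * (1 + ‖s‖) / s.re ^ 2 := by gcongr; exact le_abs_self _
    have h8 : (2 + 2 * |K₁| + |K₂|) * (1 + ‖s‖) ≤ (2 + 2 * |K₁| + |K₂|) * (1 + ‖s‖) / s.re ^ 2 := by
      refine le_div_self (by positivity) (by positivity) ?_
      nlinarith
    have h9 : B * (1 + ‖s‖) / s.re ^ 2 = (2 + 2 * |K₁| + |K₂|) * (1 + ‖s‖) / s.re ^ 2 +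
      |K₀| * (1 + ‖s‖) / s.re ^ 2 := by rw [hB]; ring
    rw [h9]
    nlinarith [abs_nonneg K₂, mul_nonneg (abs_nonneg K₂) h4]
  obtain ⟨γ, m, hγ, hsum⟩ := exists_hasSum_logDeriv_of_even differentiable_xi xi_neg hxi0 hre hb1 hb2
  refine ⟨γ, m, 2 * B, hγ, fun s hs => logDeriv_xi (by linarith) (hne s hs) ▸ hsum s hs, fun R hR => ?_⟩
  have hR0 : 0 < R := by linarith
  have h1 := Complex.hasSum_re (hsum R (by simpa using hR0))
  have h2 := h1.div_const R
  have e : (fun n => ((m n : ℂ) * ((R : ℂ) / ((R : ℂ) ^ 2 + γ n ^ 2))).re / R) =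
      fun n => (m n : ℝ) / (R ^ 2 + γ n ^ 2) := by
    ext n
    have : (m n : ℂ) * ((R : ℂ) / ((R : ℂ) ^ 2 + γ n ^ 2)) = ((m n * (R / (R ^ 2 + γ n ^ 2)) : ℝ) : ℂ) := by
      push_cast; rfl
    rw [this, ofReal_re]
    field_simp
  rw [e] at h2
  refine ⟨h2.summable.hasSum, ?_⟩
  rw [h2.tsum_eq, div_le_iff₀ hR0]
  have h3 := (re_le_norm _).trans (hb1 R (by simpa using hR))
  rw [norm_real, Real.norm_eq_abs, abs_of_pos hR0] at h3
  have h4 : 1 ≤ √R := Real.one_le_sqrt.2 hR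
  have h5 : 2 * B / √R * R = 2 * B * √R := by
    rw [div_mul_eq_mul_div, div_eq_iff (by positivity)]
    linear_combination (-2 * B) * Real.mul_self_sqrt hR0.le
  have hB0 : 0 ≤ B := by rw [hB]; positivity
  rw [h5]
  nlinarith

lemma HasLaplace.tsum {f : ℕ → ℝ → ℝ} {b : ℕ → ℝ} {v : ℕ → ℂ} {s V : ℂ} (hs : 0 < s.re) (hb : Summable b)
    (hfb : ∀ n u, 0 < u → |f n u| ≤ b n) (hf : ∀ n, HasLaplace (f n) s (v n)) (hV : HasSum v V) :
    HasLaplace (fun u => ∑' n, f n u) s V := by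
  have e : ∀ u : ℝ, ((∑' n, f n u : ℝ) : ℂ) * cexp (-s * u) = ∑' n, (f n u : ℂ) * cexp (-s * u) := by
    intro u
    rw [ofReal_tsum, tsum_mul_right]
  have h0 : IntegrableOn (fun u : ℝ => Real.exp (-s.re * u)) (Set.Ioi 0) :=
    integrableOn_exp_mul_Ioi (by linarith) 0
  have h1 : Summable fun n => ∫ u : ℝ in Set.Ioi 0, ‖(f n u : ℂ) * cexp (-s * u)‖ := by
    refine Summable.of_nonneg_of_le (fun n => integral_nonneg fun u => norm_nonneg _) (fun n => ?_)
      (hb.mul_right (∫ u : ℝ in Set.Ioi 0, Real.exp (-s.re * u)))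
    rw [← integral_const_mul]
    refine setIntegral_mono_on (hf n).1.norm (h0.const_mul _) measurableSet_Ioi fun u hu => ?_
    rw [norm_mul, norm_real, norm_exp, Real.norm_eq_abs]
    have : (-s * (u : ℂ)).re = -s.re * u := by simp
    rw [this]
    gcongr
    exact hfb n u hu
  unfold HasLaplace
  simp_rw [e]
  refine ⟨integrable_tsum_of_summable_integral_norm (fun n => (hf n).1) h1, ?_⟩
  have h2 := hasSum_integral_of_summable_integral_norm (fun n => (hf n).1) h1
  simp_rw [(hf _).2] at h2
  exact h2.unique hV

lemma eq_zero_of_hasLaplace_zero {h : ℝ → ℝ} {σ : ℝ} (hh : ∀ s : ℂ, s.re = σ → HasLaplace h s 0)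
    (hc : ContinuousOn h (Set.Ioi 0)) {u : ℝ} (hu : 0 < u) : h u = 0 := by
  obtain ⟨f, hf⟩ : ∃ f : ℝ → ℂ, f = (Set.Ioi 0).indicator fun u : ℝ => (h u : ℂ) * cexp (-σ * u) := ⟨_, rfl⟩
  have hi : Integrable f := by
    rw [hf, integrable_indicator_iff measurableSet_Ioi]
    exact (hh σ (by simp)).1
  have hF : FourierTransform.fourier f = 0 := by
    ext w
    rw [Real.fourier_real_eq_integral_exp_smul]
    have := (hh (σ + (2 * Real.pi * w : ℝ) * I) (by simp)).2
    rw [Pi.zero_apply, ← this, ← integral_indicator measurableSet_Ioi]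
    congr 1
    ext v
    rw [hf]
    by_cases hv : v ∈ Set.Ioi (0 : ℝ)
    · rw [Set.indicator_of_mem hv, Set.indicator_of_mem hv, smul_eq_mul, mul_left_comm, ← exp_add]
      congr 2
      push_cast
      ring
    · rw [Set.indicator_of_notMem hv, Set.indicator_of_notMem hv, smul_zero]
  have hcu : ContinuousAt f u := by
    have h1 : ContinuousAt (fun u : ℝ => (h u : ℂ) * cexp (-σ * u)) u := by
      have := (hc.continuousAt (Ioi_mem_nhds hu))
      exact (continuous_ofReal.continuousAt.comp this).mul (by fun_prop)
    refine h1.congr ?_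
    filter_upwards [Ioi_mem_nhds hu] with v hv
    rw [hf, Set.indicator_of_mem hv]
  have h2 := hi.fourierInv_fourier_eq (by rw [hF]; exact integrable_zero _ _ _) hcu
  rw [hF, hf, Set.indicator_of_mem (Set.mem_Ioi.2 hu)] at h2
  have h3 : (FourierTransformInv.fourierInv (0 : ℝ → ℂ)) u = 0 := by
    rw [Real.fourierInv_eq']
    simp
  rw [h3] at h2
  have := mul_eq_zero.1 h2.symm
  simpa [exp_ne_zero] using this

lemma weightedSum_eq_sum_max {u : ℝ} {N : ℕ} (h : Real.exp u < N) :
    weightedSum (fun t => t) u = ∑ n ∈ Finset.range N, weight n * max (u - Real.log n) 0 := by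
  have hN : ⌊Real.exp u⌋₊ + 1 ≤ N := (Nat.floor_lt (Real.exp_pos u).le).2 h
  rw [weightedSum]
  rw [← Finset.sum_subset (Finset.range_mono hN) (f := fun n => weight n * max (u - Real.log n) 0)]
  · refine Finset.sum_congr rfl fun n hn => ?_
    rcases eq_or_ne n 0 with rfl | h0
    · simp
    · rw [max_eq_left (sub_nonneg.2 ((log_le_iff_mem_range h0 u).2 hn))]
  · intro n _ hn
    have h0 : n ≠ 0 := by rintro rfl; simp at hn
    have := (log_le_iff_mem_range h0 u).not.2 hn
    rw [max_eq_right (by linarith), mul_zero]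

lemma continuous_weightedSum_id : Continuous (weightedSum fun t => t) := by
  rw [continuous_iff_continuousAt]
  intro u
  obtain ⟨N, hN⟩ := exists_nat_gt (Real.exp (u + 1))
  have h1 : Continuous fun u => ∑ n ∈ Finset.range N, weight n * max (u - Real.log n) 0 := by fun_prop
  refine h1.continuousAt.congr ?_
  filter_upwards [Iio_mem_nhds (lt_add_one u)] with v hv
  exact (weightedSum_eq_sum_max ((Real.exp_lt_exp.2 hv).trans hN)).symm

/-- The contribution of the zeros `1 / 2 ± i γ n`, with multiplicity `m n`, to the explicit formula. -/
noncomputable def zeroSum (γ : ℕ → ℝ) (m : ℕ → ℕ) (u : ℝ) : ℝ :=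
  ∑' n, (m n : ℝ) * ((1 - Real.cos (γ n * u)) / γ n ^ 2)

/-- The contribution of the trivial zeros to the explicit formula. -/
noncomputable def trivSum (u : ℝ) : ℝ := ∑' n, (1 - Real.exp (-trivZero n * u)) / trivZero n ^ 2

lemma abs_zeroSum_term_le (γ : ℝ) (m : ℕ) (u : ℝ) :
    |(m : ℝ) * ((1 - Real.cos (γ * u)) / γ ^ 2)| ≤ 2 * (m / γ ^ 2) := by
  have h1 := Real.neg_one_le_cos (γ * u)
  have h2 := Real.cos_le_one (γ * u)
  rw [abs_of_nonneg (by have : 0 ≤ 1 - Real.cos (γ * u) := by linarith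
                        positivity), mul_div_assoc', mul_div_assoc']
  gcongr ?_ / _
  nlinarith [(Nat.cast_nonneg m : (0 : ℝ) ≤ m)]

lemma abs_trivSum_term_le (n : ℕ) {u : ℝ} (hu : 0 ≤ u) :
    |(1 - Real.exp (-trivZero n * u)) / trivZero n ^ 2| ≤ 1 / trivZero n ^ 2 := by
  have h0 := trivZero_pos n
  have h1 : Real.exp (-trivZero n * u) ≤ 1 := Real.exp_le_one_iff.2 (by nlinarith)
  have h2 := Real.exp_pos (-trivZero n * u)
  rw [abs_of_nonneg (by have : 0 ≤ 1 - Real.exp (-trivZero n * u) := by linarith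
                        positivity)]
  gcongr
  linarith

lemma summable_one_div_trivZero_sq : Summable fun n => 1 / trivZero n ^ 2 := by
  refine Summable.of_nonneg_of_le (fun n => by positivity) (fun n => ?_) (summable_const_div_succ_sq 4)
  have h0 := trivZero_pos n
  rw [div_le_div_iff₀ (by positivity) (by positivity)]
  unfold trivZero
  nlinarith [(Nat.cast_nonneg n : (0 : ℝ) ≤ n)]

lemma abs_trivSum_le {u : ℝ} (hu : 0 ≤ u) : |trivSum u| ≤ ∑' n, 1 / trivZero n ^ 2 := by
  rw [trivSum, ← Real.norm_eq_abs]
  exact tsum_of_norm_bounded summable_one_div_trivZero_sq.hasSum fun n => abs_trivSum_term_le n hu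

lemma continuousOn_trivSum : ContinuousOn trivSum (Set.Ici 0) := by
  refine continuousOn_tsum (fun n => by fun_prop) summable_one_div_trivZero_sq fun n u hu =>
    abs_trivSum_term_le n hu

section

variable {γ : ℕ → ℝ} {m : ℕ → ℕ}

lemma abs_zeroSum_le (hs : Summable fun n => (m n : ℝ) / γ n ^ 2) (u : ℝ) :
    |zeroSum γ m u| ≤ 2 * ∑' n, (m n : ℝ) / γ n ^ 2 := by
  rw [zeroSum, ← Real.norm_eq_abs]
  exact tsum_of_norm_bounded (hs.hasSum.mul_left 2) fun n => abs_zeroSum_term_le _ _ u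

lemma continuous_zeroSum (hs : Summable fun n => (m n : ℝ) / γ n ^ 2) : Continuous (zeroSum γ m) :=
  continuous_tsum (fun n => by fun_prop) (hs.mul_left 2) fun n u => abs_zeroSum_term_le _ _ u

lemma hasLaplace_trivSum {s V : ℂ} (hs : 0 < s.re)
    (hV : HasSum (fun n => s / (trivZero n * (s + trivZero n))) V) : HasLaplace trivSum s (V / s ^ 2) := by
  refine HasLaplace.tsum hs summable_one_div_trivZero_sq (fun n u hu => abs_trivSum_term_le n hu.le)
    (v := fun n => s / (trivZero n * (s + trivZero n)) / s ^ 2) (fun n => ?_) (hV.div_const _)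
  have h0 := trivZero_pos n
  have h1 := ((hasLaplace_const 1 hs).sub (hasLaplace_exp (-trivZero n) (s := s) (by linarith))).const_mul
    (1 / trivZero n ^ 2)
  have hs0 : s ≠ 0 := fun h => by rw [h] at hs; simp at hs
  have ha0 : (trivZero n : ℂ) ≠ 0 := by exact_mod_cast h0.ne'
  have hsa : s + trivZero n ≠ 0 := fun h => by
    have := congrArg re h
    simp at this
    linarith
  refine (h1.congr fun u _ => by ring).congr_val ?_
  push_cast
  rw [sub_neg_eq_add]
  field_simp
  ring

lemma hasLaplace_cos (t : ℝ) {s : ℂ} (hs : 0 < s.re) :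
    HasLaplace (fun u => Real.cos (t * u)) s (s / (s ^ 2 + t ^ 2)) := by
  have e : (fun u : ℝ => ((Real.cos (t * u) : ℝ) : ℂ) * cexp (-s * u)) =
      fun u : ℝ => (1 / 2 : ℂ) * (cexp ((t * I - s) * u) + cexp ((-t * I - s) * u)) := by
    ext u
    push_cast
    rw [Complex.cos, div_mul_eq_mul_div, add_mul, ← exp_add, ← exp_add]
    rw [show (t * I - s) * u = t * u * I + -s * u by ring,
      show (-t * I - s) * u = -(t * u) * I + -s * u by ring]
    ring
  have h1 : (t * I - s).re < 0 := by simpa using hs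
  have h2 : (-t * I - s).re < 0 := by simpa using hs
  have hne1 : t * I - s ≠ 0 := fun h => by rw [h] at h1; simp at h1
  have hne2 : -t * I - s ≠ 0 := fun h => by rw [h] at h2; simp at h2
  have hne : s ^ 2 + (t : ℂ) ^ 2 = (t * I - s) * (-t * I - s) := by
    linear_combination ((t : ℂ) ^ 2) * I_sq
  unfold HasLaplace
  rw [e]
  have i1 := integrableOn_exp_mul_complex_Ioi h1 0
  have i2 := integrableOn_exp_mul_complex_Ioi h2 0
  refine ⟨(i1.add i2).const_mul _, ?_⟩
  rw [integral_const_mul, integral_add i1 i2, integral_exp_mul_complex_Ioi h1,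
    integral_exp_mul_complex_Ioi h2]
  simp only [ofReal_zero, mul_zero, exp_zero]
  rw [div_add_div _ _ hne1 hne2, ← hne]
  ring

lemma hasLaplace_zeroSum (hγ : ∀ n, 0 < γ n) (hm : Summable fun n => (m n : ℝ) / γ n ^ 2) {s V : ℂ}
    (hs : 0 < s.re) (hV : HasSum (fun n => (m n : ℂ) * (s / (s ^ 2 + γ n ^ 2))) V) :
    HasLaplace (zeroSum γ m) s (V / s ^ 2) := by
  refine HasLaplace.tsum hs (hm.mul_left 2) (fun n u _ => abs_zeroSum_term_le _ _ u)
    (v := fun n => (m n : ℂ) * (s / (s ^ 2 + γ n ^ 2)) / s ^ 2) (fun n => ?_) (hV.div_const _)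
  have h1 := (((hasLaplace_const 1 hs).sub (hasLaplace_cos (γ n) hs)).const_mul (1 / γ n ^ 2)).const_mul (m n)
  have hs0 : s ≠ 0 := fun h => by rw [h] at hs; simp at hs
  have ha0 : (γ n : ℂ) ≠ 0 := by exact_mod_cast (hγ n).ne'
  have hsa : s ^ 2 + (γ n : ℂ) ^ 2 ≠ 0 := by
    obtain ⟨c, hc, h⟩ := exists_le_norm_sq_add_sq hs
    intro h0
    have := h (γ n)
    rw [h0, norm_zero] at this
    nlinarith [sq_nonneg (γ n), mul_pos hc (pow_pos (hγ n) 2)]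
  refine (h1.congr fun u _ => by ring).congr_val ?_
  push_cast
  field_simp
  ring

/-- The explicit formula for the second-order smoothed prime counting function. -/
theorem exists_explicit_formula (hγ : ∀ n, 0 < γ n) (hm : Summable fun n => (m n : ℝ) / γ n ^ 2)
    (hsum : ∀ s : ℂ, 0 < s.re → HasSum (fun n => (m n : ℂ) * (s / (s ^ 2 + γ n ^ 2)))
        (1 / (1 / 2 + s) + logDeriv Gammaℝ (1 / 2 + s) + logDeriv riemannZeta₁ (1 / 2 + s))) :
    ∃ κ : ℝ, ∀ u : ℝ, 0 < u → weightedSum (fun t => t) u =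
      4 * (Real.exp (1 / 2 * u) + Real.exp (-(1 / 2) * u)) - 8 + κ * u + trivSum u - zeroSum γ m u := by
  obtain ⟨κ, hκ⟩ := exists_hasSum_logDeriv_Gammaℝ
  obtain ⟨h, hh⟩ : ∃ h : ℝ → ℝ, h = fun u => weightedSum (fun t => t) u -
      (4 * (Real.exp (1 / 2 * u) + Real.exp (-(1 / 2) * u)) - 8 + κ * u + trivSum u - zeroSum γ m u) := ⟨_, rfl⟩
  have hc : ContinuousOn h (Set.Ioi 0) := by
    rw [hh]
    refine continuous_weightedSum_id.continuousOn.sub (ContinuousOn.sub (ContinuousOn.add (by fun_prop)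
      (continuousOn_trivSum.mono Set.Ioi_subset_Ici_self)) (continuous_zeroSum hm).continuousOn)
  refine ⟨κ, fun u hu => ?_⟩
  have hz : h u = 0 := by
    refine eq_zero_of_hasLaplace_zero (σ := 1) (fun s hs => ?_) hc hu
    have hs0 : 0 < s.re := by linarith
    have hne : s ≠ 0 := fun h => by rw [h] at hs; simp at hs
    have hne1 : s - 1 / 2 ≠ 0 := fun h => by
      have := congrArg re h; simp at this; norm_num at this; linarith
    have hne2 : s + 1 / 2 ≠ 0 := fun h => by
      have := congrArg re h; simp at this; norm_num at this; linarith
    have hne3 : 1 / 2 + s ≠ 0 := by rwa [add_comm]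
    have hQ := hasLaplace_weightedSum (s := s) (by linarith) (hasLaplace_id hs0)
    have hE := ((hasLaplace_exp (1 / 2) (s := s) (by linarith)).add
      (hasLaplace_exp (-(1 / 2)) (s := s) (by linarith))).const_mul 4
    have hT := hasLaplace_trivSum hs0 (hκ s (by linarith))
    have hZ := hasLaplace_zeroSum hγ hm hs0 (hsum s hs0)
    have := hQ.sub ((((hE.sub (hasLaplace_const 8 hs0)).add ((hasLaplace_id hs0).const_mul κ)).add hT).sub hZ)
    rw [hh]
    refine this.congr_val ?_
    generalize logDeriv riemannZeta₁ (1 / 2 + s) = L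
    generalize logDeriv Gammaℝ (1 / 2 + s) = G
    push_cast
    rw [sub_neg_eq_add]
    have key : (1 / (s - 1 / 2) + 1 / (s + 1 / 2)) * (1 / s ^ 2) =
        4 * (1 / (s - 1 / 2) + 1 / (s + 1 / 2)) - 8 / s := by
      rw [div_add_div _ _ hne1 hne2]
      have : (s - 1 / 2) * (s + 1 / 2) ≠ 0 := mul_ne_zero hne1 hne2
      generalize hw : (s - 1 / 2) * (s + 1 / 2) = w at this
      field_simp
      linear_combination (-16 * s) * hw
    rw [add_comm (1 / 2) s]
    linear_combination key
  rw [hh] at hz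
  exact sub_eq_zero.1 hz

end

lemma abs_cos_add_sub_cos_le (x v y : ℝ) (k : ℤ) (h : |x - k * (2 * Real.pi)| ≤ y) :
    |Real.cos (x + v) - Real.cos v| ≤ y := by
  rw [← Real.cos_sub_int_mul_two_pi (x + v) k]
  refine (Real.abs_cos_sub_cos_le _ _).trans ?_
  convert! h using 2
  ring

/-- Simultaneous approximation: a common almost period of finitely many cosines. -/
lemma exists_almost_period (S : Finset ℕ) (γ : ℕ → ℝ) {q : ℕ} (hq : 0 < q) {Y : ℝ} (hY : 0 < Y) :
    ∃ u : ℝ, Y ≤ u ∧ u ≤ q ^ S.card * Y ∧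
      ∀ n ∈ S, ∀ v, |Real.cos (γ n * (u + v)) - Real.cos (γ n * v)| ≤ 2 * Real.pi / q := by
  have hq0 : (0 : ℝ) < q := by exact_mod_cast hq
  obtain ⟨x, hx⟩ : ∃ x : ℕ → ℝ, x = fun n => γ n * Y / (2 * Real.pi) := ⟨_, rfl⟩
  have hlt : ∀ y : ℝ, ⌊q * Int.fract y⌋₊ < q := fun y => by
    rw [Nat.floor_lt (by positivity)]
    nlinarith [Int.fract_lt_one y]
  obtain ⟨f, hf⟩ : ∃ f : Fin (q ^ S.card + 1) → (S → Fin q),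
    f = fun j n => ⟨⌊q * Int.fract (j * x n)⌋₊, hlt _⟩ := ⟨_, rfl⟩
  obtain ⟨i, j, hij, he⟩ := Fintype.exists_ne_map_eq_of_card_lt f (by simp)
  wlog hlt : i < j generalizing i j
  · exact this j i hij.symm he.symm (lt_of_le_of_ne (not_lt.1 hlt) hij.symm)
  have h1 : ((i : ℕ) : ℝ) + 1 ≤ (j : ℕ) := by exact_mod_cast hlt
  have h2 : ((j : ℕ) : ℝ) ≤ (q : ℝ) ^ S.card := by exact_mod_cast Nat.lt_succ_iff.1 j.2
  have h3 : (0 : ℝ) ≤ (i : ℕ) := Nat.cast_nonneg _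
  refine ⟨((j : ℕ) - (i : ℕ)) * Y, by nlinarith, by gcongr; linarith, fun n hn v => ?_⟩
  have h4 := congrFun he ⟨n, hn⟩
  rw [hf] at h4
  simp only [Fin.mk.injEq] at h4
  have h5 := Nat.floor_le (a := q * Int.fract ((i : ℕ) * x n)) (by positivity)
  have h6 := Nat.lt_floor_add_one (q * Int.fract ((i : ℕ) * x n))
  have h7 := Nat.floor_le (a := q * Int.fract ((j : ℕ) * x n)) (by positivity)
  have h8 := Nat.lt_floor_add_one (q * Int.fract ((j : ℕ) * x n))
  rw [← h4] at h7 h8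
  have h9 : |((j : ℕ) - (i : ℕ)) * x n - ((⌊((j : ℕ) : ℝ) * x n⌋ - ⌊((i : ℕ) : ℝ) * x n⌋ : ℤ) : ℝ)| ≤ 1 / q := by
    rw [le_div_iff₀ hq0]
    rw [show ∀ z : ℝ, |z| * q = |z * q| from fun z => by rw [abs_mul, abs_of_pos hq0]]
    have e1 := Int.self_sub_floor (((j : ℕ) : ℝ) * x n)
    have e2 := Int.self_sub_floor (((i : ℕ) : ℝ) * x n)
    push_cast
    have : (((j : ℕ) - (i : ℕ)) * x n - (⌊((j : ℕ) : ℝ) * x n⌋ - ⌊((i : ℕ) : ℝ) * x n⌋ : ℝ)) * q =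
        q * Int.fract ((j : ℕ) * x n) - q * Int.fract ((i : ℕ) * x n) := by
      rw [← e1, ← e2]; ring
    rw [this, abs_le]
    constructor <;> linarith
  rw [mul_add]
  refine abs_cos_add_sub_cos_le _ _ _ (⌊((j : ℕ) : ℝ) * x n⌋ - ⌊((i : ℕ) : ℝ) * x n⌋) ?_
  have h10 : γ n * (((j : ℕ) - (i : ℕ)) * Y) = (((j : ℕ) - (i : ℕ)) * x n) * (2 * Real.pi) := by
    rw [hx]
    field_simp
  rw [h10, ← sub_mul, abs_mul, abs_of_pos Real.two_pi_pos]
  calc _ ≤ 1 / q * (2 * Real.pi) := by gcongr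
    _ = _ := by ring

section

variable {γ : ℕ → ℝ} {m : ℕ → ℕ} {B : ℝ}

lemma summable_div_sq_of_hasSum (hγ : ∀ n, 0 < γ n)
    (hR : ∀ R : ℝ, 1 ≤ R → HasSum (fun n => (m n : ℝ) / (R ^ 2 + γ n ^ 2)) (∑' n, (m n : ℝ) / (R ^ 2 + γ n ^ 2)) ∧
        ∑' n, (m n : ℝ) / (R ^ 2 + γ n ^ 2) ≤ B / √R) : Summable fun n => (m n : ℝ) / γ n ^ 2 := by
  have h1 := (hR 1 le_rfl).1.summable
  have h2 := h1.tendsto_cofinite_zero.eventually_lt_const (show (0 : ℝ) < 1 / 2 by norm_num)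
  refine Summable.of_norm_bounded_eventually (h1.mul_left 2) ?_
  filter_upwards [h2] with n hn
  have h0 := hγ n
  rw [Real.norm_of_nonneg (by positivity)]
  rcases Nat.eq_zero_or_pos (m n) with h | h
  · simp [h]
  · have hm : (1 : ℝ) ≤ m n := by exact_mod_cast h
    rw [div_lt_div_iff₀ (by positivity) (by norm_num)] at hn
    rw [mul_div_assoc', div_le_div_iff₀ (by positivity) (by positivity)]
    nlinarith

lemma tsum_large_le (hγ : ∀ n, 0 < γ n)
    (hR : ∀ R : ℝ, 1 ≤ R → HasSum (fun n => (m n : ℝ) / (R ^ 2 + γ n ^ 2)) (∑' n, (m n : ℝ) / (R ^ 2 + γ n ^ 2)) ∧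
        ∑' n, (m n : ℝ) / (R ^ 2 + γ n ^ 2) ≤ B / √R) {R : ℝ} (h1 : 1 ≤ R) :
    ∃ S : Finset ℕ, (S.card : ℝ) ≤ 2 * B * R ^ 2 / √R ∧
      ∃ g : ℕ → ℝ, Summable g ∧ ∑' n, g n ≤ 2 * B / √R ∧ ∀ n, 0 ≤ g n ∧ (n ∉ S → (m n : ℝ) / γ n ^ 2 ≤ g n) := by
  obtain ⟨hs, hb⟩ := hR R h1
  have hR0 : 0 < R := by linarith
  have hcard : ∀ S : Finset ℕ, (∀ n ∈ S, m n ≠ 0 ∧ γ n ≤ R) → (S.card : ℝ) ≤ 2 * B * R ^ 2 / √R := by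
    intro S hS
    have h2 : (S.card : ℝ) * (1 / (2 * R ^ 2)) ≤ B / √R := by
      refine le_trans ?_ hb
      rw [← nsmul_eq_mul]
      refine le_trans ?_ (hs.summable.sum_le_tsum S fun n _ => by positivity)
      refine Finset.card_nsmul_le_sum S _ _ fun n hn => ?_
      have h3 : (1 : ℝ) ≤ m n := by exact_mod_cast Nat.one_le_iff_ne_zero.2 (hS n hn).1
      have h4 := (hS n hn).2
      have h5 := hγ n
      gcongr
      nlinarith
    rw [mul_one_div, div_le_iff₀ (by positivity)] at h2
    refine h2.trans (le_of_eq (by ring))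
  have hfin : {n | m n ≠ 0 ∧ γ n ≤ R}.Finite := by
    by_contra hinf
    obtain ⟨k, hk⟩ := exists_nat_gt (2 * B * R ^ 2 / √R)
    obtain ⟨S, hS, hc⟩ := Set.Infinite.exists_subset_card_eq hinf k
    have := hcard S fun n hn => hS hn
    rw [hc] at this
    linarith
  refine ⟨hfin.toFinset, hcard _ fun n hn => by simpa using hn,
    fun n => 2 * ((m n : ℝ) / (R ^ 2 + γ n ^ 2)), hs.summable.mul_left 2, ?_, fun n => ⟨by positivity, fun hn => ?_⟩⟩
  · rw [tsum_mul_left, mul_div_assoc]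
    gcongr
  · have h0 := hγ n
    rcases Nat.eq_zero_or_pos (m n) with h | h
    · simp [h]
    · have h5 : R < γ n := by
        by_contra h6
        exact hn (by simpa using ⟨h.ne', not_lt.1 h6⟩)
      beta_reduce
      rw [mul_div_assoc', div_le_div_iff₀ (by positivity) (by positivity)]
      have : (0 : ℝ) ≤ m n := Nat.cast_nonneg _
      nlinarith [mul_le_mul_of_nonneg_left (show R ^ 2 + γ n ^ 2 ≤ 2 * γ n ^ 2 by nlinarith) this]

/-- Quantitative almost periodicity of `zeroSum`. -/
theorem exists_almost_period_zeroSum (hγ : ∀ n, 0 < γ n)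
    (hR : ∀ R : ℝ, 1 ≤ R → HasSum (fun n => (m n : ℝ) / (R ^ 2 + γ n ^ 2)) (∑' n, (m n : ℝ) / (R ^ 2 + γ n ^ 2)) ∧
        ∑' n, (m n : ℝ) / (R ^ 2 + γ n ^ 2) ≤ B / √R) :
    ∃ K : ℝ, ∀ T : ℕ, 1 ≤ T → ∀ Y : ℝ, 0 < Y → ∃ u : ℝ, Y ≤ u ∧
      Real.log u ≤ Real.log Y + 2 * B * T ^ 3 * Real.log T ∧
      ∀ v, |zeroSum γ m (u + v) - zeroSum γ m v| ≤ K / T := by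
  have hs := summable_div_sq_of_hasSum hγ hR
  refine ⟨2 * Real.pi * (∑' n, (m n : ℝ) / γ n ^ 2) + 4 * B, fun T hT Y hY => ?_⟩
  have hT1 : (1 : ℝ) ≤ T := by exact_mod_cast hT
  have hsq : √((T : ℝ) ^ 2) = T := Real.sqrt_sq (by linarith)
  obtain ⟨S, hS, g, hg, hgB, hgS⟩ := tsum_large_le hγ hR (R := (T : ℝ) ^ 2) (by nlinarith)
  rw [hsq] at hS hgB
  obtain ⟨u, hYu, huY, hu⟩ := exists_almost_period S γ (q := T) hT hY
  refine ⟨u, hYu, ?_, fun v => ?_⟩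
  · have h1 := Real.log_le_log (hY.trans_le hYu) huY
    rw [Real.log_mul (by positivity) hY.ne', Real.log_pow] at h1
    have h2 : (S.card : ℝ) ≤ 2 * B * T ^ 3 := by
      refine hS.trans (le_of_eq ?_)
      field_simp
    have h3 := Real.log_nonneg hT1
    nlinarith
  · have hsum : ∀ w, Summable fun n => (m n : ℝ) * ((1 - Real.cos (γ n * w)) / γ n ^ 2) := fun w =>
      Summable.of_norm_bounded (hs.mul_left 2) fun n => abs_zeroSum_term_le _ _ w
    rw [zeroSum, zeroSum, ← (hsum _).tsum_sub (hsum _), ← Real.norm_eq_abs]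
    refine (tsum_of_norm_bounded ((hs.mul_left (2 * Real.pi / T)).add (hg.mul_left 2)).hasSum
      fun n => ?_).trans ?_
    · have h0 := hγ n
      have e : (m n : ℝ) * ((1 - Real.cos (γ n * (u + v))) / γ n ^ 2) -
          (m n : ℝ) * ((1 - Real.cos (γ n * v)) / γ n ^ 2) =
          -((m n : ℝ) / γ n ^ 2 * (Real.cos (γ n * (u + v)) - Real.cos (γ n * v))) := by ring
      have h3 : 0 ≤ (m n : ℝ) / γ n ^ 2 := by positivity
      rw [e, norm_neg, norm_mul, Real.norm_of_nonneg h3, Real.norm_eq_abs, mul_comm]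
      by_cases hn : n ∈ S
      · nlinarith [hu n hn v, (hgS n).1]
      · have h1 := (hgS n).2 hn
        have h4 : |Real.cos (γ n * (u + v)) - Real.cos (γ n * v)| ≤ 2 := by
          rw [abs_le]
          constructor <;> linarith [Real.neg_one_le_cos (γ n * (u + v)), Real.cos_le_one (γ n * (u + v)),
            Real.neg_one_le_cos (γ n * v), Real.cos_le_one (γ n * v)]
        have h5 : 0 ≤ 2 * Real.pi / T * ((m n : ℝ) / γ n ^ 2) := by positivity
        nlinarith
    · rw [(hs.mul_left _).tsum_add (hg.mul_left 2), tsum_mul_left, tsum_mul_left]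
      have : (2 * Real.pi * (∑' n, (m n : ℝ) / γ n ^ 2) + 4 * B) / T =
        2 * Real.pi / T * (∑' n, (m n : ℝ) / γ n ^ 2) + 2 * (2 * B / T) := by ring
      rw [this]
      gcongr

end

end MertensOscillation

namespace MertensOscillation

open Topology MeasureTheory

lemma hasDerivWithinAt_weightedSum {k k' : ℝ → ℝ} (hk : ∀ t, HasDerivAt k (k' t) t) (u : ℝ) :
    HasDerivWithinAt (weightedSum k) (weightedSum k' u) (Set.Ici u) u := by
  have h1 : HasDerivAt (fun v => ∑ n ∈ Finset.range (⌊Real.exp u⌋₊ + 1), weight n * k (v - Real.log n))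
      (weightedSum k' u) u :=
    HasDerivAt.fun_sum fun n _ => (HasDerivAt.comp_sub_const u _ (hk _)).const_mul _
  refine h1.hasDerivWithinAt.congr_of_eventuallyEq ?_ rfl
  have h2 : Real.exp u < ⌊Real.exp u⌋₊ + 1 := Nat.lt_floor_add_one _
  have h3 : ∀ᶠ v in 𝓝[≥] u, Real.exp v < ⌊Real.exp u⌋₊ + 1 :=
    (Real.continuous_exp.continuousWithinAt).eventually_lt_const h2
  filter_upwards [h3, self_mem_nhdsWithin] with v hv huv
  have : ⌊Real.exp v⌋₊ = ⌊Real.exp u⌋₊ := by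
    apply le_antisymm
    · exact Nat.lt_succ_iff.1 ((Nat.floor_lt (Real.exp_pos v).le).2 (by exact_mod_cast hv))
    · exact Nat.floor_mono (Real.exp_le_exp.2 huv)
  rw [weightedSum, this]

lemma continuous_weightedSum {k : ℝ → ℝ} (hk : Continuous k) (h0 : k 0 = 0) : Continuous (weightedSum k) := by
  rw [continuous_iff_continuousAt]
  intro u
  obtain ⟨N, hN⟩ := exists_nat_gt (Real.exp (u + 1))
  have h1 : Continuous fun u => ∑ n ∈ Finset.range N, weight n * k (max (u - Real.log n) 0) := by fun_prop
  refine h1.continuousAt.congr ?_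
  filter_upwards [Iio_mem_nhds (lt_add_one u)] with v hv
  have hNv : ⌊Real.exp v⌋₊ + 1 ≤ N :=
    (Nat.floor_lt (Real.exp_pos v).le).2 ((Real.exp_lt_exp.2 hv).trans hN)
  rw [weightedSum]
  rw [← Finset.sum_subset (Finset.range_mono hNv) (f := fun n => weight n * k (max (v - Real.log n) 0))]
  · refine Finset.sum_congr rfl fun n hn => ?_
    rcases eq_or_ne n 0 with rfl | hn0
    · simp
    · rw [max_eq_left (sub_nonneg.2 ((log_le_iff_mem_range hn0 v).2 hn))]
  · intro n _ hn
    have hn0 : n ≠ 0 := by rintro rfl; simp at hn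
    have := (log_le_iff_mem_range hn0 v).not.2 hn
    rw [max_eq_right (by linarith), h0, mul_zero]

lemma intervalIntegrable_mertensError {a b : ℝ} (ha : 0 ≤ a) (hab : a ≤ b) :
    IntervalIntegrable mertensError volume a b := by
  rw [intervalIntegrable_iff_integrableOn_Ioc_of_le hab]
  have h1 := (hasLaplace_mertensError (s := 1) (by norm_num)).1
  have h2 : IntegrableOn (fun u : ℝ => (mertensError u : ℂ) * Complex.exp (-1 * u)) (Set.Icc a b) :=
    ((integrableOn_Ici_iff_integrableOn_Ioi (by simp)).2 h1).mono_set fun x hx => ha.trans hx.1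
  have h3 := h2.mul_continuousOn (g' := fun u : ℝ => Complex.exp u) (by fun_prop) isCompact_Icc
  have h4 : IntegrableOn (fun u : ℝ => RCLike.re ((mertensError u : ℂ) * Complex.exp (-1 * u) * Complex.exp u))
    (Set.Ioc a b) := (h3.mono_set Set.Ioc_subset_Icc_self).re
  refine h4.congr_fun (fun u _ => ?_) measurableSet_Ioc
  beta_reduce
  rw [mul_assoc, ← Complex.exp_add]
  simp

lemma mertensError_eq (u : ℝ) : mertensError u = weightedSum (fun t => Real.exp (1 / 2 * t)) u -
    (u - Real.eulerMascheroniConstant) * Real.exp (1 / 2 * u) := by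
  rw [mertensError, ← exp_half_mul_sum_eq, show u / 2 = 1 / 2 * u by ring]
  ring

/-- The antiderivative of `mertensError`. -/
noncomputable def mertensPrimitive (u : ℝ) : ℝ :=
  weightedSum (fun t => 2 * (Real.exp (1 / 2 * t) - 1)) u -
    (2 * u - 4 - 2 * Real.eulerMascheroniConstant) * Real.exp (1 / 2 * u)

lemma hasDerivAt_exp_half (c u : ℝ) : HasDerivAt (fun u => Real.exp (c * u)) (c * Real.exp (c * u)) u := by
  have := ((hasDerivAt_id u).const_mul c).exp
  simpa [mul_comm] using this

lemma hasDerivWithinAt_mertensPrimitive (u : ℝ) :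
    HasDerivWithinAt mertensPrimitive (mertensError u) (Set.Ici u) u := by
  have h1 := hasDerivWithinAt_weightedSum (k := fun t => 2 * (Real.exp (1 / 2 * t) - 1))
    (k' := fun t => Real.exp (1 / 2 * t)) (fun t => by
      have := ((hasDerivAt_exp_half (1 / 2) t).sub_const 1).const_mul 2
      convert! this using 1
      ring) u
  have h2 : HasDerivAt (fun u : ℝ => (2 * u - 4 - 2 * Real.eulerMascheroniConstant) * Real.exp (1 / 2 * u))
      ((u - Real.eulerMascheroniConstant) * Real.exp (1 / 2 * u)) u := by
    have := ((((hasDerivAt_id u).const_mul 2).sub_const 4).sub_const (2 * Real.eulerMascheroniConstant)).fun_mul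
      (hasDerivAt_exp_half (1 / 2) u)
    convert! this using 1
    simp only [id]
    ring
  have h3 := h1.sub h2.hasDerivWithinAt
  convert! h3 using 1
  exact mertensError_eq u

lemma continuous_mertensPrimitive : Continuous mertensPrimitive :=
  (continuous_weightedSum (by fun_prop) (by simp)).sub (by fun_prop)

lemma integral_mertensError {a b : ℝ} (ha : 0 ≤ a) (hab : a ≤ b) :
    ∫ u in a..b, mertensError u = mertensPrimitive b - mertensPrimitive a :=
  intervalIntegral.integral_eq_sub_of_hasDeriv_right continuous_mertensPrimitive.continuousOn
    (fun x _ => (hasDerivWithinAt_mertensPrimitive x).mono Set.Ioi_subset_Ici_self)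
    (intervalIntegrable_mertensError ha hab)

/-- The main terms in the explicit formula, up to bounded ones, removed from the smoothed sum. -/
noncomputable def smoothedError (κ u : ℝ) : ℝ :=
  weightedSum (fun t => t) u - (4 * (Real.exp (1 / 2 * u) + Real.exp (-(1 / 2) * u)) - 8 + κ * u)

lemma continuous_smoothedError (κ : ℝ) : Continuous (smoothedError κ) :=
  continuous_weightedSum_id.sub (by fun_prop)

lemma hasDerivWithinAt_smoothedError (κ u : ℝ) : HasDerivWithinAt (smoothedError κ)
    (weightedSum (fun _ => 1) u - (2 * (Real.exp (1 / 2 * u) - Real.exp (-(1 / 2) * u)) + κ)) (Set.Ici u) u := by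
  have h1 := hasDerivWithinAt_weightedSum (k := fun t => t) (k' := fun _ => 1) (fun t => hasDerivAt_id' t) u
  have h2 := ((((hasDerivAt_exp_half (1 / 2) u).add (hasDerivAt_exp_half (-(1 / 2)) u)).const_mul 4).sub_const
    8).add ((hasDerivAt_id u).const_mul κ)
  have h3 := h1.sub h2.hasDerivWithinAt
  convert! h3 using 1
  ring

lemma exists_mertensPrimitive_eq {κ K : ℝ} (hB : ∀ u, 0 ≤ u → |smoothedError κ u| ≤ K) :
    ∃ (c : ℝ) (E : ℝ → ℝ), (∀ u, 0 ≤ u → |E u| ≤ K) ∧ (∀ a b, 0 ≤ a → 0 ≤ b → |E b - E a| ≤ K * |b - a|) ∧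
      ∀ u, 0 ≤ u → mertensPrimitive u =
        smoothedError κ u + 2 * Real.exp (-(1 / 2) * u) - 2 * κ - E u + c * Real.exp (1 / 2 * u) := by
  have hBc := continuous_smoothedError κ
  obtain ⟨B, hBdef⟩ : ∃ B, B = smoothedError κ := ⟨_, rfl⟩
  obtain ⟨g, hg⟩ : ∃ g : ℝ → ℝ, g = fun w => Real.exp (-(1 / 2) * w) * B w := ⟨_, rfl⟩
  have hgc : Continuous g := by rw [hg, hBdef]; fun_prop
  have hgi : IntegrableOn g (Set.Ioi 0) := by
    refine Integrable.mono' ((integrableOn_exp_mul_Ioi (a := -(1 / 2)) (by norm_num) 0).mul_const K)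
      hgc.aestronglyMeasurable ?_
    refine (ae_restrict_iff' measurableSet_Ioi).2 (Eventually.of_forall fun u hu => ?_)
    rw [hg, norm_mul, Real.norm_of_nonneg (Real.exp_pos _).le, Real.norm_eq_abs, hBdef]
    have := hB u (le_of_lt hu)
    gcongr
  obtain ⟨J, hJ⟩ : ∃ J, J = ∫ w in Set.Ioi 0, g w := ⟨_, rfl⟩
  have htail : ∀ u, 0 ≤ u → |J - ∫ w in (0 : ℝ)..u, g w| ≤ 2 * K * Real.exp (-(1 / 2) * u) := by
    intro u hu
    have h1 := intervalIntegral.integral_interval_add_Ioi hgi (hgi.mono_set (Set.Ioi_subset_Ioi hu))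
    have h2 : J - ∫ w in (0 : ℝ)..u, g w = ∫ w in Set.Ioi u, g w := by rw [hJ, ← h1]; ring
    rw [h2, ← Real.norm_eq_abs]
    refine (norm_integral_le_of_norm_le ((integrableOn_exp_mul_Ioi (a := -(1 / 2)) (by norm_num) u).mul_const K)
      ?_).trans (le_of_eq ?_)
    · refine (ae_restrict_iff' measurableSet_Ioi).2 (Eventually.of_forall fun v hv => ?_)
      rw [hg, norm_mul, Real.norm_of_nonneg (Real.exp_pos _).le, Real.norm_eq_abs, hBdef]
      have := hB v (hu.trans (le_of_lt hv))
      gcongr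
    · rw [integral_mul_const, integral_exp_mul_Ioi (by norm_num)]
      ring
  have hP : ∀ u, HasDerivAt (fun u => ∫ w in (0 : ℝ)..u, g w) (g u) u := fun u =>
    intervalIntegral.integral_hasDerivAt_right (hgc.intervalIntegrable _ _)
      (hgc.stronglyMeasurableAtFilter _ _) hgc.continuousAt
  obtain ⟨E, hE⟩ : ∃ E : ℝ → ℝ, E = fun u => 1 / 2 * Real.exp (1 / 2 * u) * (J - ∫ w in (0 : ℝ)..u, g w) :=
    ⟨_, rfl⟩
  have hexp : ∀ u, Real.exp (1 / 2 * u) * Real.exp (-(1 / 2) * u) = 1 := fun u => by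
    rw [← Real.exp_add]; simp
  have hEb : ∀ u, 0 ≤ u → |E u| ≤ K := by
    intro u hu
    rw [hE, abs_mul, abs_of_pos (by positivity)]
    calc _ ≤ 1 / 2 * Real.exp (1 / 2 * u) * (2 * K * Real.exp (-(1 / 2) * u)) := by gcongr; exact htail u hu
      _ = _ := by linear_combination K * hexp u
  have hEd : ∀ u, HasDerivAt E (1 / 2 * E u - 1 / 2 * B u) u := by
    intro u
    have h1 := ((hasDerivAt_exp_half (1 / 2) u).const_mul (1 / 2)).fun_mul ((hP u).const_sub J)
    rw [hE]
    convert! h1 using 1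
    beta_reduce
    rw [hg]
    linear_combination (1 / 2 * B u) * hexp u
  refine ⟨mertensPrimitive 0 - (B 0 + 2 - 2 * κ - E 0), E, hEb, fun a b ha hb => ?_, fun u hu => ?_⟩
  · rw [← Real.norm_eq_abs, ← Real.norm_eq_abs]
    refine Convex.norm_image_sub_le_of_norm_hasDerivWithin_le
      (fun u _ => (hEd u).hasDerivWithinAt) (fun u hu => ?_) (convex_Ici (0 : ℝ)) ha hb
    have h1 := hEb u hu
    have h2 := hB u hu
    rw [← hBdef] at h2
    rw [Real.norm_eq_abs, abs_le]
    rw [abs_le] at h1 h2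
    constructor <;> linarith
  · obtain ⟨Z, hZ⟩ : ∃ Z : ℝ → ℝ, Z = fun u => Real.exp (-(1 / 2) * u) *
      (mertensPrimitive u - (B u + 2 * Real.exp (-(1 / 2) * u) - 2 * κ - E u)) := ⟨_, rfl⟩
    have hEc : Continuous E := continuous_iff_continuousAt.2 fun u => (hEd u).continuousAt
    have hc := constant_of_has_deriv_right_zero (f := Z) (a := 0) (b := u) (by
      have := continuous_mertensPrimitive
      rw [hZ, hBdef]
      exact Continuous.continuousOn (by fun_prop)) (fun v _ => by
      have h1 := (hasDerivWithinAt_mertensPrimitive v).sub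
        (((((hasDerivWithinAt_smoothedError κ v).add
          ((hasDerivAt_exp_half (-(1 / 2)) v).const_mul 2).hasDerivWithinAt).sub_const (2 * κ))).sub
          (hEd v).hasDerivWithinAt)
      have h2 := (hasDerivAt_exp_half (-(1 / 2)) v).hasDerivWithinAt.fun_mul h1 (s := Set.Ici v)
      rw [hZ, hBdef]
      convert! h2 using 1
      simp only [Pi.sub_apply, Pi.add_apply]
      rw [mertensError_eq, hBdef, mertensPrimitive]
      have h3 : weightedSum (fun t => 2 * (Real.exp (1 / 2 * t) - 1)) v =
          2 * weightedSum (fun t => Real.exp (1 / 2 * t)) v - 2 * weightedSum (fun _ => 1) v := by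
        simp only [weightedSum, Finset.mul_sum, ← Finset.sum_sub_distrib]
        exact Finset.sum_congr rfl fun n _ => by ring
      rw [h3]
      ring) u ⟨hu, le_rfl⟩
    rw [hZ] at hc
    simp only [mul_zero, Real.exp_zero, one_mul, mul_one] at hc
    rw [← hBdef]
    rw [← hc]
    linear_combination (-(mertensPrimitive u - (B u + 2 * Real.exp (-(1 / 2) * u) - 2 * κ - E u))) * hexp u

lemma weight_one : weight 1 = 0 := by simp [weight]

lemma weightedSum_id_eq_zero {u : ℝ} (hu : u < Real.log 2) : weightedSum (fun t => t) u = 0 := by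
  refine Finset.sum_eq_zero fun n hn => ?_
  rcases Nat.lt_or_ge n 2 with h | h
  · interval_cases n
    · simp
    · simp [weight_one]
  · have h1 := (log_le_iff_mem_range (by omega) u).2 hn
    have h2 : Real.log 2 ≤ Real.log n := Real.log_le_log (by norm_num) (by exact_mod_cast h)
    linarith

lemma abs_trivSum_sub_le {a b : ℝ} (ha : 1 ≤ a) (hab : a ≤ b) :
    |trivSum b - trivSum a| ≤ (∑' n, 1 / trivZero n ^ 2) * (b - a) := by
  have hs : ∀ u, 0 ≤ u → Summable fun n => (1 - Real.exp (-trivZero n * u)) / trivZero n ^ 2 := fun u hu =>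
    Summable.of_norm_bounded summable_one_div_trivZero_sq fun n => abs_trivSum_term_le n hu
  rw [trivSum, trivSum, ← (hs b (by linarith)).tsum_sub (hs a (by linarith)), ← Real.norm_eq_abs]
  refine tsum_of_norm_bounded (summable_one_div_trivZero_sq.hasSum.mul_right (b - a)) fun n => ?_
  have h0 := trivZero_pos n
  obtain ⟨t, ht⟩ : ∃ t, t = trivZero n := ⟨_, rfl⟩
  rw [← ht] at h0 ⊢
  have h1 : Real.exp (-t * b) ≤ Real.exp (-t * a) := Real.exp_le_exp.2 (by nlinarith)
  have h2 : Real.exp (-t * a) - Real.exp (-t * b) ≤ b - a := by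
    have e : Real.exp (-t * b) = Real.exp (-t * a) * Real.exp (-t * (b - a)) := by
      rw [← Real.exp_add]; ring_nf
    have h3 := Real.add_one_le_exp (-t * (b - a))
    have h4 : t * Real.exp (-t * a) ≤ 1 := by
      have h5 : Real.exp (-t * a) ≤ Real.exp (-t) := Real.exp_le_exp.2 (by nlinarith)
      have h6 := Real.add_one_le_exp t
      have h7 : Real.exp t * Real.exp (-t) = 1 := by rw [← Real.exp_add]; simp
      have h8 := Real.exp_pos (-t)
      nlinarith
    have h5 := Real.exp_pos (-t * a)
    rw [e]
    nlinarith [mul_le_mul_of_nonneg_left h3 h5.le, mul_le_mul_of_nonneg_right h4 (sub_nonneg.2 hab)]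
  rw [Real.norm_eq_abs, ← sub_div, abs_of_nonneg (div_nonneg (by linarith) (by positivity)), one_div_mul_eq_div]
  exact div_le_div_of_nonneg_right (by linarith) (by positivity)

lemma exp_neg_four_ge : (1 : ℝ) / 81 ≤ Real.exp (-4) := by
  have h1 : Real.exp 1 ≤ 3 := Real.exp_one_lt_three.le
  have h2 : Real.exp 4 ≤ 81 := by
    have : Real.exp 4 = Real.exp 1 ^ 4 := by rw [← Real.exp_nat_mul]; norm_num
    rw [this]
    calc _ ≤ (3 : ℝ) ^ 4 := by gcongr
      _ = 81 := by norm_num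
  rw [Real.exp_neg, one_div]
  gcongr

lemma log_div_le_trivSum_sub {T : ℕ} (hT : 1 ≤ T) :
    Real.log T / 162 / T ≤ trivSum (2 / T) - trivSum (1 / T) := by
  have hT0 : (0 : ℝ) < T := by exact_mod_cast hT
  have hs : ∀ u, 0 ≤ u → Summable fun n => (1 - Real.exp (-trivZero n * u)) / trivZero n ^ 2 := fun u hu =>
    Summable.of_norm_bounded summable_one_div_trivZero_sq fun n => abs_trivSum_term_le n hu
  have h1 := hs (2 / T) (by positivity)
  have h2 := hs (1 / T) (by positivity)
  have hterm : ∀ n, Real.exp (-trivZero n * (2 / T)) * (1 / (trivZero n * T)) ≤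
      (1 - Real.exp (-trivZero n * (2 / T))) / trivZero n ^ 2 -
        (1 - Real.exp (-trivZero n * (1 / T))) / trivZero n ^ 2 := by
    intro n
    have h0 := trivZero_pos n
    obtain ⟨t, ht⟩ : ∃ t, t = trivZero n := ⟨_, rfl⟩
    rw [← ht] at h0 ⊢
    have e : Real.exp (-t * (1 / T)) = Real.exp (-t * (2 / T)) * Real.exp (t / T) := by
      rw [← Real.exp_add]; ring_nf
    have h3 := Real.add_one_le_exp (t / T)
    rw [← sub_div, e, le_div_iff₀ (by positivity)]
    have h4 : 1 / (t * T) * t ^ 2 = t / T := by field_simp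
    rw [mul_assoc, h4]
    nlinarith [Real.exp_pos (-t * (2 / T))]
  rw [trivSum, trivSum, ← h1.tsum_sub h2]
  refine le_trans ?_ ((h1.sub h2).sum_le_tsum (Finset.range T) fun n _ => le_trans (by
    have := trivZero_pos n
    positivity) (hterm n))
  have h5 : Real.log T ≤ ∑ n ∈ Finset.range T, ((n : ℝ) + 1)⁻¹ := by
    have h6 := log_add_one_le_harmonic T
    have h7 : Real.log T ≤ Real.log (T + 1) := Real.log_le_log hT0 (by linarith)
    rw [harmonic] at h6
    push_cast at h6
    exact h7.trans h6
  calc Real.log T / 162 / T ≤ (∑ n ∈ Finset.range T, ((n : ℝ) + 1)⁻¹) / 162 / T := by gcongr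
    _ = ∑ n ∈ Finset.range T, ((n : ℝ) + 1)⁻¹ / 162 / T := by simp only [Finset.sum_div]
    _ ≤ _ := Finset.sum_le_sum fun n hn => le_trans ?_ (hterm n)
  have h0 := trivZero_pos n
  have hnT : (n : ℝ) + 1 ≤ T := by exact_mod_cast Finset.mem_range.1 hn
  have h8 : trivZero n ≤ 2 * (n + 1) := by unfold trivZero; linarith
  have h9 : Real.exp (-4) ≤ Real.exp (-trivZero n * (2 / T)) := by
    rw [Real.exp_le_exp, neg_mul, neg_le_neg_iff, mul_div_assoc', div_le_iff₀ hT0]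
    linarith
  calc ((n : ℝ) + 1)⁻¹ / 162 / T = 1 / 81 * (1 / (2 * (n + 1) * T)) := by field_simp; norm_num
    _ ≤ _ := by
      gcongr
      exact exp_neg_four_ge.trans h9

lemma log_sub_le_zeroSum_sub {γ : ℕ → ℝ} {m : ℕ → ℕ} {κ : ℝ}
    (h : ∀ u, 0 < u → smoothedError κ u = trivSum u - zeroSum γ m u) {T : ℕ} (hT : 3 ≤ T) :
    (Real.log T / 162 - |κ|) / T ≤ zeroSum γ m (2 / T) - zeroSum γ m (1 / T) := by
  have hT3 : (3 : ℝ) ≤ T := by exact_mod_cast hT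
  have hT0 : (0 : ℝ) < T := by linarith
  have h1 := log_div_le_trivSum_sub (T := T) (by omega)
  have hlog : 2 / (T : ℝ) < Real.log 2 := by
    have := Real.log_two_gt_d9
    rw [div_lt_iff₀ hT0]
    nlinarith
  have hlog' : 1 / (T : ℝ) < Real.log 2 := lt_trans (by gcongr; norm_num) hlog
  have h2 := h (2 / T) (by positivity)
  have h3 := h (1 / T) (by positivity)
  rw [smoothedError, weightedSum_id_eq_zero hlog] at h2
  rw [smoothedError, weightedSum_id_eq_zero hlog'] at h3
  have h4 : -|κ| / T ≤ κ * (2 / T) - κ * (1 / T) := by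
    have : κ * (2 / T) - κ * (1 / T) = κ / T := by ring
    rw [this]
    gcongr
    exact neg_abs_le κ
  have h5 : Real.exp (1 / 2 * (1 / T)) + Real.exp (-(1 / 2) * (1 / T)) ≤
      Real.exp (1 / 2 * (2 / T)) + Real.exp (-(1 / 2) * (2 / T)) := by
    obtain ⟨p, hp⟩ : ∃ p, p = Real.exp (1 / 2 * (1 / T)) := ⟨_, rfl⟩
    have hp1 : 1 ≤ p := by rw [hp]; exact Real.one_le_exp (by positivity)
    have e1 : Real.exp (1 / 2 * (2 / T)) = p ^ 2 := by rw [hp, ← Real.exp_nat_mul]; congr 1; push_cast; ring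
    have e2 : Real.exp (-(1 / 2) * (1 / T)) = p⁻¹ := by rw [hp, ← Real.exp_neg]; congr 1; ring
    have e3 : Real.exp (-(1 / 2) * (2 / T)) = (p ^ 2)⁻¹ := by rw [← e1, ← Real.exp_neg]; congr 1; ring
    rw [e1, e2, e3, ← hp]
    have : p ^ 2 + (p ^ 2)⁻¹ - (p + p⁻¹) = (p - 1) * (p ^ 3 - 1) / p ^ 2 := by field_simp; ring
    have h6 : 0 ≤ (p - 1) * (p ^ 3 - 1) / p ^ 2 :=
      div_nonneg (mul_nonneg (by linarith) (sub_nonneg.2 (one_le_pow₀ hp1))) (by positivity)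
    linarith
  have h7 : (Real.log T / 162 - |κ|) / T = Real.log T / 162 / T + -|κ| / T := by ring
  rw [h7]
  linarith

lemma zeroSum_neg (γ : ℕ → ℝ) (m : ℕ → ℕ) (u : ℝ) : zeroSum γ m (-u) = zeroSum γ m u := by
  simp [zeroSum]

/-- The integral of `mertensError` over short intervals is governed by `zeroSum`. -/
lemma exists_abs_integral_add_le {γ : ℕ → ℝ} {m : ℕ → ℕ} {κ : ℝ}
    (hm : Summable fun n => (m n : ℝ) / γ n ^ 2)
    (h : ∀ u, 0 < u → smoothedError κ u = trivSum u - zeroSum γ m u)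
    (hint : IntegrableOn (fun u => mertensError u * Real.exp (-(1 / 4) * u)) (Set.Ioi 0)) :
    ∃ K : ℝ, ∀ a b, 1 ≤ a → a ≤ b →
      |(∫ u in a..b, mertensError u) + (zeroSum γ m b - zeroSum γ m a)| ≤ K * (b - a) := by
  obtain ⟨D, hD⟩ : ∃ D, D = ∑' n, 1 / trivZero n ^ 2 := ⟨_, rfl⟩
  obtain ⟨K, hK⟩ : ∃ K, K = D + 2 * ∑' n, (m n : ℝ) / γ n ^ 2 := ⟨_, rfl⟩
  have hD0 : 0 ≤ D := hD ▸ tsum_nonneg fun n => by positivity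
  have hM0 : 0 ≤ ∑' n, (m n : ℝ) / γ n ^ 2 := tsum_nonneg fun n => by positivity
  have hB : ∀ u, 0 ≤ u → |smoothedError κ u| ≤ K := by
    intro u hu
    rcases hu.eq_or_lt with rfl | hu
    · rw [smoothedError, weightedSum_id_eq_zero (Real.log_pos one_lt_two)]
      norm_num
      linarith
    · rw [h u hu, hK]
      refine (abs_sub _ _).trans (add_le_add ?_ (abs_zeroSum_le hm u))
      rw [hD]
      exact abs_trivSum_le hu.le
  have hK0 : 0 ≤ K := (abs_nonneg _).trans (hB 0 le_rfl)
  obtain ⟨c, E, hEb, hEl, hprim⟩ := exists_mertensPrimitive_eq hB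
  have hc : c = 0 := by
    obtain ⟨I, hI⟩ : ∃ I, I = ∫ u in Set.Ioi 0, ‖mertensError u * Real.exp (-(1 / 4) * u)‖ := ⟨_, rfl⟩
    have hI0 : 0 ≤ I := hI ▸ integral_nonneg fun _ => norm_nonneg _
    have h1 : ∀ a : ℝ, 0 ≤ a → |∫ u in a..(a + 1), mertensError u| ≤ Real.exp (1 / 4 * (a + 1)) * I := by
      intro a ha
      rw [intervalIntegral.integral_of_le (by linarith), ← Real.norm_eq_abs]
      have hsub : Set.Ioc a (a + 1) ⊆ Set.Ioi 0 := fun x hx => ha.trans_lt hx.1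
      have h2 : ∫ u in Set.Ioc a (a + 1), ‖mertensError u * Real.exp (-(1 / 4) * u)‖ ≤ I := by
        rw [hI]
        exact setIntegral_mono_set hint.norm (Eventually.of_forall fun _ => norm_nonneg _) hsub.eventuallyLE
      refine (norm_integral_le_of_norm_le ((hint.mono_set hsub).norm.const_mul (Real.exp (1 / 4 * (a + 1)))) ?_).trans ?_
      · refine (ae_restrict_iff' measurableSet_Ioc).2 (Eventually.of_forall fun u hu => ?_)
        rw [norm_mul, Real.norm_of_nonneg (Real.exp_pos _).le, mul_left_comm, ← Real.exp_add]
        refine le_mul_of_one_le_right (norm_nonneg _) (Real.one_le_exp ?_)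
        linarith [hu.2]
      · rw [integral_const_mul]
        gcongr
    by_contra hc0
    have hc1 : 0 < |c| := abs_pos.2 hc0
    have h2 : ∀ a : ℝ, 0 ≤ a → |c| * (Real.exp (1 / 2 * a) / 2) ≤ 4 * K + 4 + Real.exp (1 / 4 * (a + 1)) * I := by
      intro a ha
      have h3 := h1 a ha
      rw [integral_mertensError ha (by linarith), hprim a ha, hprim (a + 1) (by linarith)] at h3
      have b1 := abs_le.1 (hB a ha)
      have b2 := abs_le.1 (hB (a + 1) (by linarith))
      have b3 := abs_le.1 (hEb a ha)
      have b4 := abs_le.1 (hEb (a + 1) (by linarith))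
      have b5 : Real.exp (-(1 / 2) * a) ≤ 1 := Real.exp_le_one_iff.2 (by linarith)
      have b6 : Real.exp (-(1 / 2) * (a + 1)) ≤ 1 := Real.exp_le_one_iff.2 (by linarith)
      have b7 := Real.exp_pos (-(1 / 2) * a)
      have b8 := Real.exp_pos (-(1 / 2) * (a + 1))
      have h4 : |c * (Real.exp (1 / 2 * (a + 1)) - Real.exp (1 / 2 * a))| ≤
          4 * K + 4 + Real.exp (1 / 4 * (a + 1)) * I := by
        rw [abs_le] at h3 ⊢
        constructor <;> linarith
      refine le_trans ?_ h4
      have h5 : Real.exp (1 / 2 * (a + 1)) = Real.exp (1 / 2 * a) * Real.exp (1 / 2) := by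
        rw [← Real.exp_add]; ring_nf
      have h6 := Real.add_one_le_exp (1 / 2 : ℝ)
      have h7 := Real.exp_pos (1 / 2 * a)
      have h8 : Real.exp (1 / 2 * a) / 2 ≤ Real.exp (1 / 2 * (a + 1)) - Real.exp (1 / 2 * a) := by
        rw [h5]; nlinarith
      rw [abs_mul, abs_of_nonneg (le_trans (by positivity) h8)]
      gcongr
    have h3 : ∀ a : ℝ, 0 ≤ a → Real.exp (1 / 4 * a) ≤ 2 * (4 * K + 4 + Real.exp (1 / 4) * I) / |c| := by
      intro a ha
      have h4 := h2 a ha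
      have e1 : Real.exp (1 / 2 * a) = Real.exp (1 / 4 * a) * Real.exp (1 / 4 * a) := by
        rw [← Real.exp_add]; ring_nf
      have e2 : Real.exp (1 / 4 * (a + 1)) = Real.exp (1 / 4 * a) * Real.exp (1 / 4) := by
        rw [← Real.exp_add]; ring_nf
      have e3 : 1 ≤ Real.exp (1 / 4 * a) := Real.one_le_exp (by positivity)
      rw [e1, e2] at h4
      rw [le_div_iff₀ hc1]
      obtain ⟨y, hy⟩ : ∃ y, y = Real.exp (1 / 4 * a) := ⟨_, rfl⟩
      rw [← hy] at h4 e3 ⊢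
      have h5 : y * (y * |c|) ≤ y * (2 * (4 * K + 4 + Real.exp (1 / 4) * I)) := by nlinarith
      exact le_of_mul_le_mul_left h5 (by linarith)
    obtain ⟨M, hM⟩ : ∃ M, M = 2 * (4 * K + 4 + Real.exp (1 / 4) * I) / |c| := ⟨_, rfl⟩
    rw [← hM] at h3
    have h4 := h3 (4 * |M|) (by positivity)
    have h5 := Real.add_one_le_exp (1 / 4 * (4 * |M|))
    have h6 := le_abs_self M
    linarith
  refine ⟨D + K + 2, fun a b ha hab => ?_⟩
  rw [integral_mertensError (by linarith) hab, hprim a (by linarith), hprim b (by linarith), h a (by linarith),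
    h b (by linarith), hc]
  have h1 := abs_trivSum_sub_le ha hab
  rw [← hD] at h1
  have h2 := hEl a b (by linarith) (by linarith)
  rw [abs_of_nonneg (show 0 ≤ b - a by linarith)] at h2
  have h3 : Real.exp (-(1 / 2) * b) ≤ Real.exp (-(1 / 2) * a) := Real.exp_le_exp.2 (by linarith)
  have h4 : Real.exp (-(1 / 2) * a) - Real.exp (-(1 / 2) * b) ≤ b - a := by
    have e : Real.exp (-(1 / 2) * b) = Real.exp (-(1 / 2) * a) * Real.exp (-(1 / 2) * (b - a)) := by
      rw [← Real.exp_add]; ring_nf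
    have h5 := Real.add_one_le_exp (-(1 / 2) * (b - a))
    have h6 : Real.exp (-(1 / 2) * a) ≤ 1 := Real.exp_le_one_iff.2 (by linarith)
    have h7 := Real.exp_pos (-(1 / 2) * a)
    rw [e]
    nlinarith [mul_le_mul_of_nonneg_left h5 h7.le, mul_le_mul_of_nonneg_right h6 (sub_nonneg.2 hab)]
  rw [abs_le] at h1 h2 ⊢
  constructor <;> linarith

/-- If `mertensError` is bounded on one side then it is large on both sides. -/
theorem exists_mertensError_large {ε K : ℝ} (hε : ε * ε = 1)
    (h : ∀ u, 0 < u → ε * mertensError u ≤ K * (1 + u)) :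
    ∃ K' : ℝ, ∀ δ : ℝ, δ = 1 ∨ δ = -1 → ∀ T : ℕ, 3 ≤ T → ∀ Y : ℝ, 2 ≤ Y → ∃ u, Y ≤ u ∧
      Real.log u ≤ Real.log (2 * (Y + 1)) + K' * T ^ 3 * Real.log T ∧
      Real.log T / 162 - K' ≤ δ * mertensError u := by
  obtain ⟨γ, m, B, hγ, hsum, hR⟩ := exists_zeros_of_one_sided_bound hε h
  have hm := summable_div_sq_of_hasSum hγ hR
  obtain ⟨κ, hκ⟩ := exists_explicit_formula hγ hm hsum
  have hs : ∀ u, 0 < u → smoothedError κ u = trivSum u - zeroSum γ m u := fun u hu => by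
    rw [smoothedError, hκ u hu]; ring
  obtain ⟨K₁, hK₁⟩ := exists_abs_integral_add_le hm hs
    ((consequences_of_one_sided_bound hε h).2.2 (1 / 4) (by norm_num))
  obtain ⟨K₂, hK₂⟩ := exists_almost_period_zeroSum hγ hR
  obtain ⟨K', hK'⟩ : ∃ K', K' = |2 * B| + |κ| + |K₁| + 2 * |K₂| + 1 := ⟨_, rfl⟩
  refine ⟨K', fun δ hδ T hT Y hY => ?_⟩
  have hT3 : (3 : ℝ) ≤ T := by exact_mod_cast hT
  have hT0 : (0 : ℝ) < T := by linarith
  obtain ⟨u, hYu, hlog, hu⟩ := hK₂ T (by omega) (Y + 1) (by linarith)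
  have hz := log_sub_le_zeroSum_sub hs hT
  have h2T : 2 / (T : ℝ) ≤ 1 := by rw [div_le_one hT0]; linarith
  have h1T : 1 / (T : ℝ) ≤ 2 / T := by gcongr; norm_num
  have h0T : 0 < 1 / (T : ℝ) := by positivity
  have hlogT : 0 ≤ Real.log T := Real.log_nonneg (by linarith)
  have hin : ∀ v, v ∈ Set.Icc (u - 2 / T) (u + 2 / T) → Y ≤ v ∧
      Real.log v ≤ Real.log (2 * (Y + 1)) + K' * T ^ 3 * Real.log T := by
    intro v hv
    refine ⟨by linarith [hv.1], ?_⟩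
    have h1 : Real.log v ≤ Real.log (2 * u) :=
      Real.log_le_log (by linarith [hv.1]) (by linarith [hv.2])
    rw [Real.log_mul (by norm_num) (by linarith)] at h1 ⊢
    have h2 : 2 * B * T ^ 3 * Real.log T ≤ K' * T ^ 3 * Real.log T := by
      gcongr
      rw [hK']
      linarith [le_abs_self (2 * B), abs_nonneg κ, abs_nonneg K₁, abs_nonneg K₂]
    linarith
  have hfind : ∀ a b, u - 2 / T ≤ a → b ≤ u + 2 / T → b - a = 1 / T →
      (Real.log T / 162 - K' + 1) / T ≤ δ * ∫ v in a..b, mertensError v → ∃ v, Y ≤ v ∧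
      Real.log v ≤ Real.log (2 * (Y + 1)) + K' * T ^ 3 * Real.log T ∧
      Real.log T / 162 - K' ≤ δ * mertensError v := by
    intro a b ha hb hab hI
    by_contra! hcon
    have h1 : ∫ v in a..b, δ * mertensError v ≤ ∫ _ in a..b, (Real.log T / 162 - K') := by
      refine intervalIntegral.integral_mono_on (by linarith)
        ((intervalIntegrable_mertensError (by linarith) (by linarith)).const_mul δ)
        intervalIntegrable_const fun v hv => ?_
      obtain ⟨h2, h3⟩ := hin v ⟨ha.trans hv.1, hv.2.trans hb⟩
      exact (hcon v h2 h3).le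
    rw [intervalIntegral.integral_const_mul, intervalIntegral.integral_const, hab, smul_eq_mul] at h1
    have h2 := hI.trans h1
    rw [one_div_mul_eq_div, div_le_div_iff_of_pos_right hT0] at h2
    linarith
  have e1 := abs_le.1 (hu (2 / T))
  have e2 := abs_le.1 (hu (1 / T))
  have e3 := abs_le.1 (hu (-(2 / T)))
  have e4 := abs_le.1 (hu (-(1 / T)))
  rw [zeroSum_neg] at e3 e4
  have hK₂' : K₂ / T ≤ |K₂| / T := by gcongr; exact le_abs_self _
  have hK₁' : K₁ * (1 / T) ≤ |K₁| / T := by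
    rw [mul_one_div]
    gcongr
    exact le_abs_self _
  have hval : (Real.log T / 162 - K' + 1) / T + |2 * B| / T = (Real.log T / 162 - |κ|) / T - |K₁| / T - 2 * (|K₂| / T) := by
    rw [hK']; ring
  have hB0 : 0 ≤ |2 * B| / T := by positivity
  rcases hδ with rfl | rfl
  · have h1 := hK₁ (u + -(2 / T)) (u + -(1 / T)) (by linarith) (by linarith)
    have h2 : u + -(1 / (T : ℝ)) - (u + -(2 / T)) = 1 / T := by ring
    refine hfind (u + -(2 / T)) (u + -(1 / T)) (by linarith) (by linarith) h2 ?_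
    rw [h2] at h1
    have h3 := abs_le.1 h1
    linarith
  · have h1 := hK₁ (u + 1 / T) (u + 2 / T) (by linarith) (by linarith)
    have h2 : u + 2 / (T : ℝ) - (u + 1 / T) = 1 / T := by ring
    refine hfind (u + 1 / T) (u + 2 / T) (by linarith) (by linarith) h2 ?_
    rw [h2] at h1
    have h3 := abs_le.1 h1
    linarith

lemma sum_vonMangoldt_div_eq (N : ℕ) :
    ∑ n ∈ Finset.range (N + 1), ArithmeticFunction.vonMangoldt n / n =
      ∑ p ∈ (Finset.range (N + 1)).filter Nat.Prime,
        ∑ k ∈ Finset.Icc 1 (Nat.log p N), Real.log p / (p : ℝ) ^ k := by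
  rw [Finset.sum_sigma']
  symm
  refine Finset.sum_bij_ne_zero (fun a _ _ => a.1 ^ a.2) ?_ ?_ ?_ ?_
  · rintro ⟨p, k⟩ h _
    simp only [Finset.mem_sigma, Finset.mem_filter, Finset.mem_range, Finset.mem_Icc] at h ⊢
    have hN : N ≠ 0 := by have := h.1.2.pos; omega
    exact Nat.lt_succ_of_le (Nat.pow_le_of_le_log hN h.2.2)
  · rintro ⟨p, k⟩ h _ ⟨q, l⟩ h' _ hpq
    simp only [Finset.mem_sigma, Finset.mem_filter, Finset.mem_range, Finset.mem_Icc] at h h'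
    obtain ⟨h1, h2⟩ := h.1.2.pow_inj' h'.1.2 (show k ≠ 0 by omega) (show l ≠ 0 by omega) hpq
    subst h1 h2
    rfl
  · intro n hn hne
    have hpp : IsPrimePow n := by
      rw [← ArithmeticFunction.vonMangoldt_ne_zero_iff]
      rintro h0
      simp [h0] at hne
    obtain ⟨p, k, hp, hk, rfl⟩ := (isPrimePow_nat_iff n).1 hpp
    have hle : p ^ k ≤ N := Nat.lt_succ_iff.1 (Finset.mem_range.1 hn)
    refine ⟨⟨p, k⟩, ?_, ?_, rfl⟩
    · simp only [Finset.mem_sigma, Finset.mem_filter, Finset.mem_range, Finset.mem_Icc]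
      refine ⟨⟨Nat.lt_succ_of_le ((Nat.le_self_pow hk.ne' p).trans hle), hp⟩, hk, ?_⟩
      exact Nat.le_log_of_pow_le hp.one_lt hle
    · rw [ArithmeticFunction.vonMangoldt_apply_pow hk.ne', ArithmeticFunction.vonMangoldt_apply_prime hp] at hne
      exact_mod_cast hne
  · rintro ⟨p, k⟩ h _
    simp only [Finset.mem_sigma, Finset.mem_filter, Finset.mem_range, Finset.mem_Icc] at h
    rw [ArithmeticFunction.vonMangoldt_apply_pow (show k ≠ 0 by omega),
      ArithmeticFunction.vonMangoldt_apply_prime h.1.2]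
    push_cast
    rfl

lemma sum_Icc_inv_pow {p : ℝ} (hp : 1 < p) (K : ℕ) :
    ∑ k ∈ Finset.Icc 1 K, 1 / p ^ k = 1 / (p - 1) - 1 / ((p - 1) * p ^ K) := by
  have h1 : p - 1 ≠ 0 := by linarith
  have h0 : p ≠ 0 := by linarith
  induction K with
  | zero => simp
  | succ K ih =>
    rw [Finset.sum_Icc_succ_top (by omega), ih]
    field_simp
    ring

lemma sum_log_div_sq_le (M N : ℕ) (hM : 0 < M) (hMN : M ≤ N) :
    ∑ p ∈ (Finset.Ioc M N).filter Nat.Prime, Real.log p / (p : ℝ) ^ 2 ≤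
      Chebyshev.theta N / (N : ℝ) ^ 2 + 2 * Real.log 4 * (1 / M - 1 / N) := by
  induction N, hMN using Nat.le_induction with
  | base => simpa using div_nonneg (Chebyshev.theta_nonneg _) (by positivity)
  | succ N hMN ih =>
    have hθ : Chebyshev.theta (N + 1 : ℕ) = Chebyshev.theta N + if (N + 1).Prime then Real.log (N + 1 : ℕ) else 0 := by
      rw [Chebyshev.theta_eq_sum_Icc, Chebyshev.theta_eq_sum_Icc, Nat.floor_natCast, Nat.floor_natCast,
        Finset.sum_filter, Finset.sum_filter, Finset.sum_Icc_succ_top (by omega)]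
    have hs : ∑ p ∈ (Finset.Ioc M (N + 1)).filter Nat.Prime, Real.log p / (p : ℝ) ^ 2 =
        ∑ p ∈ (Finset.Ioc M N).filter Nat.Prime, Real.log p / (p : ℝ) ^ 2 +
          (Chebyshev.theta (N + 1 : ℕ) - Chebyshev.theta N) / ((N + 1 : ℕ) : ℝ) ^ 2 := by
      rw [hθ, Finset.sum_filter, Finset.sum_filter, Finset.sum_Ioc_succ_top hMN]
      split_ifs <;> simp
    rw [hs]
    have hN : (0 : ℝ) < N := by exact_mod_cast hM.trans_le hMN
    have hθN := Chebyshev.theta_le_log4_mul_x hN.le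
    have h4 : 0 ≤ Real.log 4 := Real.log_nonneg (by norm_num)
    have hkey : Chebyshev.theta N * (1 / (N : ℝ) ^ 2 - 1 / ((N + 1 : ℕ) : ℝ) ^ 2) ≤
        2 * Real.log 4 * (1 / N - 1 / ((N + 1 : ℕ) : ℝ)) := by
      push_cast
      have e1 : 1 / (N : ℝ) ^ 2 - 1 / ((N : ℝ) + 1) ^ 2 = (2 * N + 1) / (N ^ 2 * (N + 1) ^ 2) := by
        field_simp; ring
      have e2 : 1 / (N : ℝ) - 1 / ((N : ℝ) + 1) = 1 / (N * (N + 1)) := by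
        field_simp; ring
      rw [e1, e2]
      have h5 : Real.log 4 * N * ((2 * N + 1) / (N ^ 2 * (N + 1) ^ 2)) ≤ 2 * Real.log 4 * (1 / (N * (N + 1))) := by
        have : 2 * Real.log 4 * (1 / (N * (N + 1))) - Real.log 4 * N * ((2 * N + 1) / (N ^ 2 * (N + 1) ^ 2)) =
            Real.log 4 * (1 / (N * (N + 1) ^ 2)) := by
          field_simp; ring
        have h6 : 0 ≤ Real.log 4 * (1 / (N * ((N : ℝ) + 1) ^ 2)) := by positivity
        linarith
      exact (mul_le_mul_of_nonneg_right hθN (by positivity)).trans h5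
    have e : (Chebyshev.theta (N + 1 : ℕ) - Chebyshev.theta N) / ((N + 1 : ℕ) : ℝ) ^ 2 =
      Chebyshev.theta (N + 1 : ℕ) / ((N + 1 : ℕ) : ℝ) ^ 2 - Chebyshev.theta N / (N : ℝ) ^ 2 +
        Chebyshev.theta N * (1 / (N : ℝ) ^ 2 - 1 / ((N + 1 : ℕ) : ℝ) ^ 2) := by ring
    rw [e]
    linarith

/-- Passing from prime powers up to `N` to all powers of the primes up to `N` costs `O(N ^ (-1/2))`. -/
lemma abs_sum_log_div_sub_le {N : ℕ} (hN : 1 ≤ N) :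
    |∑ p ∈ (Finset.range (N + 1)).filter Nat.Prime, Real.log p / ((p : ℝ) - 1) -
      ∑ n ∈ Finset.range (N + 1), ArithmeticFunction.vonMangoldt n / n| ≤
      16 * Real.log 4 / Real.sqrt N := by
  have hN0 : (0 : ℝ) < N := by exact_mod_cast hN
  have hterm : ∀ p ∈ (Finset.range (N + 1)).filter Nat.Prime, Real.log p / ((p : ℝ) - 1) -
      ∑ k ∈ Finset.Icc 1 (Nat.log p N), Real.log p / (p : ℝ) ^ k =
      Real.log p / ((p - 1) * (p : ℝ) ^ (Nat.log p N)) := by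
    intro p hp
    have hp1 : (1 : ℝ) < p := by exact_mod_cast (Finset.mem_filter.1 hp).2.one_lt
    have h1 := sum_Icc_inv_pow hp1 (Nat.log p N)
    have h2 : ∑ k ∈ Finset.Icc 1 (Nat.log p N), Real.log p / (p : ℝ) ^ k =
        Real.log p * ∑ k ∈ Finset.Icc 1 (Nat.log p N), 1 / (p : ℝ) ^ k := by
      rw [Finset.mul_sum]
      exact Finset.sum_congr rfl fun _ _ => by ring
    rw [h2, h1]
    ring
  rw [sum_vonMangoldt_div_eq, ← Finset.sum_sub_distrib, Finset.sum_congr rfl hterm, abs_of_nonneg]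
  swap
  · refine Finset.sum_nonneg fun p hp => ?_
    have hp1 : (1 : ℝ) < p := by exact_mod_cast (Finset.mem_filter.1 hp).2.one_lt
    have := Real.log_pos hp1
    have : 0 < (p : ℝ) - 1 := by linarith
    positivity
  obtain ⟨M, hM⟩ : ∃ M, M = Nat.sqrt N := ⟨_, rfl⟩
  have hM1 : 1 ≤ M := hM ▸ Nat.sqrt_pos.2 hN
  have hM0 : (0 : ℝ) < M := by exact_mod_cast hM1
  have hMN : M ≤ N := hM ▸ Nat.sqrt_le_self N
  have hMsq : (M : ℝ) ≤ Real.sqrt N := hM ▸ Real.nat_sqrt_le_real_sqrt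
  have hMsq' : Real.sqrt N ≤ M + 1 := hM ▸ Real.real_sqrt_le_nat_sqrt_succ
  have hs0 : 0 < Real.sqrt N := Real.sqrt_pos.2 hN0
  have h4 : 0 ≤ Real.log 4 := Real.log_nonneg (by norm_num)
  have hsplit : (Finset.range (N + 1)).filter Nat.Prime =
      (Finset.Icc 0 M).filter Nat.Prime ∪ (Finset.Ioc M N).filter Nat.Prime := by
    ext p
    simp only [Finset.mem_union, Finset.mem_filter, Finset.mem_range, Finset.mem_Icc, Finset.mem_Ioc]
    constructor
    · rintro ⟨h1, h2⟩
      rcases le_or_gt p M with h | h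
      · exact Or.inl ⟨⟨by omega, h⟩, h2⟩
      · exact Or.inr ⟨⟨h, by omega⟩, h2⟩
    · rintro (⟨h1, h2⟩ | ⟨h1, h2⟩) <;> exact ⟨by omega, h2⟩
  rw [hsplit, Finset.sum_union]
  swap
  · refine Finset.disjoint_left.2 fun p h1 h2 => ?_
    simp only [Finset.mem_filter, Finset.mem_Icc, Finset.mem_Ioc] at h1 h2
    omega
  have hsmall : ∑ p ∈ (Finset.Icc 0 M).filter Nat.Prime, Real.log p / ((p - 1) * (p : ℝ) ^ (Nat.log p N)) ≤
      2 * Real.log 4 / Real.sqrt N := by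
    have h1 : ∀ p ∈ (Finset.Icc 0 M).filter Nat.Prime,
        Real.log p / ((p - 1) * (p : ℝ) ^ (Nat.log p N)) ≤ 2 / N * Real.log p := by
      intro p hp
      have hpp := (Finset.mem_filter.1 hp).2
      have hp2 : (2 : ℝ) ≤ p := by exact_mod_cast hpp.two_le
      have h2 : (N : ℝ) ≤ p * (p : ℝ) ^ (Nat.log p N) := by
        have := Nat.lt_pow_succ_log_self hpp.one_lt N
        rw [pow_succ'] at this
        exact_mod_cast this.le
      have hl := Real.log_nonneg (show (1 : ℝ) ≤ p by linarith)
      have hpk : 0 < (p : ℝ) ^ (Nat.log p N) := by positivity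
      have h3 : (N : ℝ) / 2 ≤ (p - 1) * (p : ℝ) ^ (Nat.log p N) := by nlinarith
      calc _ ≤ Real.log p / (N / 2) := by gcongr
        _ = _ := by field_simp
    refine (Finset.sum_le_sum h1).trans ?_
    rw [← Finset.mul_sum]
    have h2 : ∑ p ∈ (Finset.Icc 0 M).filter Nat.Prime, Real.log p = Chebyshev.theta M := by
      rw [Chebyshev.theta_eq_sum_Icc, Nat.floor_natCast]
    rw [h2]
    have h3 := Chebyshev.theta_le_log4_mul_x hM0.le
    calc 2 / N * Chebyshev.theta M ≤ 2 / N * (Real.log 4 * Real.sqrt N) := by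
          gcongr
          exact h3.trans (by gcongr)
      _ = _ := by
        nth_rewrite 1 [← Real.sq_sqrt hN0.le]
        field_simp
  have hlarge : ∑ p ∈ (Finset.Ioc M N).filter Nat.Prime, Real.log p / ((p - 1) * (p : ℝ) ^ (Nat.log p N)) ≤
      12 * Real.log 4 / Real.sqrt N := by
    have h1 : ∀ p ∈ (Finset.Ioc M N).filter Nat.Prime,
        Real.log p / ((p - 1) * (p : ℝ) ^ (Nat.log p N)) ≤ 2 * (Real.log p / (p : ℝ) ^ 2) := by
      intro p hp
      have hpp := (Finset.mem_filter.1 hp).2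
      have hpN := (Finset.mem_Ioc.1 (Finset.mem_filter.1 hp).1).2
      have hp2 : (2 : ℝ) ≤ p := by exact_mod_cast hpp.two_le
      have h2 : (p : ℝ) ≤ (p : ℝ) ^ (Nat.log p N) :=
        le_self_pow₀ (by linarith) (Nat.log_pos hpp.one_lt hpN).ne'
      have hl := Real.log_nonneg (show (1 : ℝ) ≤ p by linarith)
      have h3 : (p : ℝ) ^ 2 / 2 ≤ (p - 1) * (p : ℝ) ^ (Nat.log p N) := by nlinarith
      calc _ ≤ Real.log p / ((p : ℝ) ^ 2 / 2) := by gcongr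
        _ = _ := by field_simp
    refine (Finset.sum_le_sum h1).trans ?_
    rw [← Finset.mul_sum]
    have h2 := sum_log_div_sq_le M N hM1 hMN
    have h3 := Chebyshev.theta_le_log4_mul_x hN0.le
    have h5 : Chebyshev.theta N / (N : ℝ) ^ 2 ≤ Real.log 4 / N := by
      rw [div_le_div_iff₀ (by positivity) hN0]
      nlinarith
    have h6 : 1 / (M : ℝ) ≤ 2 / Real.sqrt N := by
      rw [div_le_div_iff₀ hM0 hs0]
      have : (1 : ℝ) ≤ M := by exact_mod_cast hM1
      linarith
    have h7 : 0 ≤ Real.log 4 / N := by positivity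
    have h8 : 12 * Real.log 4 / Real.sqrt N = 6 * (Real.log 4 * (2 / Real.sqrt N)) := by ring
    have h9 := mul_le_mul_of_nonneg_left h6 h4
    have h10 : 2 * Real.log 4 * (1 / M - 1 / N) = 2 * (Real.log 4 * (1 / M)) - 2 * (Real.log 4 / N) := by ring
    rw [h8]
    have h11 : 0 ≤ Real.log 4 * (1 / (M : ℝ)) := by positivity
    linarith
  have h5 : 2 * Real.log 4 / Real.sqrt N + 12 * Real.log 4 / Real.sqrt N = 14 * Real.log 4 / Real.sqrt N := by ring
  have h6 : 14 * Real.log 4 / Real.sqrt N ≤ 16 * Real.log 4 / Real.sqrt N := by gcongr; norm_num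
  linarith

/-- `A` in terms of `mertensError`. -/
lemma abs_A_sub_log_sub_le {u : ℝ} (hu : 0 ≤ u) :
    |Real.sqrt (Real.exp u) * (A (Real.exp u) - Real.log (Real.exp u)) - mertensError u| ≤ 100 := by
  have h1 : (1 : ℝ) ≤ Real.exp u := Real.one_le_exp hu
  obtain ⟨N, hN⟩ : ∃ N, N = ⌊Real.exp u⌋₊ := ⟨_, rfl⟩
  have hN1 : 1 ≤ N := hN ▸ Nat.one_le_floor_iff _ |>.2 h1
  have h2 := abs_sum_log_div_sub_le hN1
  have hN0 : (1 : ℝ) ≤ N := by exact_mod_cast hN1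
  have hlt : Real.exp u < N + 1 := hN ▸ Nat.lt_floor_add_one _
  have hs : Real.sqrt (Real.exp u) ≤ 2 * Real.sqrt N := by
    rw [Real.sqrt_le_left (by positivity), mul_pow, Real.sq_sqrt (by linarith)]
    linarith
  have he : Real.exp (u / 2) = Real.sqrt (Real.exp u) := Real.exp_half u
  have hsN : 0 < Real.sqrt N := Real.sqrt_pos.2 (by linarith)
  have h4 : Real.log 4 ≤ 3 := by linarith [Real.log_le_sub_one_of_pos (show (0 : ℝ) < 4 by norm_num)]
  have h40 : 0 ≤ Real.log 4 := Real.log_nonneg (by norm_num)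
  rw [A, mertensError, he, ← hN, Real.log_exp]
  have e : ∀ s a b : ℝ, s * (Real.eulerMascheroniConstant + a - u) - s * (b - u + Real.eulerMascheroniConstant) =
      s * (a - b) := fun _ _ _ => by ring
  rw [e, abs_mul, abs_of_nonneg (Real.sqrt_nonneg _)]
  calc _ ≤ 2 * Real.sqrt N * (16 * Real.log 4 / Real.sqrt N) := by gcongr
    _ = 32 * Real.log 4 := by field_simp; ring
    _ ≤ 100 := by linarith

lemma abs_mertensError_le {u U : ℝ} (hu : 0 < u) (huU : u ≤ U) :
    |mertensError u| ≤ Real.exp (U / 2) *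
      (∑ n ∈ Finset.range (⌊Real.exp U⌋₊ + 1), ArithmeticFunction.vonMangoldt n / n + U + 1) := by
  rw [mertensError, abs_mul, abs_of_pos (Real.exp_pos _)]
  have h0 : ∀ n : ℕ, 0 ≤ ArithmeticFunction.vonMangoldt n / (n : ℝ) := fun n =>
    div_nonneg ArithmeticFunction.vonMangoldt_nonneg (Nat.cast_nonneg n)
  have h1 : ∑ n ∈ Finset.range (⌊Real.exp u⌋₊ + 1), ArithmeticFunction.vonMangoldt n / (n : ℝ) ≤
      ∑ n ∈ Finset.range (⌊Real.exp U⌋₊ + 1), ArithmeticFunction.vonMangoldt n / (n : ℝ) := by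
    refine Finset.sum_le_sum_of_subset_of_nonneg ?_ fun n _ _ => h0 n
    gcongr
  have h2 : 0 ≤ ∑ n ∈ Finset.range (⌊Real.exp u⌋₊ + 1), ArithmeticFunction.vonMangoldt n / (n : ℝ) :=
    Finset.sum_nonneg fun n _ => h0 n
  have h3 := Real.one_half_lt_eulerMascheroniConstant
  have h4 := Real.eulerMascheroniConstant_lt_two_thirds
  gcongr
  rw [abs_le]
  constructor <;> linarith

lemma exists_lt_mul_A_sub_log {ε : ℝ} (hε : ε = 1 ∨ ε = -1) (X : ℝ) :
    ∃ x, X ≤ x ∧ 1 / 10000 * Real.log (Real.log (Real.log x)) / Real.sqrt x < ε * (A x - Real.log x) := by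
  by_contra! hcon
  have hεε : ε * ε = 1 := by rcases hε with rfl | rfl <;> norm_num
  have hεa : |ε| = 1 := by rcases hε with rfl | rfl <;> norm_num
  obtain ⟨U, hU⟩ : ∃ U, U = max X 3 := ⟨_, rfl⟩
  have hUX : X ≤ U := hU ▸ le_max_left _ _
  have hU3 : 3 ≤ U := hU ▸ le_max_right _ _
  have hbig : ∀ u, U ≤ u → ε * mertensError u ≤ 1 / 10000 * Real.log (Real.log u) + 100 := by
    intro u hu
    have h1 := hcon (Real.exp u) (by linarith [Real.add_one_le_exp u])
    have hs : 0 < Real.sqrt (Real.exp u) := Real.sqrt_pos.2 (Real.exp_pos u)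
    have h2 := abs_A_sub_log_sub_le (show 0 ≤ u by linarith)
    rw [le_div_iff₀ hs] at h1
    nth_rewrite 2 [Real.log_exp] at h1
    obtain ⟨z, hz⟩ : ∃ z, z = Real.sqrt (Real.exp u) * (A (Real.exp u) - Real.log (Real.exp u)) := ⟨_, rfl⟩
    rw [← hz] at h2
    have h3 : ε * (A (Real.exp u) - Real.log (Real.exp u)) * Real.sqrt (Real.exp u) = ε * z := by
      rw [hz]; ring
    rw [h3] at h1
    have h4 : ε * (mertensError u - z) ≤ 100 := by
      refine (le_abs_self _).trans ?_
      rw [abs_mul, hεa, one_mul, abs_sub_comm]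
      exact h2
    linarith
  obtain ⟨C, hC⟩ : ∃ C, C = Real.exp (U / 2) *
      (∑ n ∈ Finset.range (⌊Real.exp U⌋₊ + 1), ArithmeticFunction.vonMangoldt n / n + U + 1) := ⟨_, rfl⟩
  have hC0 : 0 ≤ C := hC ▸ (abs_nonneg _).trans (abs_mertensError_le (by linarith) le_rfl)
  have hall : ∀ u, 0 < u → ε * mertensError u ≤ (C + 100) * (1 + u) := by
    intro u hu
    rcases le_total u U with h | h
    · have h1 : ε * mertensError u ≤ C := by
        refine (le_abs_self _).trans ?_
        rw [abs_mul, hεa, one_mul, hC]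
        exact abs_mertensError_le hu h
      nlinarith
    · have h1 := Real.log_le_self hu.le
      have h2 := Real.log_le_self (Real.log_nonneg (show 1 ≤ u by linarith))
      nlinarith [hbig u h]
  obtain ⟨K, hK⟩ := exists_mertensError_large hεε hall
  obtain ⟨B, hB⟩ : ∃ B, B = |Real.log (2 * (U + 1))| + |K| + 1 := ⟨_, rfl⟩
  have hB0 : 0 < B := by rw [hB]; positivity
  obtain ⟨T, hT⟩ : ∃ T : ℕ, T = ⌈Real.exp (1000 * (|K| + |Real.log B| + 101))⌉₊ + 3 := ⟨_, rfl⟩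
  have hT3 : (3 : ℝ) ≤ T := by rw [hT]; push_cast; linarith [Nat.cast_nonneg (α := ℝ) ⌈Real.exp (1000 * (|K| + |Real.log B| + 101))⌉₊]
  have hTl : 1000 * (|K| + |Real.log B| + 101) ≤ Real.log T := by
    rw [Real.le_log_iff_exp_le (by linarith), hT]
    push_cast
    linarith [Nat.le_ceil (Real.exp (1000 * (|K| + |Real.log B| + 101)))]
  obtain ⟨u, hUu, hlog, hu⟩ := hK ε hε T (by omega) U (by linarith)
  have hlu : 0 < Real.log u := Real.log_pos (by linarith)
  have h1 : Real.log u ≤ B * (T : ℝ) ^ 4 := by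
    have hTT : Real.log T ≤ T := Real.log_le_self (by linarith)
    have hl0 : 0 ≤ Real.log T := Real.log_nonneg (by linarith)
    have hT4 : 1 ≤ (T : ℝ) ^ 4 := one_le_pow₀ (by linarith)
    have a1 : K * (T : ℝ) ^ 3 * Real.log T ≤ |K| * (T : ℝ) ^ 3 * T := by
      gcongr
      exact le_abs_self K
    have a2 : |K| * (T : ℝ) ^ 3 * T = |K| * (T : ℝ) ^ 4 := by ring
    have a3 := le_mul_of_one_le_right (abs_nonneg (Real.log (2 * (U + 1)))) hT4
    have a4 := le_abs_self (Real.log (2 * (U + 1)))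
    rw [hB]
    linarith
  have h2 : Real.log (Real.log u) ≤ Real.log B + 4 * Real.log T := by
    refine (Real.log_le_log hlu h1).trans ?_
    rw [Real.log_mul hB0.ne' (by positivity), Real.log_pow]
    norm_num
  have h3 := hbig u hUu
  have h4 := le_abs_self K
  have h5 := le_abs_self (Real.log B)
  have h6 := abs_nonneg K
  have h7 := abs_nonneg (Real.log B)
  linarith

end MertensOscillation

/-- `A(x) - log x = Ω_±(x^{-1/2} log log log x)`. -/
theorem A_sub_log_omega_pm :
    ∃ c : ℝ, 0 < c ∧
      (∀ X : ℝ, ∃ x : ℝ, X ≤ x ∧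
        c * Real.log (Real.log (Real.log x)) / Real.sqrt x < A x - Real.log x) ∧
      (∀ X : ℝ, ∃ x : ℝ, X ≤ x ∧
        A x - Real.log x < -(c * Real.log (Real.log (Real.log x)) / Real.sqrt x)) := by
  refine ⟨1 / 10000, by norm_num, fun X => ?_, fun X => ?_⟩
  · obtain ⟨x, hx, h⟩ := MertensOscillation.exists_lt_mul_A_sub_log (Or.inl rfl) X
    exact ⟨x, hx, by linarith⟩
  · obtain ⟨x, hx, h⟩ := MertensOscillation.exists_lt_mul_A_sub_log (Or.inr rfl) X
    exact ⟨x, hx, by linarith⟩
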